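/- arXiv:math/0502222 — 10 statements merged into one kernel-verified Lean document; each statement's English description precedes it below -/
import Mathlib

section
/- Let L be a field complete with respect to a nonarchimedean absolute value |·|, q ∈ L with 0 < |q| < 1, and let θ be the theta function with period q. Then for every u ∈ Lˣ one has θ(qu) = −u⁻¹·θ(u). -/
/-- The `p`-adic theta function `θ(u) = θ(u,q) = (1-u)·∏_{n=1}^∞ (1-qⁿu)(1-qⁿu⁻¹)`,
the infinite product being interpreted as a `tprod`. -/
noncomputable def tateTheta {L : Type*} [NormedField L] (q u : L) : L :=
  (1 - u) * ∏' n : ℕ, (1 - q ^ (n + 1) * u) * (1 - q ^ (n + 1) * u⁻¹)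

theorem tateTheta_aux_mult {L : Type*} [NormedField L] [CompleteSpace L]
    (q : L) (hq1 : ‖q‖ < 1) (c : L) : Multipliable fun n : ℕ => 1 - q ^ (n + 1) * c := by
  have h : Summable fun n : ℕ => ‖-(q ^ (n + 1) * c)‖ := by
    have h1 := (summable_geometric_of_lt_one (norm_nonneg q) hq1).mul_right (‖q‖ * ‖c‖)
    refine h1.congr fun n => ?_
    rw [norm_neg, norm_mul, norm_pow]
    ring
  simpa [sub_eq_add_neg] using multipliable_one_add_of_summable h

theorem tateTheta_aux_shift {L : Type*} [NormedField L] [CompleteSpace L]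
    (q : L) (hq1 : ‖q‖ < 1) (c : L) :
    ∏' n : ℕ, (1 - q ^ (n + 1) * c) = (1 - q * c) * ∏' n : ℕ, (1 - q ^ (n + 1) * (q * c)) := by
  have e : (fun n : ℕ => 1 - q ^ (n + 1) * (q * c)) = fun n : ℕ => 1 - q ^ (n + 1 + 1) * c := by
    funext n
    ring
  have h := tateTheta_aux_mult q hq1 (q * c)
  rw [e] at h ⊢
  rw [tprod_eq_zero_mul' (f := fun n : ℕ => 1 - q ^ (n + 1) * c) h]
  simp

/-- **Functional equation of the theta function:** `θ(qu) = -u⁻¹·θ(u)`. -/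
theorem tateTheta_q_mul {L : Type*} [NormedField L] [CompleteSpace L]
    [IsUltrametricDist L] (q : L) (hq0 : 0 < ‖q‖) (hq1 : ‖q‖ < 1) (u : Lˣ) :
    tateTheta q (q * (u : L)) = -((u : L))⁻¹ * tateTheta q (u : L) := by
  have hq : q ≠ 0 := norm_pos_iff.mp hq0
  have hu : (u : L) ≠ 0 := u.ne_zero
  have m := tateTheta_aux_mult q hq1
  have s1 := tateTheta_aux_shift q hq1 (u : L)
  have s2 := tateTheta_aux_shift q hq1 (q * (u : L))⁻¹
  have e : q * (q * (u : L))⁻¹ = (u : L)⁻¹ := by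
    field_simp
  rw [e] at s2
  unfold tateTheta
  rw [(m _).tprod_mul (m _), (m _).tprod_mul (m _), s2, s1]
  have e2 : 1 - (u : L)⁻¹ = -(u : L)⁻¹ * (1 - u) := by
    field_simp
    ring
  rw [e2]
  ring
end

section
/- Let L be a field complete with respect to a nonarchimedean absolute value |·|, q ∈ L with 0 < |q| < 1, and let θ be the theta function with period q. Let α₁,…,α_r and β₁,…,β_r be elements of Lˣ with ∏_{i=1}^r α_i = ∏_{i=1}^r β_i. Then for every u ∈ Lˣ such that θ(β_i u) ≠ 0 and θ(β_i q u) ≠ 0 for all i, the function f(u) = ∏_{i=1}^r θ(α_i u)/θ(β_i u) is q-periodic: f(qu) = f(u). -/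
lemma tateAux_mult {L : Type*} [NormedField L] [CompleteSpace L] (q v : L) (hq1 : ‖q‖ < 1) :
    Multipliable fun n : ℕ => 1 - q ^ n * v := by
  have := multipliable_one_add_of_summable (R := L) (f := fun n : ℕ => -(q ^ n * v)) (by
    simp only [norm_neg, norm_mul, norm_pow]
    exact (summable_geometric_of_lt_one (norm_nonneg _) hq1).mul_right _)
  simpa [sub_eq_add_neg] using this

lemma tateAux_peel {L : Type*} [NormedField L] [CompleteSpace L] (q v : L) (hq1 : ‖q‖ < 1) :
    ∏' n : ℕ, (1 - q ^ n * v) = (1 - v) * ∏' n : ℕ, (1 - q ^ n * (q * v)) := by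
  have h : (fun n : ℕ => 1 - q ^ (n + 1) * v) = fun n : ℕ => 1 - q ^ n * (q * v) := by
    funext n; ring
  rw [tprod_eq_zero_mul' (f := fun n : ℕ => 1 - q ^ n * v)
    (by rw [h]; exact tateAux_mult q _ hq1), h]
  simp

lemma tateAux_theta {L : Type*} [NormedField L] [CompleteSpace L] (q v : L) (hq1 : ‖q‖ < 1) :
    tateTheta q v = (1 - v) * ((∏' n : ℕ, (1 - q ^ n * (q * v))) *
      ∏' n : ℕ, (1 - q ^ n * (q * v⁻¹))) := by
  rw [tateTheta, ← (tateAux_mult q _ hq1).tprod_mul (tateAux_mult q _ hq1)]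
  congr 2
  funext n
  ring

lemma tateAux_func {L : Type*} [NormedField L] [CompleteSpace L] (q v : L) (hq0 : q ≠ 0)
    (hv : v ≠ 0) (hq1 : ‖q‖ < 1) :
    tateTheta q v = -v * tateTheta q (q * v) := by
  have e : q * (q * v)⁻¹ = v⁻¹ := by field_simp
  rw [tateAux_theta q v hq1, tateAux_theta q (q * v) hq1, e, tateAux_peel q v⁻¹ hq1,
    tateAux_peel q (q * v) hq1]
  have e2 : 1 - v = -v * (1 - v⁻¹) := by field_simp; ring
  rw [e2]
  ring

/-- **q-periodicity of theta quotients:** if `∏ αᵢ = ∏ βᵢ` then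
`f(u) = ∏ θ(αᵢu)/θ(βᵢu)` satisfies `f(qu) = f(u)` (whenever the denominators are
nonzero at `u` and at `qu`). -/
theorem tateTheta_quotient_periodic {L : Type*} [NormedField L] [CompleteSpace L]
    [IsUltrametricDist L] (q : L) (hq0 : 0 < ‖q‖) (hq1 : ‖q‖ < 1)
    (r : ℕ) (α β : Fin r → Lˣ) (hprod : (∏ i, α i) = ∏ i, β i) (u : Lˣ)
    (hβ : ∀ i, tateTheta q ((β i : L) * (u : L)) ≠ 0)
    (hβq : ∀ i, tateTheta q ((β i : L) * (q * (u : L))) ≠ 0) :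
    (∏ i, tateTheta q ((α i : L) * (q * (u : L))) / tateTheta q ((β i : L) * (q * (u : L))))
      = ∏ i, tateTheta q ((α i : L) * (u : L)) / tateTheta q ((β i : L) * (u : L)) := by
  have hq : q ≠ 0 := norm_pos_iff.mp hq0
  have key : ∀ γ : Lˣ, tateTheta q ((γ : L) * (u : L))
      = -(u : L) * γ * tateTheta q ((γ : L) * (q * (u : L))) := by
    intro γ
    rw [tateAux_func q _ hq (mul_ne_zero γ.ne_zero u.ne_zero) hq1, mul_left_comm q]
    ring
  have hp : (∏ i, (α i : L)) = ∏ i, (β i : L) := by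
    simpa using congrArg (fun x : Lˣ => (x : L)) hprod
  have hb : (∏ i, (β i : L)) ≠ 0 := Finset.prod_ne_zero_iff.mpr fun i _ => (β i).ne_zero
  have hu : (∏ _i : Fin r, -(u : L)) ≠ 0 :=
    Finset.prod_ne_zero_iff.mpr fun i _ => neg_ne_zero.mpr u.ne_zero
  simp only [key, Finset.prod_div_distrib, Finset.prod_mul_distrib, hp]
  rw [mul_div_mul_left _ _ (mul_ne_zero hu hb)]
end

section
/- Let L be a field complete with respect to a nonarchimedean absolute value |·|, and q ∈ L with 0 < |q| < 1. Let N ≥ 1, let μ ∈ L be a primitive N-th root of unity, and let ζ ∈ Lˣ with |ζ| = 1. Then ∏_{i=0}^{N−1} S(ζμ^i, q) = ∏_{k=1}^∞ ((1 − ζ^N q^{Nk})/(1 − ζ^{−N} q^{Nk}))^k, where both sides are convergent infinite products in L. -/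
/-- The infinite product `S(α) = S(α,q) = ∏_{k=1}^∞ ((1 - αq^k)/(1 - α⁻¹q^k))^k`,
interpreted as a `tprod`. -/
noncomputable def tateS {L : Type*} [NormedField L] (q α : L) : L :=
  ∏' k : ℕ, ((1 - α * q ^ (k + 1)) / (1 - α⁻¹ * q ^ (k + 1))) ^ (k + 1)

lemma tateS_aux_norm {L : Type*} [NormedField L] [IsUltrametricDist L] {y : L} (hy : ‖y‖ < 1) :
    ‖1 - y‖ = 1 := by
  have h := IsUltrametricDist.norm_eq_of_add_norm_lt_max (x := 1 - y) (y := -1) (by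
    have : (1 - y) + -1 = -y := by ring
    rw [this, norm_neg]
    exact lt_of_lt_of_le hy (by simp))
  simpa using h

lemma tateS_aux_mult {L : Type*} [NormedField L] [CompleteSpace L]
    [IsUltrametricDist L] (x a b : L) (hx : ‖x‖ < 1) (ha : ‖a‖ = 1) (hb : ‖b‖ = 1) :
    Multipliable (fun k : ℕ => ((1 - a * x ^ (k + 1)) / (1 - b * x ^ (k + 1))) ^ (k + 1)) := by
  have key : ∀ k : ℕ, ‖((1 - a * x ^ (k + 1)) / (1 - b * x ^ (k + 1))) ^ (k + 1) - 1‖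
      ≤ ‖x‖ ^ k := by
    intro k
    have hxk : ‖x‖ ^ (k + 1) < 1 := pow_lt_one₀ (norm_nonneg _) hx (by omega)
    have h1 : ‖1 - a * x ^ (k + 1)‖ = 1 := tateS_aux_norm (by simpa [ha] using hxk)
    have h2 : ‖1 - b * x ^ (k + 1)‖ = 1 := tateS_aux_norm (by simpa [hb] using hxk)
    have h20 : 1 - b * x ^ (k + 1) ≠ 0 := by
      intro h; rw [h] at h2; simp at h2
    have hab : ‖b - a‖ ≤ 1 := by
      have := IsUltrametricDist.norm_add_le_max b (-a)
      simpa [ha, hb, ← sub_eq_add_neg] using this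
    have hr : ‖(1 - a * x ^ (k + 1)) / (1 - b * x ^ (k + 1)) - 1‖ ≤ ‖x‖ ^ k := by
      have : (1 - a * x ^ (k + 1)) / (1 - b * x ^ (k + 1)) - 1
          = (b - a) * x ^ (k + 1) / (1 - b * x ^ (k + 1)) := by
        rw [div_sub_one h20]
        congr 1
        ring
      rw [this, norm_div, h2, div_one, norm_mul, norm_pow]
      calc _ ≤ 1 * ‖x‖ ^ (k + 1) := by gcongr
        _ ≤ ‖x‖ ^ k := by
          rw [one_mul]
          exact pow_le_pow_of_le_one (norm_nonneg _) hx.le (by omega)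
    set r := (1 - a * x ^ (k + 1)) / (1 - b * x ^ (k + 1)) with hrdef
    have hr1 : ‖r‖ = 1 := by rw [hrdef, norm_div, h1, h2, div_one]
    rw [← geom_sum_mul, norm_mul]
    have hs : ‖∑ i ∈ Finset.range (k + 1), r ^ i‖ ≤ 1 :=
      IsUltrametricDist.norm_sum_le_of_forall_le_of_nonneg zero_le_one
        (fun i _ => by simp [hr1])
    calc _ ≤ 1 * ‖x‖ ^ k := by gcongr
      _ = _ := one_mul _
  have hs : Summable (fun k : ℕ =>
      ‖((1 - a * x ^ (k + 1)) / (1 - b * x ^ (k + 1))) ^ (k + 1) - 1‖) :=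
    Summable.of_nonneg_of_le (fun _ => norm_nonneg _) key
      (summable_geometric_of_lt_one (norm_nonneg _) hx)
  have := multipliable_one_add_of_summable hs
  simpa using this

lemma tateS_aux_prod {L : Type*} [Field L] {N : ℕ} (hN : 1 ≤ N) {μ : L}
    (hμ : IsPrimitiveRoot μ N) (y : L) :
    ∏ i ∈ Finset.range N, (1 - μ ^ i * y) = 1 - y ^ N := by
  classical
  have h := hμ.pow_sub_pow_eq_prod_sub_mul (1 : L) y hN
  rw [one_pow] at h
  rw [h]
  refine Finset.prod_bij (fun i _ => μ ^ i) ?_ ?_ ?_ ?_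
  · intro i _
    rw [Polynomial.mem_nthRootsFinset hN, ← pow_mul, mul_comm, pow_mul, hμ.pow_eq_one, one_pow]
  · intro i hi j hj hij
    exact hμ.pow_inj (Finset.mem_range.mp hi) (Finset.mem_range.mp hj) hij
  · intro z hz
    rw [Polynomial.mem_nthRootsFinset hN] at hz
    haveI : NeZero N := ⟨by omega⟩
    obtain ⟨i, hi, h⟩ := hμ.eq_pow_of_pow_eq_one hz
    exact ⟨i, Finset.mem_range.mpr hi, h⟩
  · intro i _; rfl

/-- **Norm relation for `S`:** if `μ` is a primitive `N`-th root of unity and `|ζ| = 1`,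
then `∏_{i=0}^{N-1} S(ζμ^i, q) = ∏_{k=1}^∞ ((1 - ζ^N q^{Nk})/(1 - ζ^{-N} q^{Nk}))^k`,
both sides being convergent infinite products. -/
theorem tateS_norm_relation {L : Type*} [NormedField L] [CompleteSpace L]
    [IsUltrametricDist L] (q : L) (hq0 : 0 < ‖q‖) (hq1 : ‖q‖ < 1)
    (N : ℕ) (hN : 1 ≤ N) (μ : L) (hμ : IsPrimitiveRoot μ N)
    (ζ : Lˣ) (hζ : ‖(ζ : L)‖ = 1) :
    (∀ i : ℕ, Multipliable (fun k : ℕ =>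
        ((1 - ((ζ : L) * μ ^ i) * q ^ (k + 1)) /
          (1 - ((ζ : L) * μ ^ i)⁻¹ * q ^ (k + 1))) ^ (k + 1))) ∧
    Multipliable (fun k : ℕ =>
        ((1 - (ζ : L) ^ N * q ^ (N * (k + 1))) /
          (1 - ((ζ : L) ^ N)⁻¹ * q ^ (N * (k + 1)))) ^ (k + 1)) ∧
    (∏ i ∈ Finset.range N, tateS q ((ζ : L) * μ ^ i)) =
      ∏' k : ℕ, ((1 - (ζ : L) ^ N * q ^ (N * (k + 1))) /
          (1 - ((ζ : L) ^ N)⁻¹ * q ^ (N * (k + 1)))) ^ (k + 1) := by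
  have hμn : ‖μ‖ = 1 := by
    have h : ‖μ‖ ^ N = 1 := by rw [← norm_pow, hμ.pow_eq_one, norm_one]
    exact (pow_eq_one_iff_of_nonneg (norm_nonneg _) (by omega)).mp h
  have hm : ∀ i : ℕ, Multipliable (fun k : ℕ =>
        ((1 - ((ζ : L) * μ ^ i) * q ^ (k + 1)) /
          (1 - ((ζ : L) * μ ^ i)⁻¹ * q ^ (k + 1))) ^ (k + 1)) := fun i =>
    tateS_aux_mult q _ _ hq1 (by simp [hζ, hμn]) (by simp [hζ, hμn])
  refine ⟨hm, ?_, ?_⟩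
  · have := tateS_aux_mult (q ^ N) ((ζ : L) ^ N) (((ζ : L) ^ N)⁻¹)
      (by rw [norm_pow]; exact pow_lt_one₀ (norm_nonneg _) hq1 (by omega))
      (by simp [hζ]) (by simp [hζ])
    simpa only [← pow_mul] using this
  · unfold tateS
    rw [← Multipliable.tprod_finsetProd (fun i _ => hm i)]
    congr 1
    funext k
    rw [Finset.prod_pow, Finset.prod_div_distrib]
    congr 2
    · have := tateS_aux_prod hN hμ ((ζ : L) * q ^ (k + 1))
      rw [mul_pow, ← pow_mul, mul_comm (k + 1) N] at this
      rw [← this]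
      exact Finset.prod_congr rfl fun i _ => by ring
    · have := tateS_aux_prod hN hμ.inv ((ζ : L)⁻¹ * q ^ (k + 1))
      rw [mul_pow, ← pow_mul, mul_comm (k + 1) N, inv_pow] at this
      rw [← this]
      exact Finset.prod_congr rfl fun i _ => by rw [mul_inv, inv_pow]; ring
end

section
/- Let L be a field complete with respect to a nonarchimedean absolute value |·|, let π₀ ∈ L with 0 < |π₀| < 1, let r ≥ 2 be an integer and set q = π₀^r. Then for every integer i with 0 < i < r, one has the identity θ(π₀^i, q)^i · S(π₀^i, q)^r = ∏_{n=1}^∞ (1 − π₀^{nr−r+i})^{nr−r+i} · (1 − π₀^{nr−i})^{−(nr−i)} (a convergent infinite product, all factors being nonzero), and moreover this common value M_i has absolute value |M_i| = 1. -/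
def TGood {L : Type*} [NormedField L] (p : ℝ) (f : ℕ → L) : Prop :=
  ∀ n, ‖f n - 1‖ ≤ p ^ (n + 1)

section
variable {L : Type*} [NormedField L] [IsUltrametricDist L] {p : ℝ} {f g : ℕ → L}

theorem tnorm_one {a : L} (h : ‖a - 1‖ < 1) : ‖a‖ = 1 := by
  have := IsUltrametricDist.norm_add_eq_max_of_norm_ne_norm (x := a - 1) (y := 1)
    (by rw [norm_one]; exact h.ne)
  rw [sub_add_cancel, norm_one, max_eq_right h.le] at this
  exact this

theorem TGood.norm (h0 : 0 < p) (hp : p < 1) (hf : TGood p f) (n : ℕ) : ‖f n‖ = 1 :=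
  tnorm_one ((hf n).trans_lt (pow_lt_one₀ h0.le hp (by omega)))

theorem TGood.ne (h0 : 0 < p) (hp : p < 1) (hf : TGood p f) (n : ℕ) : f n ≠ 0 := by
  rw [← norm_ne_zero_iff, hf.norm h0 hp]; exact one_ne_zero

theorem TGood.mul (h0 : 0 < p) (hp : p < 1) (hf : TGood p f) (hg : TGood p g) :
    TGood p (fun n => f n * g n) := by
  intro n
  have : f n * g n - 1 = (f n - 1) * g n + (g n - 1) := by ring
  simp only [this]
  refine (IsUltrametricDist.norm_add_le_max _ _).trans (max_le ?_ (hg n))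
  rw [norm_mul, hg.norm h0 hp, mul_one]; exact hf n

theorem TGood.inv (h0 : 0 < p) (hp : p < 1) (hf : TGood p f) :
    TGood p (fun n => (f n)⁻¹) := by
  intro n
  have : (f n)⁻¹ - 1 = -((f n - 1) * (f n)⁻¹) := by
    have := hf.ne h0 hp n
    field_simp
    ring
  simp only [this]
  rw [norm_neg, norm_mul, norm_inv, hf.norm h0 hp, inv_one, mul_one]; exact hf n

theorem TGood.pow (h0 : 0 < p) (hp : p < 1) (hf : TGood p f) (e : ℕ → ℕ) :
    TGood p (fun n => f n ^ e n) := by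
  have key : ∀ k : ℕ, TGood p (fun n => f n ^ k) := by
    intro k
    induction k with
    | zero => intro n; simp; positivity
    | succ k ih => simpa only [pow_succ] using ih.mul h0 hp hf
  exact fun n => key (e n) n

theorem TGood.shift (h0 : 0 < p) (hp : p < 1) (hf : TGood p f) :
    TGood p (fun n => f (n + 1)) := fun n =>
  (hf (n + 1)).trans (pow_le_pow_of_le_one h0.le hp.le (by omega))

theorem TGood.mult [CompleteSpace L] (h0 : 0 < p) (hp : p < 1) (hf : TGood p f) :
    Multipliable f := by
  have : Summable (fun n => ‖f n - 1‖) :=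
    Summable.of_nonneg_of_le (fun _ => norm_nonneg _) hf
      ((summable_nat_add_iff 1).2 (summable_geometric_of_lt_one h0.le hp))
  simpa using multipliable_one_add_of_summable this

theorem TGood.norm_tprod [CompleteSpace L] (h0 : 0 < p) (hp : p < 1) (hf : TGood p f) :
    ‖∏' n, f n‖ = 1 := by
  have h := ((hf.mult h0 hp).hasProd.tendsto_prod_nat).norm
  refine tendsto_nhds_unique h ?_
  simp only [norm_prod, hf.norm h0 hp, Finset.prod_const_one]
  exact tendsto_const_nhds

theorem TGood.tprod_pow [CompleteSpace L] (h0 : 0 < p) (hp : p < 1) (hf : TGood p f) (k : ℕ) :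
    (∏' n, f n) ^ k = ∏' n, f n ^ k := by
  induction k with
  | zero => simp
  | succ k ih =>
    simp only [pow_succ]
    rw [ih, ((hf.pow h0 hp (fun _ => k)).mult h0 hp).tprod_mul (hf.mult h0 hp)]

end

/-- **The unit `M_i`:** for `q = π₀^r` and `0 < i < r` one has
`θ(π₀^i,q)^i · S(π₀^i,q)^r = ∏_{n=1}^∞ (1-π₀^{nr-r+i})^{nr-r+i}·(1-π₀^{nr-i})^{-(nr-i)}`,
a convergent infinite product with nonzero factors, and the common value has
absolute value `1`. -/
theorem tate_M_formula {L : Type*} [NormedField L] [CompleteSpace L]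
    [IsUltrametricDist L] (π₀ : L) (hπ0 : 0 < ‖π₀‖) (hπ1 : ‖π₀‖ < 1)
    (r : ℕ) (hr : 2 ≤ r) (i : ℕ) (hi0 : 0 < i) (hir : i < r) :
    (∀ n : ℕ, 1 ≤ n → (1 - π₀ ^ (n * r - r + i)) ≠ 0 ∧ (1 - π₀ ^ (n * r - i)) ≠ 0) ∧
    Multipliable (fun n : ℕ =>
      (1 - π₀ ^ ((n + 1) * r - r + i)) ^ ((n + 1) * r - r + i) /
        (1 - π₀ ^ ((n + 1) * r - i)) ^ ((n + 1) * r - i)) ∧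
    tateTheta (π₀ ^ r) (π₀ ^ i) ^ i * tateS (π₀ ^ r) (π₀ ^ i) ^ r =
      ∏' n : ℕ, ((1 - π₀ ^ ((n + 1) * r - r + i)) ^ ((n + 1) * r - r + i) /
        (1 - π₀ ^ ((n + 1) * r - i)) ^ ((n + 1) * r - i)) ∧
    ‖tateTheta (π₀ ^ r) (π₀ ^ i) ^ i * tateS (π₀ ^ r) (π₀ ^ i) ^ r‖ = 1 := by
  have hne : π₀ ≠ 0 := norm_pos_iff.1 hπ0
  obtain ⟨A, hA⟩ : ∃ A : ℕ → L, ∀ n, A n = 1 - π₀ ^ (n * r + i) := ⟨_, fun _ => rfl⟩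
  obtain ⟨B, hB⟩ : ∃ B : ℕ → L, ∀ n, B n = 1 - π₀ ^ ((n + 1) * r - i) := ⟨_, fun _ => rfl⟩
  have e1 : ∀ n : ℕ, (n + 1) * r - r + i = n * r + i := fun n => by
    rw [Nat.add_mul, one_mul, Nat.add_sub_cancel]
  have le1 : ∀ n : ℕ, n ≤ n * r := fun n => Nat.le_mul_of_pos_right n (by omega)
  have le2 : ∀ n : ℕ, n + 1 ≤ (n + 1) * r - i := fun n => by
    have := le1 n
    rw [Nat.add_mul, one_mul]; omega
  have le3 : ∀ n : ℕ, i ≤ (n + 1) * r := fun n => by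
    have := le2 n
    omega
  have gA : TGood ‖π₀‖ A := fun n => by
    rw [hA, sub_sub_cancel_left, norm_neg, norm_pow]
    exact pow_le_pow_of_le_one hπ0.le hπ1.le (by have := le1 n; omega)
  have gB : TGood ‖π₀‖ B := fun n => by
    rw [hB, sub_sub_cancel_left, norm_neg, norm_pow]
    exact pow_le_pow_of_le_one hπ0.le hπ1.le (le2 n)
  have hA0 := gA.ne hπ0 hπ1
  have hB0 := gB.ne hπ0 hπ1
  have gA' := gA.shift hπ0 hπ1
  have gU := gA.pow hπ0 hπ1 (fun n => n * r + i)
  have gV := (gB.pow hπ0 hπ1 (fun n => (n + 1) * r - i)).inv hπ0 hπ1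
  have gT := gA'.mul hπ0 hπ1 gB
  have gS := (gA'.mul hπ0 hπ1 (gB.inv hπ0 hπ1)).pow hπ0 hπ1 (fun n => n + 1)
  have hT : tateTheta (π₀ ^ r) (π₀ ^ i) = A 0 * ∏' n, A (n + 1) * B n := by
    unfold tateTheta
    congr 1
    · rw [hA]; simp
    · refine tprod_congr fun n => ?_
      rw [hA, hB, pow_sub₀ _ hne (le3 n), pow_add _ ((n + 1) * r) i, ← pow_mul, mul_comm r]
  have hS : tateS (π₀ ^ r) (π₀ ^ i) = ∏' n, (A (n + 1) * (B n)⁻¹) ^ (n + 1) := by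
    unfold tateS
    refine tprod_congr fun n => ?_
    rw [hA, hB, pow_sub₀ _ hne (le3 n), pow_add _ ((n + 1) * r) i, ← pow_mul, mul_comm r, div_eq_mul_inv,
      mul_comm (π₀ ^ i), mul_comm (π₀ ^ i)⁻¹]
  have hF : (fun n : ℕ =>
      (1 - π₀ ^ ((n + 1) * r - r + i)) ^ ((n + 1) * r - r + i) /
        (1 - π₀ ^ ((n + 1) * r - i)) ^ ((n + 1) * r - i)) =
      fun n => A n ^ (n * r + i) * (B n ^ ((n + 1) * r - i))⁻¹ := by
    funext n
    rw [e1, hA, hB, div_eq_mul_inv]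
  have gF := gU.mul hπ0 hπ1 gV
  have hEq : tateTheta (π₀ ^ r) (π₀ ^ i) ^ i * tateS (π₀ ^ r) (π₀ ^ i) ^ r =
      ∏' n, A n ^ (n * r + i) * (B n ^ ((n + 1) * r - i))⁻¹ := by
    have gU' := gU.shift hπ0 hπ1
    rw [hT, hS, mul_pow, gT.tprod_pow hπ0 hπ1, gS.tprod_pow hπ0 hπ1, mul_assoc,
      ← ((gT.pow hπ0 hπ1 (fun _ => i)).mult hπ0 hπ1).tprod_mul
        ((gS.pow hπ0 hπ1 (fun _ => r)).mult hπ0 hπ1),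
      (gU.mult hπ0 hπ1).tprod_mul (gV.mult hπ0 hπ1),
      tprod_eq_zero_mul' (f := fun n => A n ^ (n * r + i)) (gU'.mult hπ0 hπ1), mul_assoc,
      ← (gU'.mult hπ0 hπ1).tprod_mul (gV.mult hπ0 hπ1)]
    congr 1
    · simp
    · refine tprod_congr fun n => ?_
      rw [pow_sub₀ _ (hB0 n) (le3 n), ← pow_mul, mul_pow, mul_pow, pow_add, inv_pow, mul_inv,
        inv_inv]
      ring
  refine ⟨?_, ?_, ?_, ?_⟩
  · intro n hn
    obtain ⟨m, rfl⟩ : ∃ m, n = m + 1 := ⟨n - 1, by omega⟩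
    rw [e1, ← hA, ← hB]
    exact ⟨hA0 m, hB0 m⟩
  · rw [hF]; exact gF.mult hπ0 hπ1
  · rw [hF]; exact hEq
  · rw [hEq]; exact gF.norm_tprod hπ0 hπ1
end

section
/- Let F be a field containing a primitive m-th root of unity ζ (m ≥ 1). Then for every x ∈ Fˣ with x^m ≠ 1, the distribution relation m · Σ_{i=1}^{m} [ζ^i x] = [x^m] holds in the rationalized pre-Bloch group ℚ ⊗_ℤ P(F). (Note that x^m ≠ 1 guarantees ζ^i x ∈ F∖{0,1} for every i and x^m ∈ F∖{0,1}.) -/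
open scoped TensorProduct

variable (F : Type*) [Field F]

/-- The five-term (scissors congruence) elements
`[x] - [y] + [y/x] - [(1-x⁻¹)/(1-y⁻¹)] + [(1-x)/(1-y)]` in the free abelian group
on `F ∖ {0,1}`. -/
def fiveTermSet : Set (FreeAbelianGroup {t : F // t ≠ 0 ∧ t ≠ 1}) :=
  { z | ∃ x y : {t : F // t ≠ 0 ∧ t ≠ 1}, x ≠ y ∧
      ∃ (h1 : (y : F) / (x : F) ≠ 0 ∧ (y : F) / (x : F) ≠ 1)
        (h2 : (1 - (x : F)⁻¹) / (1 - (y : F)⁻¹) ≠ 0 ∧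
              (1 - (x : F)⁻¹) / (1 - (y : F)⁻¹) ≠ 1)
        (h3 : (1 - (x : F)) / (1 - (y : F)) ≠ 0 ∧ (1 - (x : F)) / (1 - (y : F)) ≠ 1),
      z = FreeAbelianGroup.of x - FreeAbelianGroup.of y
          + FreeAbelianGroup.of (⟨_, h1⟩ : {t : F // t ≠ 0 ∧ t ≠ 1})
          - FreeAbelianGroup.of (⟨_, h2⟩ : {t : F // t ≠ 0 ∧ t ≠ 1})
          + FreeAbelianGroup.of (⟨_, h3⟩ : {t : F // t ≠ 0 ∧ t ≠ 1}) }

/-- The pre-Bloch group `P(F)`: the free abelian group on `F ∖ {0,1}` modulo the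
five-term (scissors congruence) relations. -/
abbrev PreBloch := FreeAbelianGroup {t : F // t ≠ 0 ∧ t ≠ 1} ⧸
  AddSubgroup.closure (fiveTermSet F)

/-- The class `[x]` in the rationalized pre-Bloch group `P(F)_ℚ = ℚ ⊗_ℤ P(F)`. -/
noncomputable def preBlochClassQ (x : F) (h0 : x ≠ 0) (h1 : x ≠ 1) :
    ℚ ⊗[ℤ] PreBloch F :=
  (1 : ℚ) ⊗ₜ[ℤ] (QuotientAddGroup.mk (FreeAbelianGroup.of ⟨x, h0, h1⟩))


abbrev PQ (L : Type*) [Field L] := ℚ ⊗[ℤ] PreBloch L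

open Classical in
noncomputable def br {L : Type*} [Field L] (x : L) : PQ L :=
  if h : x ≠ 0 ∧ x ≠ 1 then preBlochClassQ L x h.1 h.2 else 0

section basics
variable {L : Type*} [Field L]

lemma br_eq (x : L) (h0 : x ≠ 0) (h1 : x ≠ 1) : preBlochClassQ L x h0 h1 = br x := by
  unfold br; rw [dif_pos ⟨h0, h1⟩]

@[simp] lemma br_zero : br (0 : L) = 0 := by simp [br]
@[simp] lemma br_one : br (1 : L) = 0 := by simp [br]

lemma br_five0 (x y : L) (hx0 : x ≠ 0) (hx1 : x ≠ 1) (hy0 : y ≠ 0) (hy1 : y ≠ 1) (hxy : x ≠ y) :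
    br x - br y + br (y / x) - br ((1 - x⁻¹) / (1 - y⁻¹)) + br ((1 - x) / (1 - y)) = 0 := by
  have e1 : 1 - x ≠ 0 := sub_ne_zero.2 hx1.symm
  have e2 : 1 - y ≠ 0 := sub_ne_zero.2 hy1.symm
  have e3 : 1 - x⁻¹ ≠ 0 := by
    rw [sub_ne_zero]; intro h; exact hx1 (by rw [← inv_inv x, ← h, inv_one])
  have e4 : 1 - y⁻¹ ≠ 0 := by
    rw [sub_ne_zero]; intro h; exact hy1 (by rw [← inv_inv y, ← h, inv_one])
  have h1 : y / x ≠ 0 ∧ y / x ≠ 1 := ⟨div_ne_zero hy0 hx0, by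
    rw [Ne, div_eq_one_iff_eq hx0]; exact hxy.symm⟩
  have h2 : (1 - x⁻¹) / (1 - y⁻¹) ≠ 0 ∧ (1 - x⁻¹) / (1 - y⁻¹) ≠ 1 := ⟨div_ne_zero e3 e4, by
    rw [Ne, div_eq_one_iff_eq e4]; intro h; apply hxy; simpa using h⟩
  have h3 : (1 - x) / (1 - y) ≠ 0 ∧ (1 - x) / (1 - y) ≠ 1 := ⟨div_ne_zero e1 e2, by
    rw [Ne, div_eq_one_iff_eq e2]; intro h; apply hxy; simpa using h⟩
  rw [← br_eq x hx0 hx1, ← br_eq y hy0 hy1, ← br_eq _ h1.1 h1.2, ← br_eq _ h2.1 h2.2,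
    ← br_eq _ h3.1 h3.2]
  unfold preBlochClassQ
  rw [← TensorProduct.tmul_sub, ← TensorProduct.tmul_add, ← TensorProduct.tmul_sub,
    ← TensorProduct.tmul_add]
  refine Eq.trans (congrArg _ ?_) (TensorProduct.tmul_zero _ _)
  rw [← QuotientAddGroup.mk_sub, ← QuotientAddGroup.mk_add, ← QuotientAddGroup.mk_sub,
    ← QuotientAddGroup.mk_add, QuotientAddGroup.eq_zero_iff]
  apply AddSubgroup.subset_closure
  exact ⟨⟨x, hx0, hx1⟩, ⟨y, hy0, hy1⟩, by simpa using hxy, h1, h2, h3, rfl⟩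

/-- universal property -/
lemma exists_lift {V : Type*} [AddCommGroup V] [Module ℚ V] (g : L → V)
    (hg : ∀ x y : L, x ≠ 0 → x ≠ 1 → y ≠ 0 → y ≠ 1 → x ≠ y →
      g x - g y + g (y / x) - g ((1 - x⁻¹) / (1 - y⁻¹)) + g ((1 - x) / (1 - y)) = 0) :
    ∃ φ : PQ L →ₗ[ℚ] V, ∀ x, x ≠ 0 → x ≠ 1 → φ (br x) = g x := by
  let f0 : FreeAbelianGroup {t : L // t ≠ 0 ∧ t ≠ 1} →+ V :=
    FreeAbelianGroup.lift (fun t => g t.1)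
  have hf0 : AddSubgroup.closure (fiveTermSet L) ≤ f0.ker := by
    rw [AddSubgroup.closure_le]
    rintro z ⟨x, y, hxy, h1, h2, h3, rfl⟩
    have := hg x y x.2.1 x.2.2 y.2.1 y.2.2 (fun h => hxy (Subtype.ext h))
    simp only [SetLike.mem_coe, AddMonoidHom.mem_ker, map_add, map_sub, f0,
      FreeAbelianGroup.lift_apply_of]
    exact this
  let f1 : PreBloch L →+ V := QuotientAddGroup.lift _ f0 hf0
  refine ⟨LinearMap.liftBaseChange ℚ f1.toIntLinearMap, fun x h0 h1 => ?_⟩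
  rw [← br_eq x h0 h1]
  unfold preBlochClassQ
  simp [f1, f0]

def Big (L : Type*) [Field L] : Prop := ∀ b : L, ∃ a : L, a ≠ 0 ∧ a ≠ 1 ∧ a * b ≠ 1

lemma third_eq (x y : L) (hx0 : x ≠ 0) (hy0 : y ≠ 0) :
    (1 - x⁻¹) / (1 - y⁻¹) = (1 - x) / (1 - y) * (y / x) := by
  by_cases hy1 : y = 1
  · simp [hy1]
  have : 1 - y ≠ 0 := sub_ne_zero.2 (Ne.symm hy1)
  have : y - 1 ≠ 0 := sub_ne_zero.2 (hy1)
  have h : 1 - y⁻¹ = (y - 1) / y := by field_simp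
  rw [h]
  field_simp
  ring

lemma two_cancel {V : Type*} [AddCommGroup V] [Module ℚ V] {v : V} (h : v + v = 0) : v = 0 := by
  have : (2 : ℚ) • v = 0 := by rw [two_smul]; exact h
  simpa using this

lemma br_inv (hL : Big L) (b : L) : br b⁻¹ = - br b := by
  by_cases hb0 : b = 0
  · simp [hb0]
  by_cases hb1 : b = 1
  · simp [hb1]
  have key : ∀ a b : L, a ≠ 0 → b ≠ 0 → a ≠ 1 → b ≠ 1 → a * b ≠ 1 →
      br (a * b) + br (a * b)⁻¹ = (br a + br a⁻¹) + (br b + br b⁻¹) := by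
    intro a b ha0 hb0 ha1 hb1 hab
    have hab' : a * b - 1 ≠ 0 := sub_ne_zero.2 hab
    have hb' : b - 1 ≠ 0 := sub_ne_zero.2 hb1
    have ha' : a - 1 ≠ 0 := sub_ne_zero.2 ha1
    set x := (b - 1) / (a * b - 1) with hx
    set y := a * x with hy
    have hx0 : x ≠ 0 := div_ne_zero hb' hab'
    have hy0 : y ≠ 0 := mul_ne_zero ha0 hx0
    have e1 : 1 - x = b * (a - 1) / (a * b - 1) := by
      rw [hx, eq_div_iff hab', sub_mul, div_mul_cancel₀ _ hab']; ring
    have e2 : 1 - y = (a - 1) / (a * b - 1) := by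
      rw [hy, hx, eq_div_iff hab', sub_mul, mul_assoc, div_mul_cancel₀ _ hab']; ring
    have hx1 : 1 - x ≠ 0 := by rw [e1]; exact div_ne_zero (mul_ne_zero hb0 ha') hab'
    have hy1 : 1 - y ≠ 0 := by rw [e2]; exact div_ne_zero ha' hab'
    have hxy : x ≠ y := by
      intro h; apply ha'; have : (a - 1) * x = 0 := by rw [sub_mul, ← hy, ← h]; ring
      exact (mul_eq_zero.1 this).resolve_right hx0
    have f1 := br_five0 x y hx0 (by rintro h; exact hx1 (by rw [h]; ring)) hy0
      (by rintro h; exact hy1 (by rw [h]; ring)) hxy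
    have f2 := br_five0 y x hy0 (by rintro h; exact hy1 (by rw [h]; ring)) hx0
      (by rintro h; exact hx1 (by rw [h]; ring)) hxy.symm
    rw [third_eq x y hx0 hy0] at f1
    rw [third_eq y x hy0 hx0] at f2
    have g1 : y / x = a := by rw [hy]; field_simp
    have g2 : (1 - x) / (1 - y) = b := by
      rw [e1, e2, div_div_div_cancel_right₀ hab', mul_div_assoc, div_self ha', mul_one]
    have g3 : x / y = a⁻¹ := by rw [← g1, inv_div]
    have g4 : (1 - y) / (1 - x) = b⁻¹ := by rw [← g2, inv_div]
    rw [g1, g2] at f1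
    rw [g3, g4] at f2
    have g5 : (a * b)⁻¹ = b⁻¹ * a⁻¹ := by rw [mul_inv_rev]
    rw [g5, mul_comm a b]
    have := congrArg₂ (· + ·) f1 f2
    rw [← sub_eq_zero]
    rw [← neg_eq_zero, ← add_zero (0 : PQ L), ← this]
    abel
  obtain ⟨a, ha0, ha1, hab⟩ := hL b
  have k1 := key a b ha0 hb0 ha1 hb1 hab
  have k2 := key (a * b) b⁻¹ (mul_ne_zero ha0 hb0) (inv_ne_zero hb0) hab (by simpa using hb1)
    (by rwa [mul_inv_cancel_right₀ hb0])
  rw [mul_inv_cancel_right₀ hb0, k1, inv_inv] at k2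
  rw [eq_neg_iff_add_eq_zero]
  apply two_cancel
  have : (br a + br a⁻¹) + ((br b⁻¹ + br b) + (br b⁻¹ + br b)) = br a + br a⁻¹ := by
    conv_rhs => rw [k2]
    abel
  simpa using this

lemma br_one_sub (hL : Big L) (x : L) : br (1 - x) = - br x := by
  by_cases hx0 : x = 0
  · simp [hx0]
  by_cases hx1 : x = 1
  · simp [hx1]
  have key : ∀ x y : L, x ≠ 0 → x ≠ 1 → y ≠ 0 → y ≠ 1 → br x + br (1 - x) = br y + br (1 - y) := by
    intro x y hx0 hx1 hy0 hy1
    by_cases hxy : x = y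
    · rw [hxy]
    have hx1' : 1 - x ≠ 0 := sub_ne_zero.2 (Ne.symm hx1)
    have hy1' : 1 - y ≠ 0 := sub_ne_zero.2 (Ne.symm hy1)
    have f1 := br_five0 x y hx0 hx1 hy0 hy1 hxy
    have f2 := br_five0 (1 - y) (1 - x) hy1' (by simpa using hy0) hx1' (by simpa using hx0)
      (by intro h; apply hxy; simpa using h.symm)
    rw [third_eq x y hx0 hy0] at f1
    rw [third_eq _ _ hy1' hx1'] at f2
    rw [sub_sub_cancel, sub_sub_cancel, mul_comm] at f2
    have := f1.trans f2.symm
    rw [← sub_eq_zero] at this ⊢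
    rw [← this]; abel
  have hx1' : 1 - x ≠ 0 := sub_ne_zero.2 (Ne.symm hx1)
  have hi1 : x⁻¹ ≠ 1 := by simpa using hx1
  have hi0 : x⁻¹ ≠ 0 := inv_ne_zero hx0
  have hz : 1 - x⁻¹ ≠ 0 := sub_ne_zero.2 (Ne.symm hi1)
  have k1 := key x⁻¹ x hi0 hi1 hx0 hx1
  have k2 := key (1 - x⁻¹)⁻¹ x (inv_ne_zero hz) (by simpa using hx0) hx0 hx1
  have e : 1 - (1 - x⁻¹)⁻¹ = (1 - x)⁻¹ := by
    have hx' : x - 1 ≠ 0 := sub_ne_zero.2 hx1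
    have h : 1 - x⁻¹ = (x - 1) / x := by field_simp
    rw [h, inv_div]; field_simp; ring
  rw [e, br_inv hL, br_inv hL] at k2
  rw [br_inv hL] at k1
  rw [eq_neg_iff_add_eq_zero, add_comm]
  have h1 : br (1 - x⁻¹) = (br x + br (1 - x)) + br x := by rw [← k1]; abel
  rw [h1] at k2
  have : (3 : ℚ) • (br x + br (1 - x)) = 0 := by
    have h2 : (3 : ℚ) • (br x + br (1 - x)) = (br x + br (1 - x)) + (br x + br (1 - x)) +
      (br x + br (1 - x)) := by module
    rw [h2]
    nth_rewrite 3 [← k2]; abel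
  exact (smul_eq_zero.1 this).resolve_left (by norm_num)

/-- five term relation for all nonzero arguments -/
lemma br_five (hL : Big L) (x y : L) (hx0 : x ≠ 0) (hy0 : y ≠ 0) :
    br x - br y + br (y / x) - br ((1 - x) / (1 - y) * (y / x)) + br ((1 - x) / (1 - y)) = 0 := by
  by_cases hx1 : x = 1
  · simp [hx1]
  by_cases hy1 : y = 1
  · simp [hy1, br_inv hL]
  by_cases hxy : x = y
  · have : 1 - y ≠ 0 := sub_ne_zero.2 (Ne.symm hy1)
    simp [hxy, div_self hy0, div_self this]
  rw [← third_eq x y hx0 hy0]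
  exact br_five0 x y hx0 hx1 hy0 hy1 hxy

end basics


structure Plc (K k : Type*) [Field K] [Field k] where
  V : K → k → Prop
  uniq : ∀ f a b, V f a → V f b → a = b
  one : V 1 1
  sub : ∀ f g a b, V f a → V g b → V (f - g) (a - b)
  mul : ∀ f g a b, V f a → V g b → V (f * g) (a * b)
  inv : ∀ f a, V f a → a ≠ 0 → V f⁻¹ a⁻¹
  tot : ∀ f, (∃ a, V f a) ∨ V f⁻¹ 0

namespace Plc
variable {K k : Type*} [Field K] [Field k] (P : Plc K k)

open Classical in
noncomputable def s (f : K) : PQ k := if h : ∃ a, P.V f a then br h.choose else 0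

lemma s_eq {f a} (h : P.V f a) : P.s f = br a := by
  have h' : ∃ a, P.V f a := ⟨a, h⟩
  unfold s
  rw [dif_pos h', P.uniq _ _ _ h'.choose_spec h]

lemma div {f g a b} (h : P.V f a) (h' : P.V g b) (hb : b ≠ 0) : P.V (f / g) (a / b) := by
  rw [div_eq_mul_inv, div_eq_mul_inv]; exact P.mul _ _ _ _ h (P.inv _ _ h' hb)

lemma osub {f a} (h : P.V f a) : P.V (1 - f) (1 - a) := P.sub _ _ _ _ P.one h

lemma s_inv (hk : Big k) {f a} (hf : f ≠ 0) (h : P.V f⁻¹ a) : P.s f = - br a := by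
  by_cases ha : a = 0
  · subst ha
    have : ¬ ∃ a, P.V f a := by
      rintro ⟨b, hb⟩
      have h1 := P.mul _ _ _ _ hb h
      rw [mul_inv_cancel₀ hf, mul_zero] at h1
      exact one_ne_zero (P.uniq _ _ _ P.one h1)
    unfold s
    rw [dif_neg this]; simp
  · have h1 := P.inv _ _ h ha
    rw [inv_inv] at h1
    rw [P.s_eq h1, br_inv hk]

lemma s_inv' (hk : Big k) {f} (hf : f ≠ 0) : P.s f⁻¹ = - P.s f := by
  rcases P.tot f with ⟨a, ha⟩ | h
  · have h2 : P.V (f⁻¹)⁻¹ a := by rwa [inv_inv]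
    rw [P.s_inv hk (inv_ne_zero hf) h2, P.s_eq ha]
  · rw [P.s_eq h, P.s_inv hk hf h]; simp

lemma s_unit (hk : Big k) {u f} (hf : f ≠ 0) (hu : P.V u 1) (hu0 : u ≠ 0) :
    P.s (u * f) = P.s f := by
  rcases P.tot f with ⟨a, ha⟩ | h
  · have := P.mul _ _ _ _ hu ha
    rw [P.s_eq this, P.s_eq ha, one_mul]
  · have h1 := P.mul _ _ _ _ (P.inv _ _ hu one_ne_zero) h
    rw [← mul_inv, mul_zero] at h1
    rw [P.s_inv hk (mul_ne_zero hu0 hf) h1, P.s_inv hk hf h]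

lemma s_five (hk : Big k) (x y : K) (hx0 : x ≠ 0) (hx1 : x ≠ 1) (hy0 : y ≠ 0) (hy1 : y ≠ 1) :
    P.s x - P.s y + P.s (y / x) - P.s ((1 - x⁻¹) / (1 - y⁻¹)) + P.s ((1 - x) / (1 - y)) = 0 := by
  have e1 : 1 - x ≠ 0 := sub_ne_zero.2 hx1.symm
  have e2 : 1 - y ≠ 0 := sub_ne_zero.2 hy1.symm
  have e3 : 1 - x⁻¹ ≠ 0 := by
    rw [sub_ne_zero]; intro h; exact hx1 (by rw [← inv_inv x, ← h, inv_one])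
  have e4 : 1 - y⁻¹ ≠ 0 := by
    rw [sub_ne_zero]; intro h; exact hy1 (by rw [← inv_inv y, ← h, inv_one])
  have n1 : y / x ≠ 0 := div_ne_zero hy0 hx0
  have n2 : (1 - x⁻¹) / (1 - y⁻¹) ≠ 0 := div_ne_zero e3 e4
  have n3 : (1 - x) / (1 - y) ≠ 0 := div_ne_zero e1 e2
  have th := third_eq x y hx0 hy0
  have th2 : ((1 - x⁻¹) / (1 - y⁻¹))⁻¹ = (1 - y) / (1 - x) * (x / y) := by
    rw [th, mul_inv, inv_div, inv_div]
  have ox : P.V x⁻¹ 0 → P.V (1 - x)⁻¹ 0 := by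
    intro h
    have h1 := P.div h (P.sub _ _ _ _ h P.one) (by simp)
    have h2 : x⁻¹ / (x⁻¹ - 1) = (1 - x)⁻¹ := by
      have : x⁻¹ - 1 ≠ 0 := by rw [← neg_sub]; exact neg_ne_zero.2 e3
      rw [div_eq_iff this]; field_simp
    rwa [h2, zero_div] at h1
  have oy : P.V y⁻¹ 0 → P.V (1 - y)⁻¹ 0 := by
    intro h
    have h1 := P.div h (P.sub _ _ _ _ h P.one) (by simp)
    have h2 : y⁻¹ / (y⁻¹ - 1) = (1 - y)⁻¹ := by
      have : y⁻¹ - 1 ≠ 0 := by rw [← neg_sub]; exact neg_ne_zero.2 e4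
      rw [div_eq_iff this]; field_simp
    rwa [h2, zero_div] at h1
  rcases P.tot x with ⟨a, ha⟩ | hx
  · by_cases ha0 : a = 0
    · subst ha0
      rcases P.tot y with ⟨b, hb⟩ | hy
      · by_cases hb0 : b = 0
        · subst hb0
          have hz := P.div (P.osub ha) (P.osub hb) (by simp)
          rw [th, P.s_unit hk n1 (by simpa using hz) n3, P.s_eq ha, P.s_eq hb, P.s_eq hz]
          simp
        · have h1 := P.div ha hb hb0
          have h2 := P.div (P.osub hb) (P.osub ha) (by simp)
          have h3 := P.mul _ _ _ _ h2 h1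
          rw [← inv_div] at h1
          rw [← th2] at h3
          rw [← inv_div] at h2
          rw [P.s_eq ha, P.s_eq hb, P.s_inv hk n1 h1, P.s_inv hk n2 h3, P.s_inv hk n3 h2]
          simp [br_one_sub hk]
      · have h1 := P.mul _ _ _ _ ha hy
        have h2 := P.mul _ _ _ _ (P.osub ha) (oy hy)
        have h3 := P.mul _ _ _ _ (P.osub hy) (P.div ha (P.sub _ _ _ _ ha P.one) (by simp))
        have h4 : ((1 - x⁻¹) / (1 - y⁻¹))⁻¹ = (1 - y⁻¹) * (x / (x - 1)) := by
          have : x - 1 ≠ 0 := sub_ne_zero.2 hx1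
          have h : 1 - x⁻¹ = (x - 1) / x := by field_simp
          rw [h, inv_div, div_div_eq_mul_div, mul_div_assoc]
        rw [← h4] at h3
        rw [← div_eq_mul_inv] at h1 h2
        rw [← inv_div] at h1
        rw [P.s_eq ha, P.s_inv hk hy0 hy, P.s_inv hk n1 h1, P.s_inv hk n2 h3, P.s_eq h2]
        simp
    · rcases P.tot y with ⟨b, hb⟩ | hy
      · by_cases hb0 : b = 0
        · subst hb0
          have h1 := P.div hb ha ha0
          have h2 := P.div (P.osub ha) (P.osub hb) (by simp)
          have h3 := P.mul _ _ _ _ h2 h1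
          rw [th, P.s_eq ha, P.s_eq hb, P.s_eq h1, P.s_eq h2, P.s_eq h3]
          simp [br_one_sub hk]
        · have h1 := P.div hb ha ha0
          by_cases hb1 : b = 1
          · subst hb1
            by_cases ha1 : a = 1
            · subst ha1
              rw [th, mul_comm, P.s_unit hk n3 (by simpa using h1) n1, P.s_eq ha, P.s_eq hb,
                P.s_eq h1]
              simp
            · have h2 := P.div (P.osub hb) (P.osub ha) (sub_ne_zero.2 (Ne.symm ha1))
              have h3 := P.mul _ _ _ _ h2 (P.div ha hb hb0)
              rw [← th2] at h3
              rw [← inv_div] at h2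
              rw [P.s_eq ha, P.s_eq hb, P.s_eq h1, P.s_inv hk n3 h2, P.s_inv hk n2 h3]
              simp [br_inv hk]
          · have h2 := P.div (P.osub ha) (P.osub hb) (sub_ne_zero.2 (Ne.symm hb1))
            have h3 := P.mul _ _ _ _ h2 h1
            rw [th, P.s_eq ha, P.s_eq hb, P.s_eq h1, P.s_eq h2, P.s_eq h3]
            exact br_five hk a b ha0 hb0
      · have h1 := P.mul _ _ _ _ ha hy
        have h2 := P.mul _ _ _ _ (P.osub ha) (oy hy)
        have h3 := P.div (P.osub (P.inv _ _ ha ha0)) (P.osub hy) (by simp)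
        rw [← div_eq_mul_inv] at h1 h2
        rw [← inv_div] at h1
        rw [P.s_eq ha, P.s_inv hk hy0 hy, P.s_inv hk n1 h1, P.s_eq h2, P.s_eq h3]
        simp [br_one_sub hk, br_inv hk]
  · rcases P.tot y with ⟨b, hb⟩ | hy
    · have h1 := P.mul _ _ _ _ hb hx
      have h2 := P.mul _ _ _ _ (P.osub hb) (ox hx)
      rw [← div_eq_mul_inv] at h1 h2
      rw [← inv_div] at h2
      by_cases hb0 : b = 0
      · subst hb0
        have h3 := P.mul _ _ _ _ (P.osub hx) (P.div hb (P.sub _ _ _ _ hb P.one) (by simp))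
        have h4 : (1 - x⁻¹) / (1 - y⁻¹) = (1 - x⁻¹) * (y / (y - 1)) := by
          have : y - 1 ≠ 0 := sub_ne_zero.2 hy1
          have h : 1 - y⁻¹ = (y - 1) / y := by field_simp
          rw [h, div_div_eq_mul_div, mul_div_assoc]
        rw [← h4] at h3
        rw [P.s_inv hk hx0 hx, P.s_eq hb, P.s_eq h1, P.s_eq h3, P.s_inv hk n3 h2]
        simp
      · have h3 := P.div (P.osub (P.inv _ _ hb hb0)) (P.osub hx) (by simp)
        rw [← inv_div] at h3
        rw [P.s_inv hk hx0 hx, P.s_eq hb, P.s_eq h1, P.s_inv hk n2 h3, P.s_inv hk n3 h2]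
        simp [br_one_sub hk, br_inv hk]
    · have h3 := P.div (P.osub hx) (P.osub hy) (by simp)
      have h4 : (1 - x) / (1 - y) = (1 - x⁻¹) / (1 - y⁻¹) * (y / x)⁻¹ := by
        rw [th, mul_inv_cancel_right₀ n1]
      rw [h4, P.s_unit hk (inv_ne_zero n1) (by simpa using h3) n2, P.s_inv hk hx0 hx,
        P.s_inv hk hy0 hy, P.s_eq h3, P.s_inv' hk n1]
      simp

lemma exists_sp (hk : Big k) : ∃ φ : PQ K →ₗ[ℚ] PQ k, ∀ f a, P.V f a → φ (br f) = br a := by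
  obtain ⟨φ, hφ⟩ := exists_lift P.s
    (fun x y hx0 hx1 hy0 hy1 _ => P.s_five hk x y hx0 hx1 hy0 hy1)
  refine ⟨φ, fun f a h => ?_⟩
  have hz : P.V 0 0 := by simpa using P.sub _ _ _ _ P.one P.one
  by_cases h0 : f = 0
  · subst h0; rw [P.uniq _ _ _ h hz]; simp
  by_cases h1 : f = 1
  · subst h1; rw [P.uniq _ _ _ h P.one]; simp
  rw [hφ f h0 h1, P.s_eq h]
end Plc

section evalPlc
open Polynomial
variable {k K : Type*} [Field k] [Field K] [Algebra k[X] K] [IsFractionRing k[X] K]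

lemma am_ne {p : k[X]} (h : p ≠ 0) : algebraMap k[X] K p ≠ 0 := by
  intro h'; apply h; exact IsFractionRing.injective k[X] K (by rw [h', map_zero])

variable (K) in
def evalPlc (c : k) : Plc K k where
  V f a := ∃ p q : k[X], q.eval c ≠ 0 ∧ algebraMap k[X] K p = f * algebraMap k[X] K q ∧
    p.eval c = a * q.eval c
  uniq := by
    rintro f a b ⟨p, q, h1, h2, h3⟩ ⟨p', q', h1', h2', h3'⟩
    have : p * q' = p' * q := by
      apply IsFractionRing.injective k[X] K
      rw [map_mul, map_mul, h2, h2']; ring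
    have := congrArg (eval c) this
    rw [eval_mul, eval_mul, h3, h3'] at this
    have h4 : (a - b) * (q.eval c * q'.eval c) = 0 := by linear_combination this
    exact sub_eq_zero.1 ((mul_eq_zero.1 h4).resolve_right (mul_ne_zero h1 h1'))
  one := ⟨1, 1, by simp, by simp, by simp⟩
  sub := by
    rintro f g a b ⟨p, q, h1, h2, h3⟩ ⟨p', q', h1', h2', h3'⟩
    refine ⟨p * q' - p' * q, q * q', by simpa using ⟨h1, h1'⟩, ?_, ?_⟩
    · simp only [map_sub, map_mul, h2, h2']; ring
    · simp only [eval_sub, eval_mul, h3, h3']; ring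
  mul := by
    rintro f g a b ⟨p, q, h1, h2, h3⟩ ⟨p', q', h1', h2', h3'⟩
    refine ⟨p * p', q * q', by simpa using ⟨h1, h1'⟩, ?_, ?_⟩
    · simp only [map_mul, h2, h2']; ring
    · simp only [eval_mul, h3, h3']; ring
  inv := by
    rintro f a ⟨p, q, h1, h2, h3⟩ ha
    have hp : p.eval c ≠ 0 := by rw [h3]; exact mul_ne_zero ha h1
    have hf : f ≠ 0 := by
      rintro rfl
      rw [zero_mul] at h2
      exact am_ne (K := K) (p := p) (by rintro rfl; simp at hp) h2
    refine ⟨q, p, hp, ?_, ?_⟩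
    · rw [h2]; field_simp
    · rw [h3]; field_simp
  tot := by
    intro f
    obtain ⟨p, q, hq, hf⟩ := IsFractionRing.div_surjective (A := k[X]) f
    have hq0 : q ≠ 0 := nonZeroDivisors.ne_zero hq
    by_cases hp0 : p = 0
    · left; exact ⟨0, 0, 1, by simp, by simp [← hf, hp0], by simp⟩
    obtain ⟨p1, hp1, hp2⟩ := exists_eq_pow_rootMultiplicity_mul_and_not_dvd p hp0 c
    obtain ⟨q1, hq1, hq2⟩ := exists_eq_pow_rootMultiplicity_mul_and_not_dvd q hq0 c
    rw [dvd_iff_isRoot, IsRoot] at hp2 hq2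
    set n := rootMultiplicity c p
    set l := rootMultiplicity c q
    have hX : algebraMap k[X] K (X - C c) ≠ 0 := am_ne (X_sub_C_ne_zero c)
    have hQ : algebraMap k[X] K q1 ≠ 0 := am_ne (by rintro rfl; simp at hq2)
    have hP : algebraMap k[X] K p1 ≠ 0 := am_ne (by rintro rfl; simp at hp2)
    rcases le_or_gt l n with h | h
    · left
      refine ⟨((X - C c) ^ (n - l) * p1).eval c / q1.eval c, (X - C c) ^ (n - l) * p1, q1, hq2, ?_,
        by field_simp⟩
      obtain ⟨d, hd⟩ := Nat.exists_eq_add_of_le h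
      rw [← hf, hp1, hq1, hd, Nat.add_sub_cancel_left]
      simp only [map_mul, map_pow, pow_add]; field_simp
    · right
      obtain ⟨d, hd⟩ := Nat.exists_eq_add_of_le h.le
      have hd0 : d ≠ 0 := by omega
      refine ⟨(X - C c) ^ d * q1, p1, hp2, ?_, by simp [hd0]⟩
      rw [← hf, hp1, hq1, hd]
      simp only [map_mul, map_pow, pow_add]; field_simp

end evalPlc


section cocyc
variable {V E : Type*} [AddCommGroup V] [Module ℚ V] [CommGroup E]

structure CocExt (V E : Type*) (G : E → E → V) where
  v : V
  e : E

namespace CocExt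
variable {G : E → E → V}

lemma ext' {x y : CocExt V E G} (h1 : x.v = y.v) (h2 : x.e = y.e) : x = y := by
  cases x; cases y; simp_all

instance : Add (CocExt V E G) := ⟨fun x y => ⟨x.v + y.v + G x.e y.e, x.e * y.e⟩⟩
instance : Zero (CocExt V E G) := ⟨⟨- G 1 1, 1⟩⟩
instance : Neg (CocExt V E G) := ⟨fun x => ⟨- x.v - G x.e x.e⁻¹ - G 1 1, x.e⁻¹⟩⟩

@[reducible] def grp (hs : ∀ a b, G a b = G b a)
    (hc : ∀ a b c, G a b + G (a * b) c = G b c + G a (b * c)) : AddCommGroup (CocExt V E G) :=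
  have h1 : ∀ b, G 1 b = G 1 1 := fun b => by
    have := hc 1 1 b
    simp only [one_mul] at this
    exact (add_right_cancel this).symm
  { nsmul := nsmulRec
    zsmul := zsmulRec
    add_assoc := fun x y z => by
      apply ext'
      · change x.v + y.v + G x.e y.e + z.v + G (x.e * y.e) z.e =
          x.v + (y.v + z.v + G y.e z.e) + G x.e (y.e * z.e)
        have := hc x.e y.e z.e
        calc _ = x.v + y.v + z.v + (G x.e y.e + G (x.e * y.e) z.e) := by abel
          _ = _ := by rw [this]; abel
      · exact mul_assoc _ _ _
    zero_add := fun x => by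
      apply ext'
      · change - G 1 1 + x.v + G 1 x.e = x.v
        rw [h1 x.e]; abel
      · exact one_mul _
    add_zero := fun x => by
      apply ext'
      · change x.v + - G 1 1 + G x.e 1 = x.v
        rw [hs x.e, h1 x.e]; abel
      · exact mul_one _
    neg_add_cancel := fun x => by
      apply ext'
      · change - x.v - G x.e x.e⁻¹ - G 1 1 + x.v + G x.e⁻¹ x.e = - G 1 1
        rw [hs x.e⁻¹]; abel
      · exact inv_mul_cancel _
    add_comm := fun x y => by
      apply ext'
      · change x.v + y.v + G x.e y.e = y.v + x.v + G y.e x.e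
        rw [hs]; abel
      · exact mul_comm _ _ }
end CocExt

lemma cocycle_split (G : E → E → V) (hs : ∀ a b, G a b = G b a)
    (hc : ∀ a b c, G a b + G (a * b) c = G b c + G a (b * c)) :
    ∃ θ : E → V, ∀ a b, G a b = θ a + θ b - θ (a * b) := by
  let _ := CocExt.grp hs hc
  have h1 : ∀ b, G 1 b = G 1 1 := fun b => by
    have := hc 1 1 b
    simp only [one_mul] at this
    exact (add_right_cancel this).symm
  let i : V →+ CocExt V E G :=
    { toFun := fun v => ⟨v - G 1 1, 1⟩
      map_zero' := by
        apply CocExt.ext'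
        · change (0 : V) - G 1 1 = - G 1 1
          abel
        · rfl
      map_add' := fun v w => by
        apply CocExt.ext'
        · change v + w - G 1 1 = v - G 1 1 + (w - G 1 1) + G 1 1
          abel
        · exact (one_mul _).symm }
  have hi : Function.Injective i := by
    intro v w h
    have : v - G 1 1 = w - G 1 1 := congrArg CocExt.v h
    exact sub_left_injective this
  let _ : DivisibleBy V ℤ :=
    { div := fun v n => (n : ℚ)⁻¹ • v
      div_zero := fun v => by simp
      div_cancel := fun {n} v hn => by
        rw [← Int.cast_smul_eq_zsmul ℚ, smul_smul, mul_inv_cancel₀ (by exact_mod_cast hn), one_smul] }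
  obtain ⟨r, hr⟩ := (Module.Baer.of_divisible V).extension_property_addMonoidHom i hi
    (AddMonoidHom.id V)
  refine ⟨fun a => r ⟨0, a⟩, fun a b => ?_⟩
  have e : (⟨0, a⟩ : CocExt V E G) + ⟨0, b⟩ = i (G a b) + ⟨0, a * b⟩ := by
    apply CocExt.ext'
    · change (0 : V) + 0 + G a b = G a b - G 1 1 + 0 + G 1 (a * b)
      rw [h1 (a * b)]; abel
    · exact (one_mul _).symm
  have := congrArg r e
  rw [map_add, map_add] at this
  rw [this]
  have h2 : r (i (G a b)) = G a b := DFunLike.congr_fun hr (G a b)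
  rw [h2]; abel
end cocyc

section homs
open Polynomial UniqueFactorizationMonoid
open scoped Classical
variable {k K V : Type*} [Field k] [Field K] [Algebra k[X] K] [IsFractionRing k[X] K]
  [AddCommGroup V]


noncomputable def hp (c : k → V) (val : k[X] → V) (p : k[X]) : V :=
  c p.leadingCoeff + ((normalizedFactors p).map val).sum

def IsHom (c : k → V) : Prop := ∀ a b, a ≠ 0 → b ≠ 0 → c (a * b) = c a + c b

lemma hp_mul {c : k → V} (hc : IsHom c) (val : k[X] → V) {p q : k[X]} (hp0 : p ≠ 0)
    (hq0 : q ≠ 0) : hp c val (p * q) = hp c val p + hp c val q := by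
  unfold hp
  rw [leadingCoeff_mul, hc _ _ (by simpa) (by simpa), normalizedFactors_mul hp0 hq0,
    Multiset.map_add, Multiset.sum_add]
  abel

noncomputable def num' (f : K) : k[X] := (IsFractionRing.div_surjective (A := k[X]) f).choose
noncomputable def den' (f : K) : k[X] :=
  (IsFractionRing.div_surjective (A := k[X]) f).choose_spec.choose

lemma den'_ne (f : K) : (den' f : k[X]) ≠ 0 :=
  nonZeroDivisors.ne_zero
    (IsFractionRing.div_surjective (A := k[X]) f).choose_spec.choose_spec.1

lemma num'_div (f : K) : algebraMap k[X] K (num' f) / algebraMap k[X] K (den' f) = f :=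
  (IsFractionRing.div_surjective (A := k[X]) f).choose_spec.choose_spec.2

lemma num'_ne {f : K} (hf : f ≠ 0) : (num' f : k[X]) ≠ 0 := by
  intro h
  apply hf
  rw [← num'_div (k := k) f, h]; simp

noncomputable def hK (c : k → V) (val : k[X] → V) (f : K) : V :=
  hp c val (num' f) - hp c val (den' f)

lemma hK_div {c : k → V} (hc : IsHom c) (val : k[X] → V) {p q : k[X]} (hp0 : p ≠ 0)
    (hq0 : q ≠ 0) :
    hK c val (algebraMap k[X] K p / algebraMap k[X] K q) = hp c val p - hp c val q := by
  set f := algebraMap k[X] K p / algebraMap k[X] K q with hf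
  have hf0 : f ≠ 0 := div_ne_zero (am_ne hp0) (am_ne hq0)
  have h1 := num'_div (k := k) f
  have : num' f * q = p * den' f := by
    apply IsFractionRing.injective k[X] K
    have a1 : algebraMap k[X] K q ≠ 0 := am_ne hq0
    have a2 : algebraMap k[X] K (den' f) ≠ 0 := am_ne (den'_ne f)
    rw [hf, div_eq_div_iff a2 a1] at h1
    rw [map_mul, map_mul, hf, h1]
  have h2 := congrArg (hp c val) this
  rw [hp_mul hc val (num'_ne hf0) hq0, hp_mul hc val hp0 (den'_ne f)] at h2
  unfold hK
  rw [sub_eq_sub_iff_add_eq_add, h2, add_comm]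

lemma hK_mul {c : k → V} (hc : IsHom c) (val : k[X] → V) {f g : K} (hf0 : f ≠ 0)
    (hg0 : g ≠ 0) : hK c val (f * g) = hK c val f + hK c val g := by
  have e : f * g = algebraMap k[X] K (num' f * num' g) / algebraMap k[X] K (den' f * den' g) := by
    rw [map_mul, map_mul, ← div_mul_div_comm, num'_div, num'_div]
  rw [e, hK_div hc val (mul_ne_zero (num'_ne hf0) (num'_ne hg0))
    (mul_ne_zero (den'_ne f) (den'_ne g)), hp_mul hc val (num'_ne hf0) (num'_ne hg0),
    hp_mul hc val (den'_ne f) (den'_ne g)]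
  unfold hK
  abel

lemma hK_alg {c : k → V} (hc : IsHom c) (val : k[X] → V) {p : k[X]} (hp0 : p ≠ 0) :
    hK c val (algebraMap k[X] K p) = hp c val p := by
  have := hK_div (K := K) hc val hp0 (one_ne_zero)
  rw [map_one, div_one] at this
  have h1 := hp_mul hc val (one_ne_zero (α := k[X])) one_ne_zero
  rw [mul_one] at h1
  rw [this]
  have : hp c val 1 = 0 := by simpa using h1
  rw [this, sub_zero]

lemma hp_irr (c : k → V) (hc : IsHom c) (val : k[X] → V) {p : k[X]} (hm : p.Monic)
    (hi : Irreducible p) : hp c val p = val p := by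
  have h1 := hc 1 1 one_ne_zero one_ne_zero
  unfold hp
  rw [normalizedFactors_irreducible hi, hm.normalize_eq_self, hm.leadingCoeff]
  simp at h1
  simp [h1]

lemma hp_C (c : k → V) (val : k[X] → V) {a : k} (ha : a ≠ 0) : hp c val (C a) = c a := by
  unfold hp
  have : normalizedFactors (C a) = 0 := normalizedFactors_of_isUnit (isUnit_C.2 ha.isUnit)
  simp [this]

lemma hK_val_add (val val' : k[X] → V) (f : K) :
    hK 0 (fun p => val p + val' p) f = hK 0 val f + hK 0 val' f := by
  unfold hK hp
  simp only [Multiset.sum_map_add, Pi.zero_apply, zero_add]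
  abel

lemma hK_val_congr (c : k → V) {val val' : k[X] → V} {f : K}
    (h : ∀ p, Irreducible p → p.Monic → val p = val' p) :
    hK c val f = hK c val' f := by
  have : ∀ p : k[X], hp c val p = hp c val' p := by
    intro p
    unfold hp
    congr 2
    apply Multiset.map_congr rfl
    intro x hx
    refine h x (irreducible_of_normalized_factor x hx) ?_
    rw [← normalize_normalized_factor x hx]
    exact monic_normalize (irreducible_of_normalized_factor x hx).ne_zero
  unfold hK; rw [this, this]

/-- polynomials of small degree -/
lemma hp_small {c : k → V} (hc : IsHom c) (val τ : k[X] → V) (d : ℕ)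
    (hτ : ∀ a b : k[X], a ≠ 0 → b ≠ 0 → (a * b).natDegree ≤ d → τ (a * b) = τ a + τ b)
    (h1 : ∀ a : k, a ≠ 0 → c a = τ (C a))
    (h2 : ∀ p : k[X], Irreducible p → p.Monic → p.natDegree ≤ d → val p = τ p)
    (p : k[X]) (hp0 : p ≠ 0) (hd : p.natDegree ≤ d) : hp c val p = τ p := by
  induction hn : p.natDegree using Nat.strong_induction_on generalizing p with
  | _ n ih =>
    by_cases h0 : p.natDegree = 0
    · rw [natDegree_eq_zero] at h0
      obtain ⟨a, rfl⟩ := h0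
      have ha : a ≠ 0 := by rintro rfl; simp at hp0
      rw [hp_C _ _ ha, h1 a ha]
    · obtain ⟨g, hg2, hg1, q, rfl⟩ := exists_monic_irreducible_factor p
        (fun h => h0 (natDegree_eq_zero_of_isUnit h))
      have hq0 : q ≠ 0 := right_ne_zero_of_mul hp0
      have hg0 : g ≠ 0 := hg1.ne_zero
      have hdeg := natDegree_mul hg0 hq0
      have := hg1.natDegree_pos
      rw [hp_mul hc val hg0 hq0, hτ g q hg0 hq0 hd, hp_irr c hc val hg2 hg1,
        h2 g hg1 hg2 (by omega), ih q.natDegree (by omega) q hq0 (by omega) rfl]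

end homs


section trip
open Polynomial
variable {k : Type*} [Field k] (K : Type*) [Field K] [Algebra k[X] K] [IsFractionRing k[X] K]

/-- bracket of a ratio -/
noncomputable def rb (a b : k[X]) : PQ K := br (algebraMap k[X] K a / algebraMap k[X] K b)

noncomputable def bb (a b : k[X]) : PQ K := rb K (-a) b

variable {K}

lemma bb_swap (hK : Big K) (a b : k[X]) : bb K b a = - bb K a b := by
  unfold bb rb
  rw [← br_inv hK, inv_div]
  congr 1
  simp only [map_neg, div_neg, neg_div]

lemma bb_third (hK : Big K) {a b c : k[X]} (h : a + b + c = 0) : bb K c b = - bb K a b := by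
  unfold bb rb
  by_cases hb : b = 0
  · simp [hb]
  have hb' : algebraMap k[X] K b ≠ 0 := am_ne hb
  rw [← br_one_sub hK]
  congr 1
  have : c = - (a + b) := by linear_combination h
  rw [this]
  simp only [map_neg, map_add]
  field_simp
  ring

lemma rb_mul_left {f : k[X]} (hf : f ≠ 0) (a b : k[X]) : rb K (f * a) (f * b) = rb K a b := by
  unfold rb
  have : algebraMap k[X] K f ≠ 0 := am_ne hf
  rw [map_mul, map_mul, mul_div_mul_left _ _ this]

lemma bb_mul_left {f : k[X]} (hf : f ≠ 0) (a b : k[X]) : bb K (f * a) (f * b) = bb K a b := by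
  unfold bb
  rw [← mul_neg, rb_mul_left hf]

lemma bb_zero_left (b : k[X]) : bb K 0 b = 0 := by simp [bb, rb]
lemma bb_zero_right (b : k[X]) : bb K b 0 = 0 := by simp [bb, rb]
lemma bb_zero_third {a b : k[X]} (h : a + b = 0) : bb K a b = 0 := by
  have : -a = b := by linear_combination -h
  unfold bb rb
  rw [this]
  by_cases hb : b = 0
  · simp [hb]
  · rw [div_self (am_ne hb), br_one]

/-- the move -/
lemma bb_move (hK : Big K) {A1 A2 B1 B2 C u v : k[X]} (h : A1 * A2 + B1 * B2 + C = 0)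
    (hA1 : A1 ≠ 0) (hA2 : A2 ≠ 0) (hB1 : B1 ≠ 0) (hB2 : B2 ≠ 0) (hu : u ≠ 0) (hv : v ≠ 0) :
    bb K (A1 * A2) (B1 * B2) = bb K (A1 * u) (B1 * v) - bb K (-B2 * u) (A2 * v)
      + bb K (C * u) (A2 * (A1 * u + B1 * v)) - bb K (C * v) (B2 * (A1 * u + B1 * v)) := by
  have a1 : algebraMap k[X] K A1 ≠ 0 := am_ne hA1
  have a2 : algebraMap k[X] K A2 ≠ 0 := am_ne hA2
  have b1 : algebraMap k[X] K B1 ≠ 0 := am_ne hB1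
  have b2 : algebraMap k[X] K B2 ≠ 0 := am_ne hB2
  have u0 : algebraMap k[X] K u ≠ 0 := am_ne hu
  have v0 : algebraMap k[X] K v ≠ 0 := am_ne hv
  have f := br_five hK (algebraMap k[X] K (-(A1 * A2)) / algebraMap k[X] K (B1 * B2))
    (algebraMap k[X] K (-(A1 * u)) / algebraMap k[X] K (B1 * v))
    (div_ne_zero (am_ne (neg_ne_zero.2 (mul_ne_zero hA1 hA2))) (am_ne (mul_ne_zero hB1 hB2)))
    (div_ne_zero (am_ne (neg_ne_zero.2 (mul_ne_zero hA1 hu))) (am_ne (mul_ne_zero hB1 hv)))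
  have hC : C = - (A1 * A2 + B1 * B2) := by linear_combination h
  have e1 : (algebraMap k[X] K (-(A1 * u)) / algebraMap k[X] K (B1 * v)) /
      (algebraMap k[X] K (-(A1 * A2)) / algebraMap k[X] K (B1 * B2)) =
      algebraMap k[X] K (-(-B2 * u)) / algebraMap k[X] K (A2 * v) := by
    simp only [map_neg, map_mul]; field_simp
  have e2 : (1 - algebraMap k[X] K (-(A1 * A2)) / algebraMap k[X] K (B1 * B2)) /
      (1 - algebraMap k[X] K (-(A1 * u)) / algebraMap k[X] K (B1 * v)) =
      algebraMap k[X] K (-(C * v)) / algebraMap k[X] K (B2 * (A1 * u + B1 * v)) := by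
    have g1 : 1 - algebraMap k[X] K (-(A1 * A2)) / algebraMap k[X] K (B1 * B2) =
      - algebraMap k[X] K C / algebraMap k[X] K (B1 * B2) := by
      rw [hC]; simp only [map_neg, map_mul, map_add]; field_simp; ring
    have g2 : 1 - algebraMap k[X] K (-(A1 * u)) / algebraMap k[X] K (B1 * v) =
      algebraMap k[X] K (A1 * u + B1 * v) / algebraMap k[X] K (B1 * v) := by
      simp only [map_neg, map_mul, map_add]; field_simp; ring
    rw [g1, g2]
    by_cases hp : A1 * u + B1 * v = 0
    · simp [hp]
    have p0 : algebraMap k[X] K (A1 * u + B1 * v) ≠ 0 := am_ne hp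
    rw [map_mul _ B2 (A1 * u + B1 * v), map_mul, map_mul, map_neg, map_mul]
    field_simp
  rw [e2, e1] at f
  have e3 : algebraMap k[X] K (-(C * v)) / algebraMap k[X] K (B2 * (A1 * u + B1 * v)) *
      (algebraMap k[X] K (-(-B2 * u)) / algebraMap k[X] K (A2 * v)) =
      algebraMap k[X] K (-(C * u)) / algebraMap k[X] K (A2 * (A1 * u + B1 * v)) := by
    by_cases hp : A1 * u + B1 * v = 0
    · simp [hp]
    have p0 : algebraMap k[X] K (A1 * u + B1 * v) ≠ 0 := am_ne hp
    rw [map_mul _ B2 (A1 * u + B1 * v), map_mul _ A2 (A1 * u + B1 * v)]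
    simp only [map_mul _ A2, map_mul _ C, map_neg, map_mul _ (-B2)]
    field_simp
  rw [e3] at f
  unfold bb rb
  rw [← sub_eq_zero, ← f]
  abel

variable (k K) in
def gens (e : ℕ) : Set (PQ K) :=
  { z | ∃ a1 a2 b1 b2 c1 c2 : k[X], a1 * a2 + b1 * b2 + c1 * c2 = 0 ∧ a1.natDegree ≤ e ∧
    a2.natDegree ≤ e ∧ b1.natDegree ≤ e ∧ b2.natDegree ≤ e ∧ c1.natDegree ≤ e ∧
    c2.natDegree ≤ e ∧ z = bb K (a1 * a2) (b1 * b2) }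

variable (k K) in
def MM (e : ℕ) : Submodule ℚ (PQ K) := Submodule.span ℚ (gens k K e)

lemma mem_MM {e : ℕ} {a1 a2 b1 b2 : k[X]} (c1 c2 : k[X]) (h : a1 * a2 + b1 * b2 + c1 * c2 = 0)
    (h1 : a1.natDegree ≤ e) (h2 : a2.natDegree ≤ e) (h3 : b1.natDegree ≤ e)
    (h4 : b2.natDegree ≤ e) (h5 : c1.natDegree ≤ e) (h6 : c2.natDegree ≤ e) :
    bb K (a1 * a2) (b1 * b2) ∈ MM k K e :=
  Submodule.subset_span ⟨a1, a2, b1, b2, c1, c2, h, h1, h2, h3, h4, h5, h6, rfl⟩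

lemma deg_quot {d : ℕ} {f h : k[X]} {n m : ℕ} (hf : f.natDegree = n) (hf0 : f ≠ 0)
    (hm : (f * h).natDegree ≤ n + m) : h.natDegree ≤ m := by
  by_cases hh : h = 0
  · simp [hh]
  rw [natDegree_mul hf0 hh] at hm
  omega

/-- image in the quotient -/
noncomputable def rr (d : ℕ) (a b : k[X]) : PQ K ⧸ MM k K d := (MM k K d).mkQ (rb K a b)

lemma cyc (hK : Big K) {d : ℕ} {π a b s r w : k[X]} (hπ : Irreducible π)
    (hd : π.natDegree = d + 1) (ha : a ≠ 0) (hb : b ≠ 0) (hs : s ≠ 0) (hr : r ≠ 0) (hw : w ≠ 0)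
    (da : a.natDegree ≤ d) (db : b.natDegree ≤ d) (ds : s.natDegree ≤ d) (dr : r.natDegree ≤ d)
    (dw : w.natDegree ≤ d) (h1 : π ∣ a * b - r) (h2 : π ∣ a * s - w) :
    rr (K := K) d (a * b) r - rr d (a * s) w + rr d (s * r) (b * w) = 0 := by
  obtain ⟨h1, e1⟩ := h1
  obtain ⟨h2, e2⟩ := h2
  have hπ0 := hπ.ne_zero
  have hna : ¬ π ∣ a := fun h => by
    have := natDegree_le_of_dvd h ha
    omega
  have e3 : π ∣ b * w - s * r := by
    refine (hπ.prime.dvd_or_dvd ?_).resolve_left hna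
    exact ⟨h1 * w - h2 * r, by linear_combination w * e1 - r * e2⟩
  obtain ⟨h3, e3⟩ := e3
  have e4 : a * h3 = h1 * w - h2 * r := by
    apply mul_left_cancel₀ hπ0
    linear_combination w * e1 - r * e2 - a * e3
  have e5 : h1 * s - h2 * b = h3 := by
    apply mul_left_cancel₀ hπ0
    linear_combination e3 - s * e1 + b * e2
  have dm : ∀ x y : k[X], x.natDegree ≤ d → y.natDegree ≤ d → (x * y).natDegree ≤ d + d :=
    fun x y hx hy => natDegree_mul_le.trans (by omega)
  have d1 : h1.natDegree ≤ d := by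
    refine deg_quot (d := d) hd hπ0 (m := d) ?_
    rw [← e1]
    refine (natDegree_sub_le _ _).trans ?_
    have := dm a b da db
    exact max_le (by omega) (by omega)
  have d2 : h2.natDegree ≤ d := by
    refine deg_quot (d := d) hd hπ0 (m := d) ?_
    rw [← e2]
    refine (natDegree_sub_le _ _).trans ?_
    have := dm a s da ds
    exact max_le (by omega) (by omega)
  have d3 : h3.natDegree ≤ d := by
    refine deg_quot (d := d) hd hπ0 (m := d) ?_
    rw [← e3]
    refine (natDegree_sub_le _ _).trans ?_
    have := dm b w db dw
    have := dm s r ds dr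
    exact max_le (by omega) (by omega)
  have m1 : bb K (h1 * w) (-h2 * r) ∈ MM k K d :=
    mem_MM (-a) h3 (by linear_combination -e4) d1 dw (by simpa using d2) dr (by simpa using da) d3
  have m2 : bb K (h1 * s) (-h2 * b) ∈ MM k K d :=
    mem_MM (-h3) 1 (by linear_combination e5) d1 ds (by simpa using d2) db (by simpa using d3)
      (by simp)
  have a0 : algebraMap k[X] K a ≠ 0 := am_ne ha
  have b0 : algebraMap k[X] K b ≠ 0 := am_ne hb
  have s0 : algebraMap k[X] K s ≠ 0 := am_ne hs
  have r0 : algebraMap k[X] K r ≠ 0 := am_ne hr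
  have w0 : algebraMap k[X] K w ≠ 0 := am_ne hw
  have p0 : algebraMap k[X] K π ≠ 0 := am_ne hπ0
  have f := br_five hK (algebraMap k[X] K (a * b) / algebraMap k[X] K r)
    (algebraMap k[X] K (a * s) / algebraMap k[X] K w)
    (div_ne_zero (am_ne (mul_ne_zero ha hb)) r0) (div_ne_zero (am_ne (mul_ne_zero ha hs)) w0)
  have g1 : algebraMap k[X] K (a * s) / algebraMap k[X] K w /
      (algebraMap k[X] K (a * b) / algebraMap k[X] K r) =
      algebraMap k[X] K (s * r) / algebraMap k[X] K (b * w) := by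
    simp only [map_mul]; field_simp
  have g2 : (1 - algebraMap k[X] K (a * b) / algebraMap k[X] K r) /
      (1 - algebraMap k[X] K (a * s) / algebraMap k[X] K w) =
      algebraMap k[X] K (-(h1 * w)) / algebraMap k[X] K (-h2 * r) := by
    have q1 : a * b = π * h1 + r := by linear_combination e1
    have q2 : a * s = π * h2 + w := by linear_combination e2
    have t1 : 1 - algebraMap k[X] K (a * b) / algebraMap k[X] K r =
        - (algebraMap k[X] K π * algebraMap k[X] K h1) / algebraMap k[X] K r := by
      rw [q1, map_add, map_mul]; field_simp; ring
    have t2 : 1 - algebraMap k[X] K (a * s) / algebraMap k[X] K w =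
        - (algebraMap k[X] K π * algebraMap k[X] K h2) / algebraMap k[X] K w := by
      rw [q2, map_add, map_mul]; field_simp; ring
    rw [t1, t2]
    by_cases hh : h2 = 0
    · simp [hh]
    have hh0 : algebraMap k[X] K h2 ≠ 0 := am_ne hh
    simp only [map_mul, map_neg]; field_simp
  rw [g2, g1] at f
  have g3 : algebraMap k[X] K (-(h1 * w)) / algebraMap k[X] K (-h2 * r) *
      (algebraMap k[X] K (s * r) / algebraMap k[X] K (b * w)) =
      algebraMap k[X] K (-(h1 * s)) / algebraMap k[X] K (-h2 * b) := by
    by_cases hh : h2 = 0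
    · simp [hh]
    have hh0 : algebraMap k[X] K h2 ≠ 0 := am_ne hh
    simp only [map_mul, map_neg]; field_simp
  rw [g3] at f
  unfold rr
  rw [← map_sub, ← map_add, Submodule.mkQ_apply, Submodule.Quotient.mk_eq_zero]
  have : rb K (a * b) r - rb K (a * s) w + rb K (s * r) (b * w) =
      bb K (h1 * s) (-h2 * b) - bb K (h1 * w) (-h2 * r) := by
    unfold bb rb
    rw [← sub_eq_zero, ← f]
    abel
  rw [this]
  exact Submodule.sub_mem _ m2 m1

end trip


section tau
open Polynomial
variable {k : Type*} [Field k] {K : Type*} [Field K] [Algebra k[X] K] [IsFractionRing k[X] K]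

lemma small_eq {d : ℕ} {π p q : k[X]} (hd : π.natDegree = d + 1) (dp : p.natDegree ≤ d)
    (dq : q.natDegree ≤ d) (h : π ∣ p - q) : p = q := by
  by_contra hne
  have h1 := natDegree_le_of_dvd h (sub_ne_zero.2 hne)
  have h2 := natDegree_sub_le p q
  have h3 : max p.natDegree q.natDegree ≤ d := max_le dp dq
  omega

lemma exists_small {d : ℕ} {π : k[X]} (hm : π.Monic) (hd : π.natDegree = d + 1) (p : k[X])
    (hp : ¬ π ∣ p) : ∃ q : k[X], q ≠ 0 ∧ q.natDegree ≤ d ∧ π ∣ q - p := by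
  have h1 : π ∣ p %ₘ π - p := by
    refine ⟨- (p /ₘ π), ?_⟩
    have := modByMonic_add_div p π
    linear_combination this
  refine ⟨p %ₘ π, ?_, ?_, h1⟩
  · intro h; rw [h, zero_sub, dvd_neg] at h1; exact hp h1
  · have := natDegree_modByMonic_lt p hm (by rintro rfl; simp at hd)
    omega

lemma exists_tau (hK : Big K) {d : ℕ} {π : k[X]} (hm : π.Monic) (hπ : Irreducible π)
    (hd : π.natDegree = d + 1) : ∃ τ : k[X] → PQ K ⧸ MM k K d,
    (∀ a b : k[X], a ≠ 0 → b ≠ 0 → (a * b).natDegree ≤ d → τ (a * b) = τ a + τ b) ∧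
    ∀ s r b w : k[X], s ≠ 0 → r ≠ 0 → b ≠ 0 → w ≠ 0 → s.natDegree ≤ d → r.natDegree ≤ d →
      b.natDegree ≤ d → w.natDegree ≤ d → π ∣ s * r - b * w →
      rr d (s * r) (b * w) = τ s + τ r - τ b - τ w := by
  haveI : Fact (Irreducible π) := ⟨hπ⟩
  have hrep : ∀ α : (AdjoinRoot π)ˣ, ∃ p : k[X], p ≠ 0 ∧ p.natDegree ≤ d ∧
      AdjoinRoot.mk π p = α := by
    intro α
    obtain ⟨p, hp⟩ := AdjoinRoot.mk_surjective (g := π) (α : AdjoinRoot π)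
    have hnp : ¬ π ∣ p := by
      rw [← AdjoinRoot.mk_eq_zero, hp]; exact α.ne_zero
    obtain ⟨q, h1, h2, h3⟩ := exists_small hm hd p hnp
    exact ⟨q, h1, h2, by rw [← hp, AdjoinRoot.mk_eq_mk]; exact h3⟩
  choose R R0 Rd Rm using hrep
  have hdv : ∀ α β γ δ : (AdjoinRoot π)ˣ, α * β = γ * δ → π ∣ R α * R β - R γ * R δ := by
    intro α β γ δ h
    rw [← AdjoinRoot.mk_eq_mk, map_mul, map_mul, Rm, Rm, Rm, Rm, ← Units.val_mul, h, Units.val_mul]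
  have hdv1 : ∀ α β γ : (AdjoinRoot π)ˣ, α * β = γ → π ∣ R α * R β - R γ := by
    intro α β γ h
    rw [← AdjoinRoot.mk_eq_mk, map_mul, Rm, Rm, Rm, ← Units.val_mul, h]
  let G : (AdjoinRoot π)ˣ → (AdjoinRoot π)ˣ → PQ K ⧸ MM k K d :=
    fun α β => rr d (R α * R β) (R (α * β))
  have hs : ∀ α β, G α β = G β α := by
    intro α β
    change rr d (R α * R β) (R (α * β)) = rr d (R β * R α) (R (β * α))
    rw [mul_comm (R α), mul_comm α]
  have hc : ∀ α β γ, G α β + G (α * β) γ = G β γ + G α (β * γ) := by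
    intro α β γ
    have c1 := cyc hK hπ hd (R0 α) (R0 β) (R0 (β * γ)) (R0 (α * β)) (R0 (α * (β * γ)))
      (Rd _) (Rd _) (Rd _) (Rd _) (Rd _) (hdv1 _ _ _ rfl) (hdv1 _ _ _ rfl)
    have c2 := cyc hK hπ hd (R0 γ) (R0 β) (R0 (α * β)) (R0 (γ * β)) (R0 (γ * (α * β)))
      (Rd _) (Rd _) (Rd _) (Rd _) (Rd _) (hdv1 _ _ _ rfl) (hdv1 _ _ _ rfl)
    have e1 : γ * (α * β) = α * (β * γ) := by
      rw [mul_comm γ, mul_assoc]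
    rw [hs (α * β) γ, hs β γ]
    change rr d (R α * R β) (R (α * β)) + rr d (R γ * R (α * β)) (R (γ * (α * β))) =
      rr d (R γ * R β) (R (γ * β)) + rr d (R α * R (β * γ)) (R (α * (β * γ)))
    rw [e1, mul_comm (R (α * β)), mul_comm γ β] at c2
    rw [e1, mul_comm γ β]
    have := c1.trans c2.symm
    rw [← sub_eq_zero] at this ⊢
    rw [← this]; abel
  obtain ⟨θ, hθ⟩ := cocycle_split G hs hc
  classical
  let τ : k[X] → PQ K ⧸ MM k K d := fun p =>
    if h : AdjoinRoot.mk π p ≠ 0 then θ (Units.mk0 _ h) else 0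
  have hnz : ∀ p : k[X], p ≠ 0 → p.natDegree ≤ d → ∃ α, R α = p ∧ τ p = θ α := by
    intro p h0 h1
    have h : AdjoinRoot.mk π p ≠ 0 := by
      rw [Ne, AdjoinRoot.mk_eq_zero]
      intro h
      have := natDegree_le_of_dvd h h0
      omega
    refine ⟨Units.mk0 _ h, ?_, dif_pos h⟩
    apply small_eq hd (Rd _) h1
    rw [← AdjoinRoot.mk_eq_mk, Rm]; rfl
  have star : ∀ α β : (AdjoinRoot π)ˣ, rr d (R α * R β) (R (α * β)) = θ α + θ β - θ (α * β) := hθ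
  refine ⟨τ, ?_, ?_⟩
  · intro a b ha hb hab
    have hdeg := natDegree_mul ha hb
    obtain ⟨α, rfl, e1⟩ := hnz a ha (by omega)
    obtain ⟨β, rfl, e2⟩ := hnz b hb (by omega)
    obtain ⟨γ, g1, e3⟩ := hnz (R α * R β) (mul_ne_zero ha hb) hab
    have : γ = α * β := by
      apply Units.ext
      rw [← Rm γ, g1, map_mul, Rm, Rm, Units.val_mul]
    rw [e1, e2, e3, this]
    have h1 := star α β
    rw [← this, g1] at h1
    have h2 : rr (K := K) d (R α * R β) (R α * R β) = 0 := by
      unfold rr rb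
      rw [div_self (am_ne (mul_ne_zero ha hb)), br_one, map_zero]
    rw [h2, this] at h1
    exact (sub_eq_zero.1 h1.symm).symm
  · intro s r b w hs0 hr0 hb0 hw0 ds dr db dw hdvd
    obtain ⟨σ, rfl, e1⟩ := hnz s hs0 ds
    obtain ⟨ρ, rfl, e2⟩ := hnz r hr0 dr
    obtain ⟨β, rfl, e3⟩ := hnz b hb0 db
    obtain ⟨ω, rfl, e4⟩ := hnz w hw0 dw
    have hm' : σ * ρ = β * ω := by
      apply Units.ext
      rw [Units.val_mul, Units.val_mul, ← Rm, ← Rm, ← Rm, ← Rm, ← map_mul, ← map_mul,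
        AdjoinRoot.mk_eq_mk]
      exact hdvd
    set α := ρ * β⁻¹ with hα
    have a1 : α * β = ρ := by rw [hα, inv_mul_cancel_right]
    have a2 : α * σ = ω := by
      rw [hα, mul_right_comm, mul_comm ρ, hm', mul_comm β, mul_inv_cancel_right]
    have c := cyc hK hπ hd (R0 α) hb0 hs0 hr0 hw0 (Rd _) (Rd _) (Rd _) (Rd _) (Rd _)
      (hdv1 _ _ _ a1) (hdv1 _ _ _ a2)
    have s1 := star α β
    have s2 := star α σ
    rw [a1] at s1
    rw [a2] at s2
    rw [s1, s2] at c
    rw [e1, e2, e3, e4, ← sub_eq_zero, ← c]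
    abel
end tau


section biadd
variable {K V : Type*} [Field K] [AddCommGroup V] [Module ℚ V]

structure BiAdd (B : K → K → V) : Prop where
  l : ∀ f g h, f ≠ 0 → g ≠ 0 → h ≠ 0 → B (f * g) h = B f h + B g h
  r : ∀ f g h, f ≠ 0 → g ≠ 0 → h ≠ 0 → B h (f * g) = B h f + B h g

namespace BiAdd
variable {B : K → K → V} (hB : BiAdd B)
include hB

lemma dl {f g h : K} (hf : f ≠ 0) (hg : g ≠ 0) (hh : h ≠ 0) : B (f / g) h = B f h - B g h := by
  have := hB.l (f / g) g h (div_ne_zero hf hg) hg hh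
  rw [div_mul_cancel₀ _ hg] at this
  rw [this]; abel

lemma dr {f g h : K} (hf : f ≠ 0) (hg : g ≠ 0) (hh : h ≠ 0) : B h (f / g) = B h f - B h g := by
  have := hB.r (f / g) g h (div_ne_zero hf hg) hg hh
  rw [div_mul_cancel₀ _ hg] at this
  rw [this]; abel

lemma dd {a b c e : K} (ha : a ≠ 0) (hb : b ≠ 0) (hc : c ≠ 0) (he : e ≠ 0) :
    B (a / b) (c / e) = B a c - B a e - B b c + B b e := by
  rw [hB.dl ha hb (div_ne_zero hc he), hB.dr hc he ha, hB.dr hc he hb]; abel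

lemma onel {h : K} (hh : h ≠ 0) : B 1 h = 0 := by
  have := hB.l 1 1 h one_ne_zero one_ne_zero hh
  rw [mul_one] at this
  simpa using this

lemma oner {h : K} (hh : h ≠ 0) : B h 1 = 0 := by
  have := hB.r 1 1 h one_ne_zero one_ne_zero hh
  rw [mul_one] at this
  simpa using this

lemma powl {f h : K} (hf : f ≠ 0) (hh : h ≠ 0) (n : ℕ) : B (f ^ n) h = n • B f h := by
  induction n with
  | zero => simp [hB.onel hh]
  | succ n ih => rw [pow_succ, hB.l _ _ _ (pow_ne_zero n hf) hf hh, ih, succ_nsmul]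

lemma powr {f h : K} (hf : f ≠ 0) (hh : h ≠ 0) (n : ℕ) : B h (f ^ n) = n • B h f := by
  induction n with
  | zero => simp [hB.oner hh]
  | succ n ih => rw [pow_succ, hB.r _ _ _ (pow_ne_zero n hf) hf hh, ih, succ_nsmul]

lemma torl {f h : K} {n : ℕ} (hn : n ≠ 0) (hf : f ^ n = 1) (hh : h ≠ 0) : B f h = 0 := by
  have hf0 : f ≠ 0 := by rintro rfl; simp [hn] at hf
  have := hB.powl hf0 hh n
  rw [hf, hB.onel hh, ← Nat.cast_smul_eq_nsmul ℚ] at this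
  exact (smul_eq_zero.1 this.symm).resolve_left (by exact_mod_cast hn)

lemma torr {f h : K} {n : ℕ} (hn : n ≠ 0) (hf : f ^ n = 1) (hh : h ≠ 0) : B h f = 0 := by
  have hf0 : f ≠ 0 := by rintro rfl; simp [hn] at hf
  have := hB.powr hf0 hh n
  rw [hf, hB.oner hh, ← Nat.cast_smul_eq_nsmul ℚ] at this
  exact (smul_eq_zero.1 this.symm).resolve_left (by exact_mod_cast hn)

lemma negl {f h : K} (hf : f ≠ 0) (hh : h ≠ 0) : B (-f) h = B f h := by
  rw [← neg_one_mul, hB.l _ _ _ (by simp) hf hh, hB.torl (n := 2) (by simp) (by simp) hh, zero_add]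

lemma negr {f h : K} (hf : f ≠ 0) (hh : h ≠ 0) : B h (-f) = B h f := by
  rw [← neg_one_mul, hB.r _ _ _ (by simp) hf hh, hB.torr (n := 2) (by simp) (by simp) hh, zero_add]

lemma five (x y : K) (hx0 : x ≠ 0) (hx1 : x ≠ 1) (hy0 : y ≠ 0) (hy1 : y ≠ 1) (hxy : x ≠ y) :
    (B (1 - x) x - B x (1 - x)) - (B (1 - y) y - B y (1 - y))
    + (B (1 - y / x) (y / x) - B (y / x) (1 - y / x))
    - (B (1 - (1 - x⁻¹) / (1 - y⁻¹)) ((1 - x⁻¹) / (1 - y⁻¹))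
      - B ((1 - x⁻¹) / (1 - y⁻¹)) (1 - (1 - x⁻¹) / (1 - y⁻¹)))
    + (B (1 - (1 - x) / (1 - y)) ((1 - x) / (1 - y))
      - B ((1 - x) / (1 - y)) (1 - (1 - x) / (1 - y))) = 0 := by
  rw [third_eq x y hx0 hy0]
  have hp : 1 - x ≠ 0 := sub_ne_zero.2 (Ne.symm hx1)
  have hq : 1 - y ≠ 0 := sub_ne_zero.2 (Ne.symm hy1)
  have hr : x - y ≠ 0 := sub_ne_zero.2 hxy
  have e1 : 1 - y / x = (x - y) / x := by field_simp
  have e2 : 1 - (1 - x) / (1 - y) = (x - y) / (1 - y) := by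
    rw [eq_div_iff hq, sub_mul, div_mul_cancel₀ _ hq]; ring
  have e3 : (1 - x) / (1 - y) * (y / x) = ((1 - x) * y) / ((1 - y) * x) := by
    rw [div_mul_div_comm]
  have e4 : 1 - ((1 - x) * y) / ((1 - y) * x) = (x - y) / ((1 - y) * x) := by
    have h := mul_ne_zero hq hx0
    rw [eq_div_iff h, sub_mul, div_mul_cancel₀ _ h]; ring
  rw [e3, e4, e1, e2]
  generalize 1 - x = p at *
  generalize 1 - y = q at *
  generalize x - y = r at *
  have hpy := mul_ne_zero hp hy0
  have hqx := mul_ne_zero hq hx0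
  rw [hB.dd hr hx0 hy0 hx0, hB.dd hy0 hx0 hr hx0, hB.dd hr hqx hpy hqx, hB.dd hpy hqx hr hqx,
    hB.dd hr hq hp hq, hB.dd hp hq hr hq, hB.r _ _ _ hp hy0 hr, hB.r _ _ _ hq hx0 hr,
    hB.l _ _ _ hq hx0 hpy, hB.r _ _ _ hp hy0 hq, hB.r _ _ _ hp hy0 hx0,
    hB.l _ _ _ hp hy0 hr, hB.l _ _ _ hq hx0 hr, hB.l _ _ _ hp hy0 hqx,
    hB.r _ _ _ hq hx0 hp, hB.r _ _ _ hq hx0 hy0]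
  abel

lemma exists_Psi : ∃ Ψ : PQ K →ₗ[ℚ] V, ∀ x, x ≠ 0 → x ≠ 1 →
    Ψ (br x) = B (1 - x) x - B x (1 - x) :=
  exists_lift (fun x => B (1 - x) x - B x (1 - x)) (hB.five)

lemma prodl {ι : Type*} (s : Finset ι) (f : ι → K) (hf : ∀ i ∈ s, f i ≠ 0) {h : K} (hh : h ≠ 0) :
    B (∏ i ∈ s, f i) h = ∑ i ∈ s, B (f i) h := by
  classical
  induction s using Finset.induction_on with
  | empty =>
    have := hB.l 1 1 h one_ne_zero one_ne_zero hh
    rw [mul_one] at this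
    simpa using this
  | insert a s ha ih =>
    rw [Finset.prod_insert ha, Finset.sum_insert ha, hB.l _ _ _ (hf a (by simp))
      (Finset.prod_ne_zero_iff.2 fun i hi => hf i (by simp [hi])) hh,
      ih (fun i hi => hf i (by simp [hi]))]

lemma prodr {ι : Type*} (s : Finset ι) (f : ι → K) (hf : ∀ i ∈ s, f i ≠ 0) {h : K} (hh : h ≠ 0) :
    B h (∏ i ∈ s, f i) = ∑ i ∈ s, B h (f i) := by
  classical
  induction s using Finset.induction_on with
  | empty => simpa using hB.oner hh
  | insert a s ha ih =>
    rw [Finset.prod_insert ha, Finset.sum_insert ha, hB.r _ _ _ (hf a (by simp))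
      (Finset.prod_ne_zero_iff.2 fun i hi => hf i (by simp [hi])) hh,
      ih (fun i hi => hf i (by simp [hi]))]

end BiAdd
end biadd

/-- the distribution element -/
noncomputable def DD {K : Type*} [Field K] (z : K) (m : ℕ) (t : K) : PQ K :=
  m • (∑ i ∈ Finset.Icc 1 m, br (z ^ i * t)) - br (t ^ m)

lemma prod_zeta {K : Type*} [Field K] {z : K} {m : ℕ} (hm : 1 ≤ m) (hz : IsPrimitiveRoot z m)
    (t : K) : ∏ i ∈ Finset.Icc 1 m, (1 - z ^ i * t) = 1 - t ^ m := by
  have h := hz.pow_sub_pow_eq_prod_sub_mul 1 t (by omega)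
  rw [one_pow] at h
  rw [h]
  refine Finset.prod_bij (fun i _ => z ^ i) ?_ ?_ ?_ ?_
  · intro i _
    rw [Polynomial.mem_nthRootsFinset (by omega), ← pow_mul, mul_comm, pow_mul, hz.pow_eq_one,
      one_pow]
  · intro i hi j hj hij
    rw [Finset.mem_Icc] at hi hj
    obtain ⟨i, rfl⟩ := Nat.exists_eq_add_of_le' hi.1
    obtain ⟨j, rfl⟩ := Nat.exists_eq_add_of_le' hj.1
    have hz0 : z ≠ 0 := hz.ne_zero (by omega)
    rw [pow_succ, pow_succ] at hij
    have := hz.pow_inj (by omega) (by omega) (mul_right_cancel₀ hz0 hij)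
    omega
  · intro b hb
    rw [Polynomial.mem_nthRootsFinset (by omega)] at hb
    have : NeZero m := ⟨by omega⟩
    obtain ⟨i, hi, rfl⟩ := hz.eq_pow_of_pow_eq_one hb
    by_cases h0 : i = 0
    · exact ⟨m, by simp; omega, by simp [h0, hz.pow_eq_one]⟩
    · exact ⟨i, by simp; omega, rfl⟩
  · intro i _; rfl

lemma BiAdd.Psi_DD {K V : Type*} [Field K] [AddCommGroup V] [Module ℚ V] {B : K → K → V}
    (hB : BiAdd B) {Ψ : PQ K →ₗ[ℚ] V}
    (hΨ : ∀ x, x ≠ 0 → x ≠ 1 → Ψ (br x) = B (1 - x) x - B x (1 - x))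
    {z : K} {m : ℕ} (hm : 1 ≤ m) (hz : IsPrimitiveRoot z m) (t : K) (ht0 : t ≠ 0)
    (ht : t ^ m ≠ 1) : Ψ (DD z m t) = 0 := by
  have hzi : ∀ i, (z ^ i) ^ m = 1 := fun i => by
    rw [← pow_mul, mul_comm, pow_mul, hz.pow_eq_one, one_pow]
  have hz0 : ∀ i, z ^ i ≠ 0 := fun i => pow_ne_zero i (hz.ne_zero (by omega))
  have hne : ∀ i, z ^ i * t ≠ 1 := fun i h => by
    apply ht
    have : (z ^ i * t) ^ m = 1 := by rw [h, one_pow]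
    rwa [mul_pow, hzi, one_mul] at this
  have hne' : ∀ i, 1 - z ^ i * t ≠ 0 := fun i => sub_ne_zero.2 (hne i).symm
  have h1 : 1 - t ^ m ≠ 0 := sub_ne_zero.2 ht.symm
  unfold DD
  rw [map_sub, map_nsmul, map_sum, hΨ _ (pow_ne_zero m ht0) ht]
  have e : ∀ i ∈ Finset.Icc 1 m, Ψ (br (z ^ i * t)) = B (1 - z ^ i * t) t - B t (1 - z ^ i * t) := by
    intro i _
    rw [hΨ _ (mul_ne_zero (hz0 i) ht0) (hne i), hB.r _ _ _ (hz0 i) ht0 (hne' i),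
      hB.l _ _ _ (hz0 i) ht0 (hne' i), hB.torl (n := m) (by omega) (hzi i) (hne' i),
      hB.torr (n := m) (by omega) (hzi i) (hne' i), zero_add, zero_add]
  rw [Finset.sum_congr rfl e, Finset.sum_sub_distrib, ← hB.prodl _ _ (fun i _ => hne' i) ht0,
    ← hB.prodr _ _ (fun i _ => hne' i) ht0, prod_zeta hm hz, hB.powl ht0 h1, hB.powr ht0 h1,
    smul_sub, sub_self]


section constr
open Polynomial
variable {k : Type*} [Field k] {K : Type*} [Field K] [Algebra k[X] K] [IsFractionRing k[X] K]

lemma rr_swap (hK : Big K) (d : ℕ) (a b : k[X]) : rr (K := K) d b a = - rr d a b := by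
  unfold rr rb
  rw [← map_neg, ← br_inv hK, inv_div]

def Pr (d : ℕ) (π : k[X]) : Prop := π.Monic ∧ Irreducible π ∧ π.natDegree = d + 1

lemma exists_B (hK : Big K) (d : ℕ) : ∃ B : K → K → PQ K ⧸ MM k K d, BiAdd B ∧
    (∀ (p : k[X]) (h : K), p ≠ 0 → p.natDegree ≤ d → B (algebraMap k[X] K p) h = 0) ∧
    (∀ π s r b w : k[X], Pr d π → s ≠ 0 → r ≠ 0 → b ≠ 0 → w ≠ 0 → s.natDegree ≤ d →
      r.natDegree ≤ d → b.natDegree ≤ d → w.natDegree ≤ d → π ∣ s * r - b * w →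
      rr d (s * r) (b * w) = B (algebraMap k[X] K π) (algebraMap k[X] K (s * r)) -
        B (algebraMap k[X] K π) (algebraMap k[X] K (b * w))) ∧
    (∀ π π' : k[X], Pr d π → Pr d π' → π ≠ π' →
      rr d π π' = B (algebraMap k[X] K π) (algebraMap k[X] K π')
        - B (algebraMap k[X] K π') (algebraMap k[X] K π)
        - B (algebraMap k[X] K π) (algebraMap k[X] K (π' - π))
        + B (algebraMap k[X] K π') (algebraMap k[X] K (π' - π))) := by
  classical
  have hex : ∀ π : k[X], ∃ τ : k[X] → PQ K ⧸ MM k K d, Pr d π →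
    (∀ a b : k[X], a ≠ 0 → b ≠ 0 → (a * b).natDegree ≤ d → τ (a * b) = τ a + τ b) ∧
    ∀ s r b w : k[X], s ≠ 0 → r ≠ 0 → b ≠ 0 → w ≠ 0 → s.natDegree ≤ d → r.natDegree ≤ d →
      b.natDegree ≤ d → w.natDegree ≤ d → π ∣ s * r - b * w →
      rr d (s * r) (b * w) = τ s + τ r - τ b - τ w := by
    intro π
    by_cases h : Pr d π
    · obtain ⟨τ, h1⟩ := exists_tau hK h.1 h.2.1 h.2.2
      exact ⟨τ, fun _ => h1⟩
    · exact ⟨0, fun h' => absurd h' h⟩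
  choose τ hτ using hex
  let c : k[X] → k → PQ K ⧸ MM k K d := fun π a => τ π (C a)
  let val : k[X] → k[X] → PQ K ⧸ MM k K d := fun π ρ =>
    if ρ.natDegree ≤ d then τ π ρ else (1 / 2 : ℚ) • rr d π ρ + τ π (ρ - π)
  let T : k[X] → K → PQ K ⧸ MM k K d := fun π g => _root_.hK (c π) (val π) g
  have hc : ∀ π, Pr d π → IsHom (c π) := by
    intro π hπ a b ha hb
    change τ π (C (a * b)) = τ π (C a) + τ π (C b)
    rw [C_mul]
    exact (hτ π hπ).1 _ _ (by simpa) (by simpa) (by rw [← C_mul, natDegree_C]; exact Nat.zero_le _)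
  have hTs : ∀ π, Pr d π → ∀ p : k[X], p ≠ 0 → p.natDegree ≤ d →
      T π (algebraMap k[X] K p) = τ π p := by
    intro π hπ p hp0 hpd
    change _root_.hK (c π) (val π) (algebraMap k[X] K p) = _
    rw [hK_alg (hc π hπ) _ hp0]
    exact hp_small (hc π hπ) (val π) (τ π) d (hτ π hπ).1 (fun a _ => rfl)
      (fun p _ _ h => if_pos h) p hp0 hpd
  have hTb : ∀ π π', Pr d π → Pr d π' → T π (algebraMap k[X] K π') =
      (1 / 2 : ℚ) • rr d π π' + τ π (π' - π) := by
    intro π π' hπ hπ'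
    change _root_.hK (c π) (val π) (algebraMap k[X] K π') = _
    rw [hK_alg (hc π hπ) _ hπ'.2.1.ne_zero, hp_irr _ (hc π hπ) _ hπ'.1 hπ'.2.1]
    have := hπ'.2.2
    exact if_neg (by omega)
  have hTm : ∀ π, Pr d π → ∀ f g : K, f ≠ 0 → g ≠ 0 → T π (f * g) = T π f + T π g := by
    intro π hπ f g hf hg
    exact hK_mul (hc π hπ) _ hf hg
  have hz : IsHom (0 : k → PQ K ⧸ MM k K d) := by
    intro a b _ _; simp
  let B : K → K → PQ K ⧸ MM k K d := fun f g =>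
    _root_.hK 0 (fun π => if π.natDegree = d + 1 then T π g else 0) f
  have hBp : ∀ π, Pr d π → ∀ g, B (algebraMap k[X] K π) g = T π g := by
    intro π hπ g
    change _root_.hK 0 _ (algebraMap k[X] K π) = _
    rw [hK_alg hz _ hπ.2.1.ne_zero, hp_irr _ hz _ hπ.1 hπ.2.1]
    exact if_pos hπ.2.2
  refine ⟨B, ⟨?_, ?_⟩, ?_, ?_, ?_⟩
  · intro f g h hf hg _
    exact hK_mul hz _ hf hg
  · intro f g h hf hg _
    change _root_.hK 0 _ _ = _root_.hK 0 _ _ + _root_.hK 0 _ _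
    rw [← hK_val_add]
    apply hK_val_congr
    intro p hp1 hp2
    by_cases hd : p.natDegree = d + 1
    · simp only [if_pos hd]
      exact hTm p ⟨hp2, hp1, hd⟩ f g hf hg
    · simp only [if_neg hd, add_zero]
  · intro p h hp0 hpd
    change _root_.hK 0 _ (algebraMap k[X] K p) = _
    rw [hK_alg hz _ hp0]
    refine hp_small hz _ 0 d (by simp) (by simp) ?_ p hp0 hpd
    intro q _ _ hq
    exact if_neg (by omega)
  · intro π s r b w hπ hs hr hb hw ds dr db dw hdvd
    rw [hBp π hπ, hBp π hπ, map_mul, map_mul, hTm π hπ _ _ (am_ne hs) (am_ne hr),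
      hTm π hπ _ _ (am_ne hb) (am_ne hw), hTs π hπ s hs ds, hTs π hπ r hr dr, hTs π hπ b hb db,
      hTs π hπ w hw dw, (hτ π hπ).2 s r b w hs hr hb hw ds dr db dw hdvd]
    abel
  · intro π π' hπ hπ' hne
    have hr0 : π' - π ≠ 0 := sub_ne_zero.2 hne.symm
    have hdeg : (π' - π).natDegree ≤ d := by
      have h1 : (π' - π).degree < π'.degree := by
        apply degree_sub_lt_left
        · rw [degree_eq_natDegree hπ'.2.1.ne_zero, degree_eq_natDegree hπ.2.1.ne_zero, hπ.2.2,
            hπ'.2.2]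
        · exact hπ'.2.1.ne_zero
        · rw [hπ.1.leadingCoeff, hπ'.1.leadingCoeff]
      have := natDegree_lt_natDegree hr0 h1
      have := hπ'.2.2
      omega
    have hneg : τ π' (π - π') = τ π' (π' - π) := by
      have hh := (hτ π' hπ').1
      have h1 : τ π' (1 * 1) = _ := hh 1 1 one_ne_zero one_ne_zero (by simp)
      have h2 : τ π' (-1 * -1) = _ := hh (-1) (-1) (by simp) (by simp) (by simp)
      have e : (-1 * -1 : k[X]) = 1 * 1 := by ring
      have h3 : τ π' (-1 * (π' - π)) = _ := hh (-1) (π' - π) (by simp) hr0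
        (by rw [neg_one_mul, natDegree_neg]; exact hdeg)
      have h4 : τ π' 1 = 0 := by simpa using h1
      rw [e, mul_one, h4] at h2
      have h5 : τ π' (-1) = 0 := two_cancel h2.symm
      rw [h5, zero_add] at h3
      rw [← h3]; congr 1; ring
    rw [hBp π hπ, hBp π hπ, hBp π' hπ', hBp π' hπ', hTb π π' hπ hπ', hTb π' π hπ' hπ,
      hTs π hπ _ hr0 hdeg, hTs π' hπ' _ hr0 hdeg, hneg, rr_swap hK d π π']
    module

lemma exists_N (hK : Big K) (d : ℕ) : ∃ N : Submodule ℚ (PQ K),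
    (MM k K d ≤ N) ∧
    (∀ a1 a2 b1 b2 c1 c2 : k[X], a1 * a2 + b1 * b2 + c1 * c2 = 0 → a1 ≠ 0 → a2 ≠ 0 → b1 ≠ 0 →
      b2 ≠ 0 → c1 ≠ 0 → c2 ≠ 0 → a1.natDegree ≤ d → a2.natDegree ≤ d → b1.natDegree ≤ d →
      b2.natDegree ≤ d → c2.natDegree ≤ d → c1.natDegree = d + 1 → Irreducible c1 →
      bb K (a1 * a2) (b1 * b2) ∈ N) ∧
    (∀ a b : k[X], Irreducible a → Irreducible b → a.natDegree = d + 1 → b.natDegree = d + 1 →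
      (a + b).natDegree ≤ d → bb K a b ∈ N) ∧
    (∀ (z : K) (m : ℕ) (t : K), 1 ≤ m → IsPrimitiveRoot z m → t ≠ 0 → t ^ m ≠ 1 →
      DD z m t ∈ N → DD z m t ∈ MM k K d) := by
  obtain ⟨B, hB, hB0, hB1, hB2⟩ := exists_B (k := k) hK d
  obtain ⟨Ψ, hΨ⟩ := hB.exists_Psi
  have tri : ∀ a b c : k[X], a ≠ 0 → b ≠ 0 → c ≠ 0 → a + b + c = 0 → Ψ (bb K a b) =
      B (algebraMap k[X] K c) (algebraMap k[X] K a) - B (algebraMap k[X] K c) (algebraMap k[X] K b)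
      - B (algebraMap k[X] K b) (algebraMap k[X] K a)
      - B (algebraMap k[X] K a) (algebraMap k[X] K c)
      + B (algebraMap k[X] K a) (algebraMap k[X] K b)
      + B (algebraMap k[X] K b) (algebraMap k[X] K c) := by
    intro a b c ha hb hc h
    have ha' : algebraMap k[X] K a ≠ 0 := am_ne ha
    have hb' : algebraMap k[X] K b ≠ 0 := am_ne hb
    have hc' : algebraMap k[X] K c ≠ 0 := am_ne hc
    have hsum : algebraMap k[X] K a + algebraMap k[X] K b + algebraMap k[X] K c = 0 := by
      rw [← map_add, ← map_add, h, map_zero]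
    have e1 : 1 - -algebraMap k[X] K a / algebraMap k[X] K b =
        - algebraMap k[X] K c / algebraMap k[X] K b := by
      rw [eq_div_iff hb', sub_mul, div_mul_cancel₀ _ hb']; linear_combination hsum
    unfold bb rb
    rw [map_neg, hΨ _ (div_ne_zero (neg_ne_zero.2 ha') hb')
      (fun h1 => div_ne_zero (neg_ne_zero.2 hc') hb' (by rw [← e1, h1, sub_self])), e1]
    generalize algebraMap k[X] K a = a at *
    generalize algebraMap k[X] K b = b at *
    generalize algebraMap k[X] K c = c at *
    rw [hB.dd (neg_ne_zero.2 hc') hb' (neg_ne_zero.2 ha') hb',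
      hB.dd (neg_ne_zero.2 ha') hb' (neg_ne_zero.2 hc') hb', hB.negl hc' (neg_ne_zero.2 ha'),
      hB.negl hc' hb', hB.negr ha' hc', hB.negr ha' hb', hB.negl ha' (neg_ne_zero.2 hc'),
      hB.negr hc' ha', hB.negl ha' hb', hB.negr hc' hb']
    abel
  have prod0 : ∀ (p q : k[X]) (h : K), p ≠ 0 → q ≠ 0 → h ≠ 0 → p.natDegree ≤ d →
      q.natDegree ≤ d → B (algebraMap k[X] K (p * q)) h = 0 := by
    intro p q h hp hq hh dp dq
    rw [map_mul, hB.l _ _ _ (am_ne hp) (am_ne hq) hh, hB0 p h hp dp, hB0 q h hq dq, add_zero]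
  -- write an irreducible polynomial as constant times prime
  have mon : ∀ c : k[X], Irreducible c → c.natDegree = d + 1 → ∃ (l : k) (π : k[X]), l ≠ 0 ∧
      Pr d π ∧ c = C l * π ∧ l = c.leadingCoeff := by
    intro c hc hd
    have hl : c.leadingCoeff ≠ 0 := leadingCoeff_ne_zero.2 hc.ne_zero
    have e : c = C c.leadingCoeff * (c * C c.leadingCoeff⁻¹) := by
      rw [mul_left_comm, ← C_mul, mul_inv_cancel₀ hl, C_1, mul_one]
    refine ⟨c.leadingCoeff, c * C c.leadingCoeff⁻¹, hl, ⟨monic_mul_leadingCoeff_inv hc.ne_zero, ?_, ?_⟩,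
      e, rfl⟩
    · have hu : IsUnit (C c.leadingCoeff⁻¹) := isUnit_C.2 (inv_ne_zero hl).isUnit
      exact (irreducible_mul_isUnit hu).2 hc
    · rw [natDegree_mul_C (inv_ne_zero hl), hd]
  refine ⟨LinearMap.eqLocus Ψ (MM k K d).mkQ, ?_, ?_, ?_, ?_⟩
  · refine (Submodule.span_le (s := gens k K d)).2 ?_
    rintro z ⟨a1, a2, b1, b2, c1, c2, h, h1, h2, h3, h4, h5, h6, rfl⟩
    have hmem := mem_MM (K := K) c1 c2 h h1 h2 h3 h4 h5 h6
    rw [SetLike.mem_coe, LinearMap.mem_eqLocus]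
    rw [Submodule.mkQ_apply, (Submodule.Quotient.mk_eq_zero (MM k K d)).2 hmem]
    by_cases ha : a1 * a2 = 0
    · rw [ha, bb_zero_left, map_zero]
    by_cases hb : b1 * b2 = 0
    · rw [hb, bb_zero_right, map_zero]
    by_cases hc : c1 * c2 = 0
    · rw [bb_zero_third (by rw [← h, hc, add_zero]), map_zero]
    have := am_ne (K := K) ha
    have := am_ne (K := K) hb
    have := am_ne (K := K) hc
    have a10 := left_ne_zero_of_mul ha
    have a20 := right_ne_zero_of_mul ha
    have b10 := left_ne_zero_of_mul hb
    have b20 := right_ne_zero_of_mul hb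
    have c10 := left_ne_zero_of_mul hc
    have c20 := right_ne_zero_of_mul hc
    rw [tri _ _ _ ha hb hc h, prod0 c1 c2, prod0 c1 c2, prod0 b1 b2, prod0 a1 a2, prod0 a1 a2,
      prod0 b1 b2] <;> first | assumption | simp
  · intro a1 a2 b1 b2 c1 c2 h a10 a20 b10 b20 c10 c20 h1 h2 h3 h4 h5 h6 hirr
    obtain ⟨l, π, hl, hπ, e, -⟩ := mon c1 hirr h6
    have hl' : (C l : k[X]) ≠ 0 := by simpa using hl
    have ha := mul_ne_zero a10 a20
    have hb := mul_ne_zero b10 b20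
    have hc := mul_ne_zero c10 c20
    have ha' := am_ne (K := K) ha
    have hb' := am_ne (K := K) hb
    have hc' := am_ne (K := K) hc
    have hπ' := am_ne (K := K) hπ.2.1.ne_zero
    have hcB : ∀ g : K, g ≠ 0 → B (algebraMap k[X] K (c1 * c2)) g = B (algebraMap k[X] K π) g := by
      intro g hg
      rw [map_mul, hB.l _ _ _ (am_ne c10) (am_ne c20) hg, hB0 c2 g c20 h5, add_zero, e, map_mul,
        hB.l _ _ _ (am_ne hl') hπ' hg, hB0 (C l) g hl' (by simp), zero_add]
    rw [LinearMap.mem_eqLocus, tri _ _ _ ha hb hc h, hcB _ ha', hcB _ hb',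
      prod0 b1 b2 _ b10 b20 ha' h3 h4, prod0 a1 a2 _ a10 a20 hc' h1 h2,
      prod0 a1 a2 _ a10 a20 hb' h1 h2, prod0 b1 b2 _ b10 b20 hc' h3 h4]
    have key := hB1 π (-a1) a2 b1 b2 hπ (neg_ne_zero.2 a10) a20 b10 b20 (by simpa using h1) h2 h3 h4
      ⟨C l * c2, by rw [e] at h; linear_combination -h⟩
    have e2 : bb K (a1 * a2) (b1 * b2) = rb K (-a1 * a2) (b1 * b2) := by
      unfold bb; rw [neg_mul]
    rw [e2]
    change _ = rr d (-a1 * a2) (b1 * b2)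
    rw [key, neg_mul, map_neg, hB.negr ha' hπ']
    abel
  · intro a b hia hib hda hdb hdc
    obtain ⟨l, π, hl, hπ, e, el⟩ := mon a hia hda
    obtain ⟨l', π', hl', hπ', e', el'⟩ := mon b hib hdb
    have hll : l' = - l := by
      have h1 : (a + b).coeff (d + 1) = 0 := coeff_eq_zero_of_natDegree_lt (by omega)
      rw [coeff_add] at h1
      have h2 : a.coeff (d + 1) = l := by rw [el, ← hda]; rfl
      have h3 : b.coeff (d + 1) = l' := by rw [el', ← hdb]; rfl
      rw [h2, h3] at h1
      linear_combination h1
    have hCl : (C l : k[X]) ≠ 0 := by simpa using hl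
    have hbb : bb K a b = rb K π π' := by
      have hCl2 : (-(C l) : k[X]) ≠ 0 := neg_ne_zero.2 hCl
      rw [← rb_mul_left hCl2]
      unfold bb
      rw [e, e', hll]; simp
    by_cases hne : π = π'
    · rw [hbb]
      unfold rb
      rw [hne, div_self (am_ne hπ'.2.1.ne_zero), br_one]
      exact Submodule.zero_mem _
    have hr0 : π' - π ≠ 0 := sub_ne_zero.2 (Ne.symm hne)
    have hc : C l * (π' - π) ≠ 0 := mul_ne_zero hCl hr0
    have hsum : a + b + C l * (π' - π) = 0 := by
      rw [e, e', hll, C_neg]; ring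
    have hcd : (C l * (π' - π)).natDegree ≤ d := by
      have : C l * (π' - π) = - (a + b) := by linear_combination hsum
      rw [this, natDegree_neg]; exact hdc
    have p0 := am_ne (K := K) hπ.2.1.ne_zero
    have p0' := am_ne (K := K) hπ'.2.1.ne_zero
    have c0 := am_ne (K := K) hCl
    have r0 := am_ne (K := K) hr0
    have hCB : ∀ g, B (algebraMap k[X] K (C l)) g = 0 := fun g => hB0 _ _ hCl (by simp)
    rw [LinearMap.mem_eqLocus, tri a b _ hia.ne_zero hib.ne_zero hc hsum, hB0 _ _ hc hcd,
      hB0 _ _ hc hcd, hbb]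
    change _ = rr d π π'
    rw [hB2 π π' hπ hπ' hne, e, e', hll, C_neg, neg_mul]
    simp only [map_neg, map_mul]
    generalize algebraMap k[X] K π = p at *
    generalize algebraMap k[X] K π' = p' at *
    generalize algebraMap k[X] K (π' - π) = r at *
    generalize algebraMap k[X] K (C l) = c at *
    have cp := mul_ne_zero c0 p0
    have cp' := mul_ne_zero c0 p0'
    have cr := mul_ne_zero c0 r0
    rw [hB.negl cp' cp, hB.negr cp' cp, hB.negl cp' cr, hB.l _ _ _ c0 p0' cp, hB.l _ _ _ c0 p0 cr,
      hB.l _ _ _ c0 p0 cp', hB.l _ _ _ c0 p0' cr]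
    simp only [hCB, zero_add]
    rw [hB.r _ _ _ c0 p0 p0',
      hB.r _ _ _ c0 r0 p0, hB.r _ _ _ c0 p0' p0, hB.r _ _ _ c0 r0 p0']
    abel
  · intro z m t hm hz ht0 ht hN
    rw [LinearMap.mem_eqLocus, hB.Psi_DD hΨ hm hz t ht0 ht] at hN
    rw [Submodule.mkQ_apply] at hN
    exact (Submodule.Quotient.mk_eq_zero _).1 hN.symm
end constr


section step
open Polynomial
variable {k : Type*} [Field k] {K : Type*} [Field K] [Algebra k[X] K] [IsFractionRing k[X] K]

def cnt (d : ℕ) (p : k[X]) : ℕ := if p.natDegree = d + 1 then 1 else 0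

lemma cnt_le (d : ℕ) (p : k[X]) : cnt d p ≤ 1 := by unfold cnt; split_ifs <;> omega
lemma cnt_zero {d : ℕ} {p : k[X]} (h : p.natDegree ≤ d) : cnt d p = 0 := if_neg (by omega)
lemma cnt_one {d : ℕ} {p : k[X]} (h : p.natDegree = d + 1) : cnt d p = 1 := if_pos h
lemma cnt_neg (d : ℕ) (p : k[X]) : cnt d (-p) = cnt d p := by unfold cnt; rw [natDegree_neg]
lemma cnt_mul_C (d : ℕ) (p : k[X]) {a : k} (ha : a ≠ 0) : cnt d (p * C a) = cnt d p := by
  unfold cnt; rw [natDegree_mul_C ha]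
lemma deg_of_cnt_one {d : ℕ} {p : k[X]} (h : cnt d p = 1) : p.natDegree = d + 1 := by
  by_contra h'
  unfold cnt at h
  rw [if_neg h'] at h
  omega
lemma deg_of_cnt_zero {d : ℕ} {p : k[X]} (h : cnt d p = 0) (hp : p.natDegree ≤ d + 1) :
    p.natDegree ≤ d := by
  by_contra h'
  unfold cnt at h
  rw [if_pos (by omega)] at h
  omega

structure Tup (d n : ℕ) (a1 a2 b1 b2 c1 c2 : k[X]) : Prop where
  h : a1 * a2 + b1 * b2 + c1 * c2 = 0
  na1 : a1 ≠ 0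
  na2 : a2 ≠ 0
  nb1 : b1 ≠ 0
  nb2 : b2 ≠ 0
  nc1 : c1 ≠ 0
  nc2 : c2 ≠ 0
  da1 : a1.natDegree ≤ d + 1
  da2 : a2.natDegree ≤ d + 1
  db1 : b1.natDegree ≤ d + 1
  db2 : b2.natDegree ≤ d + 1
  dc1 : c1.natDegree ≤ d + 1
  dc2 : c2.natDegree ≤ d + 1
  c : cnt d a1 + cnt d a2 + cnt d b1 + cnt d b2 + cnt d c1 + cnt d c2 = n

lemma Tup.inA {d n : ℕ} {a1 a2 b1 b2 c1 c2 : k[X]} (t : Tup d n a1 a2 b1 b2 c1 c2) :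
    Tup d n a2 a1 b1 b2 c1 c2 :=
  ⟨by rw [← t.h]; ring, t.na2, t.na1, t.nb1, t.nb2, t.nc1, t.nc2, t.da2, t.da1, t.db1, t.db2,
    t.dc1, t.dc2, by have := t.c; omega⟩

lemma Tup.rot {d n : ℕ} {a1 a2 b1 b2 c1 c2 : k[X]} (t : Tup d n a1 a2 b1 b2 c1 c2) :
    Tup d n b1 b2 c1 c2 a1 a2 :=
  ⟨by rw [← t.h]; ring, t.nb1, t.nb2, t.nc1, t.nc2, t.na1, t.na2, t.db1, t.db2, t.dc1, t.dc2,
    t.da1, t.da2, by have := t.c; omega⟩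

lemma Tup.inB {d n : ℕ} {a1 a2 b1 b2 c1 c2 : k[X]} (t : Tup d n a1 a2 b1 b2 c1 c2) :
    Tup d n a1 a2 b2 b1 c1 c2 := t.rot.inA.rot.rot

lemma Tup.inC {d n : ℕ} {a1 a2 b1 b2 c1 c2 : k[X]} (t : Tup d n a1 a2 b1 b2 c1 c2) :
    Tup d n a1 a2 b1 b2 c2 c1 := t.rot.rot.inA.rot

lemma rot_mem (hK : Big K) (N : Submodule ℚ (PQ K)) {a b c : k[X]} (h : a + b + c = 0)
    (hm : bb K b c ∈ N) : bb K a b ∈ N := by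
  rw [bb_third hK (a := c) (b := b) (c := a) (by rw [← h]; ring), ← bb_swap hK]
  exact hm

lemma Tup.rot_mem {d n : ℕ} {a1 a2 b1 b2 c1 c2 : k[X]} (t : Tup d n a1 a2 b1 b2 c1 c2)
    (hK : Big K) {N : Submodule ℚ (PQ K)} (hm : bb K (b1 * b2) (c1 * c2) ∈ N) :
    bb K (a1 * a2) (b1 * b2) ∈ N := _root_.rot_mem hK N t.h hm

def IHyp (N : Submodule ℚ (PQ K)) (d n : ℕ) : Prop := ∀ a1 a2 b1 b2 c1 c2 : k[X],
  a1 * a2 + b1 * b2 + c1 * c2 = 0 → a1.natDegree ≤ d + 1 → a2.natDegree ≤ d + 1 →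
  b1.natDegree ≤ d + 1 → b2.natDegree ≤ d + 1 → c1.natDegree ≤ d + 1 → c2.natDegree ≤ d + 1 →
  cnt d a1 + cnt d a2 + cnt d b1 + cnt d b2 + cnt d c1 + cnt d c2 < n →
  bb K (a1 * a2) (b1 * b2) ∈ N

lemma cancel_step {N : Submodule ℚ (PQ K)} {d n : ℕ} (ih : IHyp (k := k) N d n)
    {a1 a2 b1 b2 c1 c2 f g : k[X]} (t : Tup d n a1 a2 b1 b2 c1 c2) (hf : 1 ≤ f.natDegree)
    (hc : c1 = f * g) (hc1 : c1.natDegree = d + 1) (ha : f ∣ a1) (hb : f ∣ b1) :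
    bb K (a1 * a2) (b1 * b2) ∈ N := by
  obtain ⟨a, rfl⟩ := ha
  obtain ⟨b, rfl⟩ := hb
  have hf0 : f ≠ 0 := left_ne_zero_of_mul t.na1
  have a0 := right_ne_zero_of_mul t.na1
  have b0 := right_ne_zero_of_mul t.nb1
  have g0 : g ≠ 0 := right_ne_zero_of_mul (hc ▸ t.nc1)
  have da := t.da1
  have db := t.db1
  have dc := t.dc1
  rw [natDegree_mul hf0 a0] at da
  rw [natDegree_mul hf0 b0] at db
  rw [hc, natDegree_mul hf0 g0] at dc
  rw [mul_assoc, mul_assoc, bb_mul_left hf0]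
  refine ih _ _ _ _ g c2 ?_ (by omega) t.da2 (by omega) t.db2 (by omega) t.dc2 ?_
  · apply mul_left_cancel₀ hf0
    have := t.h
    rw [hc] at this
    linear_combination this
  · have := t.c
    have e1 := cnt_one hc1
    have e2 : cnt d a = 0 := cnt_zero (by omega)
    have e3 : cnt d b = 0 := cnt_zero (by omega)
    have e4 : cnt d g = 0 := cnt_zero (by omega)
    omega

lemma lemA (hK : Big K) {N : Submodule ℚ (PQ K)} {d n : ℕ} (ih : IHyp (k := k) N d n)
    {a1 a2 b1 b2 c1 c2 : k[X]} (t : Tup d n a1 a2 b1 b2 c1 c2)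
    (hc1 : c1.natDegree = d + 1) (hirr : ¬ Irreducible c1) :
    bb K (a1 * a2) (b1 * b2) ∈ N := by
  have hnu : ¬ IsUnit c1 := not_isUnit_of_natDegree_pos _ (by omega)
  obtain ⟨f, hf, g, hc⟩ := WfDvdMonoid.exists_irreducible_factor hnu t.nc1
  have hf0 := hf.ne_zero
  have g0 : g ≠ 0 := right_ne_zero_of_mul (hc ▸ t.nc1)
  have hgu : ¬ IsUnit g := fun hu => hirr (by rw [hc]; exact (irreducible_mul_isUnit hu).2 hf)
  have hfd : 1 ≤ f.natDegree := hf.natDegree_pos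
  have hgd : 1 ≤ g.natDegree := by
    by_contra h
    apply hgu
    rw [isUnit_iff_degree_eq_zero, degree_eq_natDegree g0]
    have : g.natDegree = 0 := by omega
    rw [this]; rfl
  have hfg : f.natDegree + g.natDegree = d + 1 := by rw [← natDegree_mul hf0 g0, ← hc, hc1]
  have hp := hf.prime
  have hsum := t.h
  by_cases hfb : f ∣ b1 * b2
  · have hfa : f ∣ a1 * a2 := by
      obtain ⟨w, hw⟩ := hfb
      rw [hc] at hsum
      exact ⟨-w - g * c2, by linear_combination hsum - hw⟩
    rcases hp.dvd_or_dvd hfa with ha | ha <;> rcases hp.dvd_or_dvd hfb with hb | hb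
    · exact cancel_step ih t hfd hc hc1 ha hb
    · rw [mul_comm b1]; exact cancel_step ih t.inB hfd hc hc1 ha hb
    · rw [mul_comm a1]; exact cancel_step ih t.inA hfd hc hc1 ha hb
    · rw [mul_comm a1, mul_comm b1]; exact cancel_step ih t.inA.inB hfd hc hc1 ha hb
  have hfa1 : ¬ f ∣ a1 := by
    rintro ⟨w, hw⟩
    apply hfb
    exact ⟨-w * a2 - g * c2, by rw [hc, hw] at hsum; linear_combination hsum⟩
  have hfb1 : ¬ f ∣ b1 := fun h => hfb (h.mul_right _)
  obtain ⟨r, s, hrs⟩ := (hf.coprime_iff_not_dvd.2 hfa1)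
  set u := (-(s * b1)) % f with hu
  have hud : u.natDegree < f.natDegree := natDegree_mod_lt _ (by omega)
  have hudvd : f * ((-(s * b1)) / f) + u = -(s * b1) := EuclideanDomain.div_add_mod _ _
  obtain ⟨h1, e1⟩ : f ∣ a1 * u + b1 := by
    refine ⟨b1 * r - a1 * ((-(s * b1)) / f), ?_⟩
    linear_combination a1 * hudvd - b1 * hrs
  have hu0 : u ≠ 0 := fun h0 => by
    rw [h0] at e1
    exact hfb1 ⟨h1, by linear_combination e1⟩
  obtain ⟨h2, e2⟩ : f ∣ b2 * u - a2 := by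
    refine (hp.dvd_or_dvd ?_).resolve_left hfa1
    refine ⟨b2 * h1 + g * c2, ?_⟩
    rw [hc] at hsum
    linear_combination b2 * e1 - hsum
  have da1 := t.da1
  have da2 := t.da2
  have db1 := t.db1
  have db2 := t.db2
  have dc2 := t.dc2
  have hcn := t.c
  have d1 : h1.natDegree ≤ d := by
    refine deg_quot (d := d) rfl hf0 (m := d) ?_
    rw [← e1]
    refine (natDegree_add_le _ _).trans (max_le (natDegree_mul_le.trans ?_) ?_) <;> omega
  have d2 : h2.natDegree ≤ d := by
    refine deg_quot (d := d) rfl hf0 (m := d) ?_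
    rw [← e2]
    refine (natDegree_sub_le _ _).trans (max_le (natDegree_mul_le.trans ?_) ?_) <;> omega
  have dgu : (g * u).natDegree ≤ d := natDegree_mul_le.trans (by omega)
  have z1 := cnt_one hc1
  have z2 : cnt d u = 0 := cnt_zero (by omega)
  have z3 : cnt d (1 : k[X]) = 0 := cnt_zero (by simp)
  have z4 : cnt d h1 = 0 := cnt_zero d1
  have z5 : cnt d h2 = 0 := cnt_zero d2
  have z6 : cnt d f = 0 := cnt_zero (by omega)
  have z7 : cnt d g = 0 := cnt_zero (by omega)
  have z8 : cnt d (g * u) = 0 := cnt_zero dgu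
  have z9 : (1 : k[X]).natDegree = 0 := natDegree_one
  have n1 := cnt_neg d f
  have n2 := cnt_neg d b2
  have n3 := cnt_neg d a1
  rw [bb_move hK hsum t.na1 t.na2 t.nb1 t.nb2 hu0 one_ne_zero]
  have T1 : bb K (a1 * u) (b1 * 1) ∈ N :=
    ih _ _ _ _ (-f) h1 (by linear_combination e1) (by omega) (by omega) (by omega) (by omega)
      (by rw [natDegree_neg]; omega) (by omega) (by omega)
  have T2 : bb K (-b2 * u) (a2 * 1) ∈ N :=
    ih _ _ _ _ f h2 (by linear_combination -e2) (by rw [natDegree_neg]; omega) (by omega)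
      (by omega) (by omega) (by omega) (by omega) (by omega)
  have T3 : bb K (c1 * c2 * u) (a2 * (a1 * u + b1 * 1)) ∈ N := by
    have q1 : c1 * c2 * u = f * ((g * u) * c2) := by rw [hc]; ring
    have q2 : a2 * (a1 * u + b1 * 1) = f * (a2 * h1) := by linear_combination a2 * e1
    rw [q1, q2, bb_mul_left hf0]
    refine ih _ _ _ _ b1 h2 ?_ (by omega) (by omega) (by omega) (by omega)
      (by omega) (by omega) (by omega)
    apply mul_left_cancel₀ hf0
    rw [hc] at hsum
    linear_combination u * hsum - a2 * e1 - b1 * e2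
  have T4 : bb K (c1 * c2 * 1) (b2 * (a1 * u + b1 * 1)) ∈ N := by
    have q1 : c1 * c2 * 1 = f * (g * c2) := by rw [hc]; ring
    have q2 : b2 * (a1 * u + b1 * 1) = f * (b2 * h1) := by linear_combination b2 * e1
    rw [q1, q2, bb_mul_left hf0]
    refine ih _ _ _ _ (-a1) h2 ?_ (by omega) (by omega) (by omega) (by omega)
      (by rw [natDegree_neg]; omega) (by omega) (by omega)
    apply mul_left_cancel₀ hf0
    rw [hc] at hsum
    linear_combination hsum - b2 * e1 + a1 * e2
  exact N.sub_mem (N.add_mem (N.sub_mem T1 T2) T3) T4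

lemma lemB (hK : Big K) {N : Submodule ℚ (PQ K)} {d n : ℕ} (ih : IHyp (k := k) N d n)
    (hNS : ∀ a b : k[X], Irreducible a → Irreducible b → a.natDegree = d + 1 →
      b.natDegree = d + 1 → (a + b).natDegree ≤ d → bb K a b ∈ N)
    {a1 a2 b1 b2 c1 c2 : k[X]} (t : Tup d n a1 a2 b1 b2 c1 c2)
    (ha : a1.natDegree = d + 1) (hb : b1.natDegree = d + 1) (hia : Irreducible a1)
    (hib : Irreducible b1) (heq : cnt d a2 = cnt d b2) :
    bb K (a1 * a2) (b1 * b2) ∈ N := by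
  have la : a1.leadingCoeff ≠ 0 := leadingCoeff_ne_zero.2 t.na1
  have lb : b1.leadingCoeff ≠ 0 := leadingCoeff_ne_zero.2 t.nb1
  obtain ⟨x, hx⟩ : ∃ x, x = b1.leadingCoeff := ⟨_, rfl⟩
  obtain ⟨y, hy⟩ : ∃ y, y = -a1.leadingCoeff := ⟨_, rfl⟩
  have x0 : x ≠ 0 := hx ▸ lb
  have y0 : y ≠ 0 := hy ▸ neg_ne_zero.2 la
  have hu0 : (C x : k[X]) ≠ 0 := by simpa using x0
  have hv0 : (C y : k[X]) ≠ 0 := by simpa using y0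
  have hsum := t.h
  have da2 := t.da2
  have db2 := t.db2
  have dc1 := t.dc1
  have dc2 := t.dc2
  have hcn := t.c
  have dP : (a1 * C x + b1 * C y).natDegree ≤ d := by
    rw [natDegree_le_iff_coeff_eq_zero]
    intro j hj
    rw [coeff_add, coeff_mul_C, coeff_mul_C]
    rcases Nat.lt_or_ge (d + 1) j with h | h
    · rw [coeff_eq_zero_of_natDegree_lt (by omega), coeff_eq_zero_of_natDegree_lt (by omega)]
      simp
    · obtain rfl : j = d + 1 := by omega
      rw [hx, hy, leadingCoeff, leadingCoeff, ha, hb]; ring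
  have dux : (C x : k[X]).natDegree = 0 := natDegree_C _
  have duy : (C y : k[X]).natDegree = 0 := natDegree_C _
  have dq : (b2 * C x - a2 * C y).natDegree ≤ max b2.natDegree a2.natDegree := by
    refine (natDegree_sub_le _ _).trans ?_
    rw [natDegree_mul_C x0, natDegree_mul_C y0]
  have dq1 : (b2 * C x - a2 * C y).natDegree ≤ d + 1 := dq.trans (max_le db2 da2)
  have cq : cnt d (b2 * C x - a2 * C y) ≤ cnt d a2 := by
    rcases Nat.eq_zero_or_pos (cnt d a2) with h | h
    · have e1 := deg_of_cnt_zero h da2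
      have e2 := deg_of_cnt_zero (heq ▸ h) db2
      rw [cnt_zero (dq.trans (max_le e2 e1))]; omega
    · have := cnt_le d (b2 * C x - a2 * C y); omega
  have z1 := cnt_one ha
  have z2 := cnt_one hb
  have z3 : cnt d (C x) = 0 := cnt_zero (by omega)
  have z4 : cnt d (C y) = 0 := cnt_zero (by omega)
  have z5 := cnt_zero dP
  have z6 : cnt d (1 : k[X]) = 0 := cnt_zero (by simp)
  have z9 : (1 : k[X]).natDegree = 0 := natDegree_one
  have l1 := cnt_le d a2
  have n2 := cnt_neg d b2
  have n3 := cnt_neg d a1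
  have w1 := cnt_mul_C d c2 x0
  have w2 := cnt_mul_C d c2 y0
  have w3 := natDegree_mul_C (p := c2) x0
  have w4 := natDegree_mul_C (p := c2) y0
  rw [bb_move hK hsum t.na1 t.na2 t.nb1 t.nb2 hu0 hv0]
  have T1 : bb K (a1 * C x) (b1 * C y) ∈ N := by
    refine hNS _ _ ((irreducible_mul_isUnit (isUnit_C.2 x0.isUnit)).2 hia)
      ((irreducible_mul_isUnit (isUnit_C.2 y0.isUnit)).2 hib) ?_ ?_ dP
    · rw [natDegree_mul_C x0, ha]
    · rw [natDegree_mul_C y0, hb]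
  have T2 : bb K (-b2 * C x) (a2 * C y) ∈ N :=
    ih _ _ _ _ (b2 * C x - a2 * C y) 1 (by ring) (by rw [natDegree_neg]; omega) (by omega)
      (by omega) (by omega) (by omega) (by omega) (by omega)
  have T3 : bb K (c1 * c2 * C x) (a2 * (a1 * C x + b1 * C y)) ∈ N := by
    rw [mul_assoc c1]
    refine ih _ _ _ _ b1 (b2 * C x - a2 * C y) ?_ (by omega) (by omega) (by omega) (by omega)
      (by omega) (by omega) (by omega)
    linear_combination C x * hsum
  have T4 : bb K (c1 * c2 * C y) (b2 * (a1 * C x + b1 * C y)) ∈ N := by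
    rw [mul_assoc c1]
    refine ih _ _ _ _ (-a1) (b2 * C x - a2 * C y) ?_ (by omega) (by omega) (by omega) (by omega)
      (by rw [natDegree_neg]; omega) (by omega) (by omega)
    linear_combination C y * hsum
  exact N.sub_mem (N.add_mem (N.sub_mem T1 T2) T3) T4
end step


section step2
open Polynomial
variable {k : Type*} [Field k] {K : Type*} [Field K] [Algebra k[X] K] [IsFractionRing k[X] K]

lemma lemA2 (hK : Big K) {N : Submodule ℚ (PQ K)} {d n : ℕ} (ih : IHyp (k := k) N d n)
    {a1 a2 b1 b2 c1 c2 : k[X]} (t : Tup d n a1 a2 b1 b2 c1 c2)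
    (h : ¬ ((c1.natDegree = d + 1 → Irreducible c1) ∧ (c2.natDegree = d + 1 → Irreducible c2))) :
    bb K (a1 * a2) (b1 * b2) ∈ N := by
  rw [not_and_or] at h
  rcases h with h | h
  · push Not at h
    exact lemA hK ih t h.1 h.2
  · push Not at h
    exact lemA hK ih t.inC h.1 h.2

lemma lemB2 (hK : Big K) {N : Submodule ℚ (PQ K)} {d n : ℕ} (ih : IHyp (k := k) N d n)
    (hNS : ∀ a b : k[X], Irreducible a → Irreducible b → a.natDegree = d + 1 →
      b.natDegree = d + 1 → (a + b).natDegree ≤ d → bb K a b ∈ N)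
    {a1 a2 b1 b2 c1 c2 : k[X]} (t : Tup d n a1 a2 b1 b2 c1 c2)
    (ia : (a1.natDegree = d + 1 → Irreducible a1) ∧ (a2.natDegree = d + 1 → Irreducible a2))
    (ib : (b1.natDegree = d + 1 → Irreducible b1) ∧ (b2.natDegree = d + 1 → Irreducible b2))
    (heq : cnt d a1 + cnt d a2 = cnt d b1 + cnt d b2) (hpos : 0 < cnt d a1 + cnt d a2) :
    bb K (a1 * a2) (b1 * b2) ∈ N := by
  have l1 := cnt_le d a1
  have l2 := cnt_le d a2
  have l3 := cnt_le d b1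
  have l4 := cnt_le d b2
  have ha : cnt d a1 = 1 ∨ cnt d a2 = 1 := by omega
  have hb : cnt d b1 = 1 ∨ cnt d b2 = 1 := by omega
  rcases ha with ha | ha <;> rcases hb with hb | hb <;>
    have ha' := deg_of_cnt_one ha <;> have hb' := deg_of_cnt_one hb
  · exact lemB hK ih hNS t ha' hb' (ia.1 ha') (ib.1 hb') (by omega)
  · rw [mul_comm b1]
    exact lemB hK ih hNS t.inB ha' hb' (ia.1 ha') (ib.2 hb') (by omega)
  · rw [mul_comm a1]
    exact lemB hK ih hNS t.inA ha' hb' (ia.2 ha') (ib.1 hb') (by omega)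
  · rw [mul_comm a1, mul_comm b1]
    exact lemB hK ih hNS t.inA.inB ha' hb' (ia.2 ha') (ib.2 hb') (by omega)

lemma Tup.no2 {d n : ℕ} {a1 a2 b1 b2 c1 c2 : k[X]} (t : Tup d n a1 a2 b1 b2 c1 c2)
    (ha : cnt d a1 + cnt d a2 = 2) (hb : cnt d b1 + cnt d b2 ≤ 1) (hc : cnt d c1 + cnt d c2 ≤ 1) :
    False := by
  have l1 := cnt_le d a1
  have l2 := cnt_le d a2
  have h1 := deg_of_cnt_one (show cnt d a1 = 1 by omega)
  have h2 := deg_of_cnt_one (show cnt d a2 = 1 by omega)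
  have aux : ∀ p q : k[X], p.natDegree ≤ d + 1 → q.natDegree ≤ d + 1 → cnt d p + cnt d q ≤ 1 →
      (p * q).natDegree ≤ 2 * d + 1 := by
    intro p q hp hq hpq
    refine natDegree_mul_le.trans ?_
    by_contra h
    have e1 := cnt_one (show p.natDegree = d + 1 by omega)
    have e2 := cnt_one (show q.natDegree = d + 1 by omega)
    omega
  have e : a1 * a2 = -(b1 * b2 + c1 * c2) := by linear_combination t.h
  have h3 : (a1 * a2).natDegree ≤ 2 * d + 1 := by
    rw [e, natDegree_neg]
    exact (natDegree_add_le _ _).trans (max_le (aux _ _ t.db1 t.db2 hb) (aux _ _ t.dc1 t.dc2 hc))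
  rw [natDegree_mul t.na1 t.na2] at h3
  omega

lemma MM_step (hK : Big K) (d : ℕ) (N : Submodule ℚ (PQ K)) (hM : MM k K d ≤ N)
    (hN1 : ∀ a1 a2 b1 b2 c1 c2 : k[X], a1 * a2 + b1 * b2 + c1 * c2 = 0 → a1 ≠ 0 → a2 ≠ 0 →
      b1 ≠ 0 →
      b2 ≠ 0 → c1 ≠ 0 → c2 ≠ 0 → a1.natDegree ≤ d → a2.natDegree ≤ d → b1.natDegree ≤ d →
      b2.natDegree ≤ d → c2.natDegree ≤ d → c1.natDegree = d + 1 → Irreducible c1 →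
      bb K (a1 * a2) (b1 * b2) ∈ N)
    (hNS : ∀ a b : k[X], Irreducible a → Irreducible b → a.natDegree = d + 1 →
      b.natDegree = d + 1 → (a + b).natDegree ≤ d → bb K a b ∈ N) :
    MM k K (d + 1) ≤ N := by
  have hN1' : ∀ {n : ℕ} {a1 a2 b1 b2 c1 c2 : k[X]}, Tup d n a1 a2 b1 b2 c1 c2 →
      (c1.natDegree = d + 1 → Irreducible c1) → cnt d a1 + cnt d a2 = 0 →
      cnt d b1 + cnt d b2 = 0 → cnt d c1 = 1 → cnt d c2 = 0 → bb K (a1 * a2) (b1 * b2) ∈ N := by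
    intro n a1 a2 b1 b2 c1 c2 t hi ha hb hc1 hc2
    have h1 := deg_of_cnt_one hc1
    exact hN1 _ _ _ _ c1 c2 t.h t.na1 t.na2 t.nb1 t.nb2 t.nc1 t.nc2
      (deg_of_cnt_zero (by omega) t.da1) (deg_of_cnt_zero (by omega) t.da2)
      (deg_of_cnt_zero (by omega) t.db1) (deg_of_cnt_zero (by omega) t.db2)
      (deg_of_cnt_zero (by omega) t.dc2) h1 (hi h1)
  have hN1'' : ∀ {n : ℕ} {a1 a2 b1 b2 c1 c2 : k[X]}, Tup d n a1 a2 b1 b2 c1 c2 →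
      (c1.natDegree = d + 1 → Irreducible c1) ∧ (c2.natDegree = d + 1 → Irreducible c2) →
      cnt d a1 + cnt d a2 = 0 →
      cnt d b1 + cnt d b2 = 0 → cnt d c1 + cnt d c2 = 1 → bb K (a1 * a2) (b1 * b2) ∈ N := by
    intro n a1 a2 b1 b2 c1 c2 t hi ha hb hc
    by_cases h : cnt d c1 = 1
    · exact hN1' t hi.1 ha hb h (by omega)
    · have l := cnt_le d c1
      exact hN1' t.inC hi.2 ha hb (by omega) (by omega)
  have main : ∀ n, IHyp (k := k) N d n := by
    intro n
    induction n with
    | zero => intro a1 a2 b1 b2 c1 c2 _ _ _ _ _ _ _ h; omega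
    | succ n ih =>
      intro a1 a2 b1 b2 c1 c2 h h1 h2 h3 h4 h5 h6 hn
      rcases Nat.lt_or_ge (cnt d a1 + cnt d a2 + cnt d b1 + cnt d b2 + cnt d c1 + cnt d c2) n with
        hl | hl
      · exact ih _ _ _ _ c1 c2 h h1 h2 h3 h4 h5 h6 hl
      by_cases ha : a1 * a2 = 0
      · rw [ha, bb_zero_left]; exact N.zero_mem
      by_cases hb : b1 * b2 = 0
      · rw [hb, bb_zero_right]; exact N.zero_mem
      by_cases hc : c1 * c2 = 0
      · rw [bb_zero_third (by rw [← h, hc, add_zero])]; exact N.zero_mem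
      have t : Tup d n a1 a2 b1 b2 c1 c2 := ⟨h, left_ne_zero_of_mul ha, right_ne_zero_of_mul ha,
        left_ne_zero_of_mul hb, right_ne_zero_of_mul hb, left_ne_zero_of_mul hc,
        right_ne_zero_of_mul hc, h1, h2, h3, h4, h5, h6, by omega⟩
      by_cases ic : (c1.natDegree = d + 1 → Irreducible c1) ∧ (c2.natDegree = d + 1 → Irreducible c2)
      swap
      · exact lemA2 hK ih t ic
      by_cases ia : (a1.natDegree = d + 1 → Irreducible a1) ∧ (a2.natDegree = d + 1 → Irreducible a2)
      swap
      · exact t.rot_mem hK (lemA2 hK ih t.rot ia)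
      by_cases ib : (b1.natDegree = d + 1 → Irreducible b1) ∧ (b2.natDegree = d + 1 → Irreducible b2)
      swap
      · exact t.rot_mem hK (t.rot.rot_mem hK (lemA2 hK ih t.rot.rot ib))
      have q1 := cnt_le d a1
      have q2 := cnt_le d a2
      have q3 := cnt_le d b1
      have q4 := cnt_le d b2
      have q5 := cnt_le d c1
      have q6 := cnt_le d c2
      by_cases e1 : cnt d a1 + cnt d a2 = cnt d b1 + cnt d b2 ∧ 0 < cnt d a1 + cnt d a2
      · exact lemB2 hK ih hNS t ia ib e1.1 e1.2
      by_cases e2 : cnt d b1 + cnt d b2 = cnt d c1 + cnt d c2 ∧ 0 < cnt d b1 + cnt d b2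
      · exact t.rot_mem hK (lemB2 hK ih hNS t.rot ib ic e2.1 e2.2)
      by_cases e3 : cnt d c1 + cnt d c2 = cnt d a1 + cnt d a2 ∧ 0 < cnt d c1 + cnt d c2
      · exact t.rot_mem hK (t.rot.rot_mem hK (lemB2 hK ih hNS t.rot.rot ic ia e3.1 e3.2))
      have f1 : cnt d a1 + cnt d a2 ≠ 2 := fun e => t.no2 e (by omega) (by omega)
      have f2 : cnt d b1 + cnt d b2 ≠ 2 := fun e => t.rot.no2 e (by omega) (by omega)
      have f3 : cnt d c1 + cnt d c2 ≠ 2 := fun e => t.rot.rot.no2 e (by omega) (by omega)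
      by_cases g1 : cnt d a1 + cnt d a2 = 1
      · exact t.rot_mem hK (hN1'' t.rot ia (by omega) (by omega) g1)
      by_cases g2 : cnt d b1 + cnt d b2 = 1
      · exact t.rot_mem hK (t.rot.rot_mem hK (hN1'' t.rot.rot ib (by omega) (by omega) g2))
      by_cases g3 : cnt d c1 + cnt d c2 = 1
      · exact hN1'' t ic (by omega) (by omega) g3
      exact hM (mem_MM c1 c2 h (deg_of_cnt_zero (by omega) h1) (deg_of_cnt_zero (by omega) h2)
        (deg_of_cnt_zero (by omega) h3) (deg_of_cnt_zero (by omega) h4)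
        (deg_of_cnt_zero (by omega) h5) (deg_of_cnt_zero (by omega) h6))
  refine (Submodule.span_le (s := gens k K (d + 1))).2 ?_
  rintro z ⟨a1, a2, b1, b2, c1, c2, h, h1, h2, h3, h4, h5, h6, rfl⟩
  exact main _ a1 a2 b1 b2 c1 c2 h h1 h2 h3 h4 h5 h6 (Nat.lt_succ_self _)

lemma DD_down (hK : Big K) {z t : K} {m : ℕ} (hm : 1 ≤ m) (hz : IsPrimitiveRoot z m) (ht0 : t ≠ 0)
    (ht : t ^ m ≠ 1) : ∀ d : ℕ, DD z m t ∈ MM k K d → DD z m t ∈ MM k K 0 := by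
  intro d
  induction d with
  | zero => exact id
  | succ d ih =>
    intro h
    obtain ⟨N, hM, hN1, hNS, hD⟩ := exists_N (k := k) hK d
    exact ih (hD z m t hm hz ht0 ht (MM_step hK d N hM hN1 hNS h))
end step2


section final
open Polynomial

lemma Big.of_two {L : Type*} [Field L] {p q : L} (p0 : p ≠ 0) (p1 : p ≠ 1) (q0 : q ≠ 0)
    (q1 : q ≠ 1) (h : p ≠ q) : Big L := by
  intro b
  by_cases hb : p * b = 1
  · refine ⟨q, q0, q1, fun hq => h ?_⟩
    have b0 : b ≠ 0 := right_ne_zero_of_mul_eq_one hb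
    exact mul_right_cancel₀ b0 (hb.trans hq.symm)
  · exact ⟨p, p0, p1, hb⟩

variable {k : Type*} [Field k] {K : Type*} [Field K] [Algebra k[X] K] [IsFractionRing k[X] K]

lemma bigK (k : Type*) [Field k] (K : Type*) [Field K] [Algebra k[X] K] [IsFractionRing k[X] K] :
    Big K := by
  have hinj : Function.Injective (algebraMap k[X] K) := IsFractionRing.injective k[X] K
  have hX : (X : k[X]) ≠ X ^ 2 := by
    intro h
    have := congrArg natDegree h
    simp at this
  have hX1 : (X : k[X]) ≠ 1 := by
    intro h
    have := congrArg natDegree h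
    simp at this
  have hX2 : (X ^ 2 : k[X]) ≠ 1 := by
    intro h
    have := congrArg natDegree h
    simp at this
  refine Big.of_two (p := algebraMap k[X] K X) (q := algebraMap k[X] K (X ^ 2)) (am_ne X_ne_zero)
    ?_ (am_ne (pow_ne_zero 2 X_ne_zero)) ?_ (hinj.ne hX)
  · rw [← map_one (algebraMap k[X] K)]; exact hinj.ne hX1
  · rw [← map_one (algebraMap k[X] K)]; exact hinj.ne hX2

lemma br_mem_MM {m : ℕ} (p : k[X]) (h : p.natDegree ≤ m) :
    br (algebraMap k[X] K p) ∈ MM k K m := by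
  have e : br (algebraMap k[X] K p) = bb K (-p * 1) (1 * 1) := by
    unfold bb rb; simp
  rw [e]
  refine mem_MM (p - 1) 1 (by ring) (by rw [natDegree_neg]; exact h) (by simp) (by simp) (by simp)
    ((natDegree_sub_le _ _).trans (max_le h (by simp))) (by simp)

lemma DD_mem_MM (m : ℕ) (hm : 1 ≤ m) (ζ : k) :
    DD (algebraMap k[X] K (C ζ)) m (algebraMap k[X] K X) ∈ MM k K m := by
  unfold DD
  refine Submodule.sub_mem _ (Submodule.smul_of_tower_mem _ m (Submodule.sum_mem _ fun i _ => ?_)) ?_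
  · rw [← map_pow, ← map_mul]
    refine br_mem_MM _ ?_
    rw [← C_pow]
    exact (natDegree_C_mul_le _ _).trans (natDegree_X_le.trans hm)
  · rw [← map_pow]
    exact br_mem_MM _ (natDegree_X_pow_le m)

lemma sp_agree {φ ψ : PQ K →ₗ[ℚ] PQ k} {x y : k} (hφ : ∀ f a, (evalPlc K x).V f a → φ (br f) = br a)
    (hψ : ∀ f a, (evalPlc K y).V f a → ψ (br f) = br a) : MM k K 0 ≤ LinearMap.eqLocus φ ψ := by
  refine (Submodule.span_le (s := gens k K 0)).2 ?_
  rintro z ⟨a1, a2, b1, b2, c1, c2, h, h1, h2, h3, h4, h5, h6, rfl⟩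
  obtain ⟨α, hα⟩ : ∃ α, a1 * a2 = C α := by
    rw [eq_C_of_natDegree_le_zero h1, eq_C_of_natDegree_le_zero h2, ← C_mul]; exact ⟨_, rfl⟩
  obtain ⟨β, hβ⟩ : ∃ β, b1 * b2 = C β := by
    rw [eq_C_of_natDegree_le_zero h3, eq_C_of_natDegree_le_zero h4, ← C_mul]; exact ⟨_, rfl⟩
  rw [SetLike.mem_coe, LinearMap.mem_eqLocus, hα, hβ]
  by_cases hb : β = 0
  · rw [hb, C_0, bb_zero_right, map_zero, map_zero]
  have hb' : algebraMap k[X] K (C β) ≠ 0 := am_ne (by simpa using hb)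
  have key : ∀ c : k, (evalPlc K c).V (algebraMap k[X] K (-C α) / algebraMap k[X] K (C β))
      (-α / β) := by
    intro c
    refine ⟨-C α, C β, by simpa using hb, (div_mul_cancel₀ _ hb').symm, ?_⟩
    simp only [eval_neg, eval_C]
    rw [div_mul_cancel₀ _ hb]
  unfold bb rb
  rw [hφ _ _ (key x), hψ _ _ (key y)]

lemma sp_DD {φ : PQ K →ₗ[ℚ] PQ k} {x : k} (hφ : ∀ f a, (evalPlc K x).V f a → φ (br f) = br a)
    (m : ℕ) (ζ : k) :
    φ (DD (algebraMap k[X] K (C ζ)) m (algebraMap k[X] K X)) = DD ζ m x := by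
  have key : ∀ p : k[X], φ (br (algebraMap k[X] K p)) = br (p.eval x) := by
    intro p
    exact hφ _ _ ⟨p, 1, by simp, by simp, by simp⟩
  unfold DD
  rw [map_sub, map_nsmul, map_sum, ← map_pow, key, eval_pow, eval_X]
  congr 2
  refine Finset.sum_congr rfl fun i _ => ?_
  rw [← map_pow, ← map_mul, key]
  simp

lemma DD_inv (hk : Big k) {m : ℕ} {ζ : k} (hζ : ζ ^ m = 1) (h0 : ζ ≠ 0) (x : k) :
    DD ζ m x⁻¹ = - DD ζ m x := by
  unfold DD
  have e : ∑ i ∈ Finset.Icc 1 m, br (ζ ^ i * x⁻¹) = - ∑ i ∈ Finset.Icc 1 m, br (ζ ^ i * x) := by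
    rw [← Finset.sum_neg_distrib]
    refine Finset.sum_nbij' (fun i => if i = m then m else m - i)
      (fun i => if i = m then m else m - i) ?_ ?_ ?_ ?_ ?_
    · intro i hi; rw [Finset.mem_Icc] at *; split_ifs <;> omega
    · intro i hi; rw [Finset.mem_Icc] at *; split_ifs <;> omega
    · intro i hi; rw [Finset.mem_Icc] at *; split_ifs <;> omega
    · intro i hi; rw [Finset.mem_Icc] at *; split_ifs <;> omega
    · intro i hi
      rw [Finset.mem_Icc] at hi
      rw [← br_inv hk, mul_inv]
      congr 2
      split_ifs with h
      · rw [h, hζ, inv_one]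
      · apply eq_inv_of_mul_eq_one_left
        rw [← pow_add, ← hζ]
        congr 1; omega
  rw [e, inv_pow, br_inv hk]
  module

lemma DD_zero {m : ℕ} (hm : 1 ≤ m) {ζ : k} (hζ : IsPrimitiveRoot ζ m) {x : k}
    (hx0 : x ≠ 0) (hxm : x ^ m ≠ 1) : DD ζ m x = 0 := by
  rcases Nat.lt_or_ge 1 m with h1 | h1
  swap
  · obtain rfl : m = 1 := by omega
    have : ζ = 1 := by simpa using hζ.pow_eq_one
    simp [DD, this]
  have z0 : ζ ≠ 0 := hζ.ne_zero (by omega)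
  have hk : Big k := by
    refine Big.of_two (p := ζ) (q := x) z0 (hζ.ne_one h1) hx0 ?_ ?_
    · rintro rfl; simp at hxm
    · rintro rfl; exact hxm hζ.pow_eq_one
  let K := FractionRing k[X]
  have hinj : Function.Injective (algebraMap k[X] K) := IsFractionRing.injective k[X] K
  have hK : Big K := bigK k K
  have hz : IsPrimitiveRoot (algebraMap k[X] K (C ζ)) m :=
    (hζ.map_of_injective (f := (C : k →+* k[X])) C_injective).map_of_injective hinj
  have hX : (algebraMap k[X] K X) ^ m ≠ 1 := by
    rw [← map_pow, ← map_one (algebraMap k[X] K)]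
    refine hinj.ne fun h => ?_
    have := congrArg natDegree h
    simp at this
    omega
  have hD : DD (algebraMap k[X] K (C ζ)) m (algebraMap k[X] K X) ∈ MM k K 0 :=
    DD_down hK hm hz (am_ne X_ne_zero) hX m (DD_mem_MM m hm ζ)
  obtain ⟨φ, hφ⟩ := (evalPlc K x).exists_sp hk
  obtain ⟨ψ, hψ⟩ := (evalPlc K x⁻¹).exists_sp hk
  have h2 := sp_agree hφ hψ hD
  rw [LinearMap.mem_eqLocus, sp_DD hφ, sp_DD hψ, DD_inv hk hζ.pow_eq_one z0] at h2
  apply two_cancel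
  nth_rewrite 2 [h2]
  simp

end final

/-- **Distribution relation in the pre-Bloch group:** if `ζ` is a primitive `m`-th root
of unity then `m · Σ_{i=1}^{m} [ζ^i x] = [x^m]` in `ℚ ⊗_ℤ P(F)`, for `x ∈ Fˣ` with
`x^m ≠ 1`. -/
theorem preBloch_distribution_relation (m : ℕ) (hm : 1 ≤ m) (ζ : F)
    (hζ : IsPrimitiveRoot ζ m) (x : F) (hx0 : x ≠ 0) (hxm : x ^ m ≠ 1) :
    m • (∑ i ∈ Finset.Icc 1 m, preBlochClassQ F (ζ ^ i * x)
        (mul_ne_zero (pow_ne_zero i (hζ.ne_zero (by omega))) hx0)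
        (by
          intro h
          apply hxm
          have h2 : (ζ ^ i * x) ^ m = 1 := by rw [h, one_pow]
          rwa [mul_pow, ← pow_mul, mul_comm i m, pow_mul, hζ.pow_eq_one, one_pow,
            one_mul] at h2)) =
      preBlochClassQ F (x ^ m) (pow_ne_zero m hx0) hxm := by
  have h := DD_zero hm hζ hx0 hxm
  unfold DD at h
  simp only [br_eq]
  exact sub_eq_zero.1 h
end

section
/- Let F be a field, and write Fˣ additively as a ℤ-module; let ∧²(Fˣ) denote its second exterior power over ℤ. For x, y ∈ F∖{0,1} with x ≠ y, set z = (1−x⁻¹)/(1−y⁻¹) and w = (1−x)/(1−y) (these lie in F∖{0,1}). Then x ∧ (1−x) − y ∧ (1−y) + (y/x) ∧ (1 − y/x) − z ∧ (1−z) + w ∧ (1−w) = 0 in ∧²(Fˣ). Consequently the map [x] ↦ x ∧ (1−x) descends to a well-defined homomorphism λ : P(F) → ∧²(Fˣ). -/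
open scoped TensorProduct

variable (F : Type*) [Field F]

/-- The wedge `a ∧ b` of two nonzero elements of `F`, viewed in the second exterior
power (over `ℤ`) of the additivized unit group `Fˣ`. -/
noncomputable def wedgeD (a b : F) (ha : a ≠ 0) (hb : b ≠ 0) :
    ⋀[ℤ]^2 (Additive Fˣ) :=
  ⟨ExteriorAlgebra.ιMulti ℤ 2
      ![Additive.ofMul (Units.mk0 a ha), Additive.ofMul (Units.mk0 b hb)],
    ExteriorAlgebra.ιMulti_range ℤ 2 (Set.mem_range_self _)⟩

section Aux

variable {F}

lemma aux_one_sub_ne {x : F} (hx1 : x ≠ 1) : 1 - x ≠ 0 :=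
  sub_ne_zero.mpr (Ne.symm hx1)

lemma aux_inv_ne_one {x : F} (hx1 : x ≠ 1) : x⁻¹ ≠ 1 :=
  fun h => hx1 (inv_eq_one.mp h)

lemma aux_div_ne_one {x y : F} (hx0 : x ≠ 0) (hxy : x ≠ y) : y / x ≠ 1 :=
  fun h => hxy (((div_eq_one_iff_eq hx0).mp h).symm)

lemma aux_z_ne_one {x y : F} (hy1 : y ≠ 1) (hxy : x ≠ y) :
    (1 - x⁻¹) / (1 - y⁻¹) ≠ 1 := by
  intro h
  have h' := (div_eq_one_iff_eq (aux_one_sub_ne (aux_inv_ne_one hy1))).mp h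
  have hinv : x⁻¹ = y⁻¹ := by
    rw [← sub_sub_cancel 1 x⁻¹, h', sub_sub_cancel]
  exact hxy (inv_injective hinv)

lemma aux_w_ne_one {x y : F} (hy1 : y ≠ 1) (hxy : x ≠ y) :
    (1 - x) / (1 - y) ≠ 1 := by
  intro h
  have h' := (div_eq_one_iff_eq (aux_one_sub_ne hy1)).mp h
  have : x = y := by rw [← sub_sub_cancel 1 x, h', sub_sub_cancel]
  exact hxy this

end Aux

section Helpers

variable {F}

lemma wedgeD_val (a b : F) (ha : a ≠ 0) (hb : b ≠ 0) :
    ((wedgeD F a b ha hb : ⋀[ℤ]^2 (Additive Fˣ)) : ExteriorAlgebra ℤ (Additive Fˣ)) =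
      ExteriorAlgebra.ι ℤ (Additive.ofMul (Units.mk0 a ha)) *
        ExteriorAlgebra.ι ℤ (Additive.ofMul (Units.mk0 b hb)) := by
  simp [wedgeD, ExteriorAlgebra.ιMulti_apply]

lemma five_alg {M : Type*} [AddCommGroup M] (X Y A B D : M) :
    ExteriorAlgebra.ι ℤ X * ExteriorAlgebra.ι ℤ A - ExteriorAlgebra.ι ℤ Y * ExteriorAlgebra.ι ℤ B
      + ExteriorAlgebra.ι ℤ (Y - X) * ExteriorAlgebra.ι ℤ (D - X)
      - ExteriorAlgebra.ι ℤ (A + Y - B - X) * ExteriorAlgebra.ι ℤ (D - B - X)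
      + ExteriorAlgebra.ι ℤ (A - B) * ExteriorAlgebra.ι ℤ (D - B) = 0 := by
  have h1 := ExteriorAlgebra.ι_add_mul_swap (R := ℤ) X A
  have h2 := ExteriorAlgebra.ι_add_mul_swap (R := ℤ) B X
  have h3 := ExteriorAlgebra.ι_sq_zero (R := ℤ) X
  have h4 := ExteriorAlgebra.ι_sq_zero (R := ℤ) B
  simp only [map_sub, map_add]
  generalize ExteriorAlgebra.ι ℤ X = x at *
  generalize ExteriorAlgebra.ι ℤ Y = y at *
  generalize ExteriorAlgebra.ι ℤ A = a at *
  generalize ExteriorAlgebra.ι ℤ B = b at *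
  generalize ExteriorAlgebra.ι ℤ D = d at *
  have e : x * a - y * b + (y - x) * (d - x) - (a + y - b - x) * (d - b - x) + (a - b) * (d - b)
      = (x * a + a * x) - (b * x + x * b) + x * x - x * x - b * b + b * b := by noncomm_ring
  rw [e, h1, h2]
  abel

lemma five_wedge (x y : F) (hx0 : x ≠ 0) (hx1 : x ≠ 1) (hy0 : y ≠ 0) (hy1 : y ≠ 1)
        (hxy : x ≠ y) :
      wedgeD F x (1 - x) hx0 (aux_one_sub_ne hx1)
        - wedgeD F y (1 - y) hy0 (aux_one_sub_ne hy1)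
        + wedgeD F (y / x) (1 - y / x) (div_ne_zero hy0 hx0)
            (aux_one_sub_ne (aux_div_ne_one hx0 hxy))
        - wedgeD F ((1 - x⁻¹) / (1 - y⁻¹)) (1 - (1 - x⁻¹) / (1 - y⁻¹))
            (div_ne_zero (aux_one_sub_ne (aux_inv_ne_one hx1))
              (aux_one_sub_ne (aux_inv_ne_one hy1)))
            (aux_one_sub_ne (aux_z_ne_one hy1 hxy))
        + wedgeD F ((1 - x) / (1 - y)) (1 - (1 - x) / (1 - y))
            (div_ne_zero (aux_one_sub_ne hx1) (aux_one_sub_ne hy1))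
            (aux_one_sub_ne (aux_w_ne_one hy1 hxy)) = 0 := by
  have hA := aux_one_sub_ne hx1
  have hB := aux_one_sub_ne hy1
  have hB' : y - 1 ≠ 0 := sub_ne_zero.mpr hy1
  have hI := aux_one_sub_ne (aux_inv_ne_one hy1)
  have hD : x - y ≠ 0 := sub_ne_zero.mpr hxy
  have hz : (1 - x⁻¹) / (1 - y⁻¹) = (1 - x) * y / (1 - y) / x := by
    rw [div_eq_iff hI]
    field_simp
    ring
  have key := five_alg (Additive.ofMul (Units.mk0 x hx0)) (Additive.ofMul (Units.mk0 y hy0))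
    (Additive.ofMul (Units.mk0 _ hA)) (Additive.ofMul (Units.mk0 _ hB))
    (Additive.ofMul (Units.mk0 _ hD))
  simp only [← ofMul_div, ← ofMul_mul] at key
  apply Subtype.ext
  push_cast
  simp only [wedgeD_val]
  have e1 : Units.mk0 (y / x) (div_ne_zero hy0 hx0) = Units.mk0 y hy0 / Units.mk0 x hx0 := by
    ext; simp
  have e2 : Units.mk0 (1 - y / x) (aux_one_sub_ne (aux_div_ne_one hx0 hxy))
      = Units.mk0 _ hD / Units.mk0 x hx0 := by
    ext
    simp only [Units.val_mk0, Units.val_div_eq_div_val]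
    field_simp
  have e3 : Units.mk0 ((1 - x⁻¹) / (1 - y⁻¹)) (div_ne_zero (aux_one_sub_ne (aux_inv_ne_one hx1))
              (aux_one_sub_ne (aux_inv_ne_one hy1)))
      = Units.mk0 _ hA * Units.mk0 y hy0 / Units.mk0 _ hB / Units.mk0 x hx0 := by
    ext
    simp only [Units.val_mk0, Units.val_div_eq_div_val, Units.val_mul, hz]
  have e4 : Units.mk0 (1 - (1 - x⁻¹) / (1 - y⁻¹)) (aux_one_sub_ne (aux_z_ne_one hy1 hxy))
      = Units.mk0 _ hD / Units.mk0 _ hB / Units.mk0 x hx0 := by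
    ext
    simp only [Units.val_mk0, Units.val_div_eq_div_val, hz]
    field_simp
    ring
  have e5 : Units.mk0 ((1 - x) / (1 - y)) (div_ne_zero hA hB)
      = Units.mk0 _ hA / Units.mk0 _ hB := by
    ext; simp
  have e6 : Units.mk0 (1 - (1 - x) / (1 - y)) (aux_one_sub_ne (aux_w_ne_one hy1 hxy))
      = Units.mk0 _ hD / Units.mk0 _ hB := by
    ext
    simp only [Units.val_mk0, Units.val_div_eq_div_val]
    field_simp
    ring
  rw [e1, e2, e3, e4, e5, e6]
  exact key

end Helpers

/-- **Well-definedness of `λ : P(F) → ∧²(Fˣ)`, `[x] ↦ x ∧ (1-x)`:** the five-term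
combination of wedges vanishes in `∧²(Fˣ)`, and consequently `[x] ↦ x ∧ (1-x)`
descends to a homomorphism `λ : P(F) → ∧²(Fˣ)`. -/
theorem fiveTerm_wedge_relation :
    (∀ (x y : F) (hx0 : x ≠ 0) (hx1 : x ≠ 1) (hy0 : y ≠ 0) (hy1 : y ≠ 1)
        (hxy : x ≠ y),
      wedgeD F x (1 - x) hx0 (aux_one_sub_ne hx1)
        - wedgeD F y (1 - y) hy0 (aux_one_sub_ne hy1)
        + wedgeD F (y / x) (1 - y / x) (div_ne_zero hy0 hx0)
            (aux_one_sub_ne (aux_div_ne_one hx0 hxy))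
        - wedgeD F ((1 - x⁻¹) / (1 - y⁻¹)) (1 - (1 - x⁻¹) / (1 - y⁻¹))
            (div_ne_zero (aux_one_sub_ne (aux_inv_ne_one hx1))
              (aux_one_sub_ne (aux_inv_ne_one hy1)))
            (aux_one_sub_ne (aux_z_ne_one hy1 hxy))
        + wedgeD F ((1 - x) / (1 - y)) (1 - (1 - x) / (1 - y))
            (div_ne_zero (aux_one_sub_ne hx1) (aux_one_sub_ne hy1))
            (aux_one_sub_ne (aux_w_ne_one hy1 hxy)) = 0) ∧
    ∃ lam : PreBloch F →+ ⋀[ℤ]^2 (Additive Fˣ),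
      ∀ (x : F) (h0 : x ≠ 0) (h1 : x ≠ 1),
        lam (QuotientAddGroup.mk (FreeAbelianGroup.of ⟨x, h0, h1⟩)) =
          wedgeD F x (1 - x) h0 (aux_one_sub_ne h1) := by
  refine ⟨fun x y hx0 hx1 hy0 hy1 hxy => five_wedge x y hx0 hx1 hy0 hy1 hxy, ?_⟩
  refine ⟨QuotientAddGroup.lift _ (FreeAbelianGroup.lift
    (fun t : {t : F // t ≠ 0 ∧ t ≠ 1} =>
      wedgeD F t.1 (1 - t.1) t.2.1 (aux_one_sub_ne t.2.2))) ?_, ?_⟩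
  · rw [AddSubgroup.closure_le]
    rintro z ⟨⟨x, hx0, hx1⟩, ⟨y, hy0, hy1⟩, hne, h1, h2, h3, rfl⟩
    have hxy : x ≠ y := fun h => hne (Subtype.ext h)
    simp only [SetLike.mem_coe, AddMonoidHom.mem_ker, map_add, map_sub,
      FreeAbelianGroup.lift_apply_of]
    exact five_wedge x y hx0 hx1 hy0 hy1 hxy
  · intro x h0 h1
    simp
end

section
/- Let F be a field and let ζ₁, ζ₂ ∈ Fˣ be roots of unity with ζ₁^{m₁} = 1, ζ₂^{m₂} = 1 (m₁, m₂ ≥ 1), ζ₁ ≠ 1, ζ₂ ≠ 1 and ζ₁ ≠ ζ₂. Then in the Milnor K-group K₂^M(F) one has m₁·m₂·{ (1 − ζ₁⁻¹ζ₂)/(1 − ζ₂), (1 − ζ₂⁻¹ζ₁)/(1 − ζ₁) } = 0. -/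
open scoped TensorProduct

variable (F : Type*) [Field F]

/-- The Steinberg elements `a ⊗ (1-a)` (for `a ∈ F ∖ {0,1}`) in `Fˣ ⊗_ℤ Fˣ`. -/
def steinbergSet : Set (TensorProduct ℤ (Additive Fˣ) (Additive Fˣ)) :=
  { z | ∃ (a : F) (h0 : a ≠ 0) (h1 : a ≠ 1),
      z = Additive.ofMul (Units.mk0 a h0) ⊗ₜ[ℤ]
            Additive.ofMul (Units.mk0 (1 - a) (sub_ne_zero.mpr (Ne.symm h1))) }

/-- The Milnor K-group `K₂ᴹ(F)`: the quotient of `Fˣ ⊗_ℤ Fˣ` by the subgroup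
generated by the Steinberg elements `a ⊗ (1-a)`. -/
abbrev MilnorK2 := TensorProduct ℤ (Additive Fˣ) (Additive Fˣ) ⧸
  AddSubgroup.closure (steinbergSet F)

/-- The symbol `{a, b}` in `K₂ᴹ(F)`, for nonzero `a, b ∈ F`. -/
noncomputable def milnorSymbol (a b : F) (ha : a ≠ 0) (hb : b ≠ 0) : MilnorK2 F :=
  QuotientAddGroup.mk
    (Additive.ofMul (Units.mk0 a ha) ⊗ₜ[ℤ] Additive.ofMul (Units.mk0 b hb))

section Aux

variable {F}

lemma aux_num₁ {ζ₁ ζ₂ : Fˣ} (hne : ζ₁ ≠ ζ₂) : 1 - ((ζ₁ : F))⁻¹ * (ζ₂ : F) ≠ 0 := by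
  rw [sub_ne_zero]
  intro h
  apply hne
  apply Units.ext
  have h' : (ζ₁ : F) * 1 = (ζ₁ : F) * ((ζ₁ : F)⁻¹ * (ζ₂ : F)) := by rw [← h]
  rwa [mul_one, ← mul_assoc, mul_inv_cancel₀ (Units.ne_zero ζ₁), one_mul] at h'

lemma aux_den {ζ : Fˣ} (hζ : ζ ≠ 1) : 1 - (ζ : F) ≠ 0 := by
  rw [sub_ne_zero]
  intro h
  exact hζ (Units.ext (by rw [← h, Units.val_one]))

end Aux

section Aux2

variable {F}

noncomputable def symU (a b : Fˣ) : MilnorK2 F :=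
  QuotientAddGroup.mk (Additive.ofMul a ⊗ₜ[ℤ] Additive.ofMul b)

lemma symU_mul_left (a b c : Fˣ) : symU (a * b) c = symU a c + symU b c := by
  unfold symU
  rw [ofMul_mul, TensorProduct.add_tmul]
  rfl

lemma symU_mul_right (a b c : Fˣ) : symU a (b * c) = symU a b + symU a c := by
  unfold symU
  rw [ofMul_mul, TensorProduct.tmul_add]
  rfl

lemma symU_one_left (c : Fˣ) : symU 1 c = 0 := by
  have h := symU_mul_left 1 1 c
  rw [mul_one] at h
  exact left_eq_add.mp h

lemma symU_one_right (c : Fˣ) : symU c 1 = 0 := by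
  have h := symU_mul_right c 1 1
  rw [mul_one] at h
  exact left_eq_add.mp h

lemma symU_inv_left (a c : Fˣ) : symU a⁻¹ c = - symU a c := by
  have h := symU_mul_left a a⁻¹ c
  rw [mul_inv_cancel, symU_one_left] at h
  exact eq_neg_of_add_eq_zero_right h.symm

lemma symU_inv_right (a c : Fˣ) : symU a c⁻¹ = - symU a c := by
  have h := symU_mul_right a c c⁻¹
  rw [mul_inv_cancel, symU_one_right] at h
  exact eq_neg_of_add_eq_zero_right h.symm

lemma symU_pow_left (a c : Fˣ) (n : ℕ) : symU (a ^ n) c = n • symU a c := by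
  induction n with
  | zero => simp [symU_one_left]
  | succ k ih => rw [pow_succ, symU_mul_left, ih, succ_nsmul]

lemma symU_pow_right (a c : Fˣ) (n : ℕ) : symU a (c ^ n) = n • symU a c := by
  induction n with
  | zero => simp [symU_one_right]
  | succ k ih => rw [pow_succ, symU_mul_right, ih, succ_nsmul]

lemma symU_steinberg (a b : Fˣ) (h : (a : F) + b = 1) : symU a b = 0 := by
  refine (QuotientAddGroup.eq_zero_iff _).mpr (AddSubgroup.subset_closure ?_)
  refine ⟨a, a.ne_zero, ?_, ?_⟩
  · intro h1
    rw [h1] at h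
    exact b.ne_zero (by simpa using h)
  · congr 2
    · ext; simp
    · ext; simp [← h]

lemma symU_key (m₁ m₂ : ℕ) (x y p q : Fˣ) (hx : x ^ m₁ = 1) (hy : y ^ m₂ = 1)
    (h : (p : F) + q = 1) : (m₁ * m₂) • symU (p * x)⁻¹ (q * y)⁻¹ = 0 := by
  have e1 : ∀ c, m₁ • symU x c = 0 := fun c => by
    rw [← symU_pow_left, hx, symU_one_left]
  have e2 : ∀ c, m₂ • symU c y = 0 := fun c => by
    rw [← symU_pow_right, hy, symU_one_right]
  rw [symU_inv_left, symU_inv_right, neg_neg, symU_mul_left, symU_mul_right, symU_steinberg p q h,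
    zero_add, nsmul_add, mul_nsmul', e2, mul_comm, mul_nsmul', e1]
  simp

end Aux2

/-- **Vanishing of the torsion symbol in `K₂ᴹ(F)`:** for roots of unity
`ζ₁, ζ₂ ∈ Fˣ` with `ζ₁^{m₁} = ζ₂^{m₂} = 1`, `ζ₁ ≠ 1`, `ζ₂ ≠ 1` and `ζ₁ ≠ ζ₂`, one has
`m₁·m₂·{ (1 - ζ₁⁻¹ζ₂)/(1 - ζ₂), (1 - ζ₂⁻¹ζ₁)/(1 - ζ₁) } = 0`. -/
theorem milnorK2_torsion_symbol (m₁ m₂ : ℕ) (hm₁ : 1 ≤ m₁) (hm₂ : 1 ≤ m₂)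
    (ζ₁ ζ₂ : Fˣ) (hζ₁ : ζ₁ ^ m₁ = 1) (hζ₂ : ζ₂ ^ m₂ = 1)
    (h₁ : ζ₁ ≠ 1) (h₂ : ζ₂ ≠ 1) (hne : ζ₁ ≠ ζ₂) :
    (m₁ * m₂) • milnorSymbol F
        ((1 - ((ζ₁ : F))⁻¹ * (ζ₂ : F)) / (1 - (ζ₂ : F)))
        ((1 - ((ζ₂ : F))⁻¹ * (ζ₁ : F)) / (1 - (ζ₁ : F)))
        (div_ne_zero (aux_num₁ hne) (aux_den h₂))
        (div_ne_zero (aux_num₁ (Ne.symm hne)) (aux_den h₁)) = 0 := by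
  have hd : (ζ₁ : F) - ζ₂ ≠ 0 := sub_ne_zero.mpr fun h => hne (Units.ext h)
  have hu := aux_den h₁
  have hv := aux_den h₂
  have hd' : (ζ₂ : F) - ζ₁ ≠ 0 := sub_ne_zero.mpr fun h => hne (Units.ext h.symm)
  have key := symU_key m₁ m₂ ζ₁ ζ₂ (Units.mk0 ((1 - (ζ₂ : F)) / (ζ₁ - ζ₂)) (div_ne_zero hv hd))
    (Units.mk0 ((1 - (ζ₁ : F)) / (ζ₂ - ζ₁)) (div_ne_zero hu hd')) hζ₁ hζ₂ (by
      simp only [Units.val_mk0]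
      rw [← neg_sub (ζ₁ : F) ζ₂, div_neg, ← sub_eq_add_neg, ← sub_div, div_eq_one_iff_eq hd]
      ring)
  have hx := ζ₁.ne_zero
  have hy := ζ₂.ne_zero
  rw [← key]
  unfold milnorSymbol symU
  congr 4
  · ext
    simp only [Units.val_mk0, Units.val_inv_eq_inv_val, Units.val_mul]
    field_simp
  · ext
    simp only [Units.val_mk0, Units.val_inv_eq_inv_val, Units.val_mul]
    field_simp
end

section
/- Let R be a discrete valuation ring with uniformizer π, let R[[s]] be the ring of formal power series over R, and let B be the localization of R[[s]] at the multiplicative submonoid generated by π·s (so B = R[[s]][π⁻¹, s⁻¹]). Then the map R[[s]]ˣ × ℤ × ℤ → Bˣ sending (v, a, b) to v·π^a·s^b is an isomorphism of groups; in particular every unit of B can be written uniquely in this form. -/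
open PowerSeries

theorem aux_C_prime (R : Type*) [CommRing R] [IsDomain R] (π : R) (h : Prime π) :
    Prime (PowerSeries.C π : PowerSeries R) := by
  have key : ∀ f : PowerSeries R, PowerSeries.C π ∣ f ↔
      PowerSeries.map (Ideal.Quotient.mk (Ideal.span {π})) f = 0 := by
    intro f
    constructor
    · rintro ⟨g, rfl⟩
      have : Ideal.Quotient.mk (Ideal.span {π}) π = 0 :=
        Ideal.Quotient.eq_zero_iff_mem.2 (Ideal.mem_span_singleton_self π)
      simp [this]
    · intro hf
      have h1 : ∀ n, π ∣ PowerSeries.coeff n f := by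
        intro n
        have := congrArg (PowerSeries.coeff n) hf
        rw [PowerSeries.coeff_map, map_zero, Ideal.Quotient.eq_zero_iff_mem,
          Ideal.mem_span_singleton] at this
        exact this
      choose g hg using h1
      refine ⟨PowerSeries.mk g, ?_⟩
      ext n
      rw [PowerSeries.coeff_C_mul, PowerSeries.coeff_mk, hg]
  have hp : (Ideal.span {π}).IsPrime := (Ideal.span_singleton_prime h.ne_zero).2 h
  refine ⟨?_, ?_, ?_⟩
  · intro h0
    apply h.ne_zero
    simpa using congrArg PowerSeries.constantCoeff h0
  · intro hu
    apply h.not_unit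
    simpa using hu.map (PowerSeries.constantCoeff (R := R))
  · intro f g
    rw [key, key, key, map_mul]
    exact mul_eq_zero.1

theorem aux_inj {A : Type*} [CommRing A] [IsDomain A] (p q : A) (hp : Prime p)
    (hpq : ¬ p ∣ q) (v : Aˣ) (a b : ℤ)
    (h : (v : A) * p ^ a.toNat * q ^ b.toNat = p ^ (-a).toNat * q ^ (-b).toNat) : a = 0 := by
  have hn : ∀ n : ℕ, ¬ p ∣ q ^ n := fun n hd => hpq (hp.dvd_of_dvd_pow hd)
  rcases lt_trichotomy a 0 with ha | ha | ha
  · exfalso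
    have h1 : a.toNat = 0 := by omega
    have h2 : (-a).toNat ≠ 0 := by omega
    rw [h1, pow_zero, mul_one] at h
    have : p ∣ (v : A) * q ^ b.toNat := by
      rw [h]; exact Dvd.dvd.mul_right (dvd_pow_self p h2) _
    exact hn _ ((Units.dvd_mul_left).1 this)
  · exact ha
  · exfalso
    have h1 : (-a).toNat = 0 := by omega
    have h2 : a.toNat ≠ 0 := by omega
    rw [h1, pow_zero, one_mul] at h
    apply hn (-b).toNat
    rw [← h]
    exact Dvd.dvd.mul_right (Dvd.dvd.mul_left (dvd_pow_self p h2) _) _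

theorem aux_zpow {B : Type*} [CommGroup B] (x : B) (a : ℤ) :
    x ^ a * x ^ (-a).toNat = x ^ a.toNat := by
  rw [← zpow_natCast, ← zpow_natCast, ← zpow_add]
  congr 1
  omega

theorem aux_main {A : Type*} [CommRing A] [IsDomain A] (p q : A) (hp : Prime p) (hq : Prime q)
    (hpq : ¬ p ∣ q) (hqp : ¬ q ∣ p) (B : Type*) [CommRing B] [Algebra A B]
    [IsLocalization (Submonoid.powers (p * q)) B] :
    ∃ (hπu : IsUnit (algebraMap A B p)) (hsu : IsUnit (algebraMap A B q))
      (e : Aˣ × Multiplicative ℤ × Multiplicative ℤ ≃* Bˣ),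
      ∀ (v : Aˣ) (a b : ℤ),
        e (v, Multiplicative.ofAdd a, Multiplicative.ofAdd b) =
          Units.map (algebraMap A B : A →* _) v * hπu.unit ^ a * hsu.unit ^ b := by
  have hu : IsUnit (algebraMap A B p * algebraMap A B q) := by
    rw [← map_mul]
    exact IsLocalization.map_units B
      (⟨p * q, Submonoid.mem_powers _⟩ : Submonoid.powers (p * q))
  have hP := isUnit_of_mul_isUnit_left hu
  have hQ := isUnit_of_mul_isUnit_right hu
  have hinj : Function.Injective (algebraMap A B) :=
    IsLocalization.injective B
      (powers_le_nonZeroDivisors_of_noZeroDivisors (mul_ne_zero hp.ne_zero hq.ne_zero))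
  let F : Aˣ × Multiplicative ℤ × Multiplicative ℤ →* Bˣ :=
    (Units.map (algebraMap A B : A →* B)).coprod
      ((zpowersHom _ hP.unit).coprod (zpowersHom _ hQ.unit))
  have hF : ∀ (v : Aˣ) (a b : ℤ), F (v, Multiplicative.ofAdd a, Multiplicative.ofAdd b) =
      Units.map (algebraMap A B : A →* _) v * hP.unit ^ a * hQ.unit ^ b := by
    intro v a b
    simp [F, mul_assoc]
  refine ⟨hP, hQ, MulEquiv.ofBijective F ⟨?_, ?_⟩, hF⟩
  · rw [injective_iff_map_eq_one]
    rintro ⟨v, a, b⟩ h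
    obtain ⟨a, rfl⟩ := Multiplicative.ofAdd.surjective a
    obtain ⟨b, rfl⟩ := Multiplicative.ofAdd.surjective b
    rw [hF] at h
    have h1 : Units.map (algebraMap A B : A →* _) v * hP.unit ^ a.toNat * hQ.unit ^ b.toNat
        = hP.unit ^ (-a).toNat * hQ.unit ^ (-b).toNat := by
      rw [← aux_zpow hP.unit a, ← aux_zpow hQ.unit b]
      calc _ = (Units.map (algebraMap A B : A →* _) v * hP.unit ^ a * hQ.unit ^ b) *
            (hP.unit ^ (-a).toNat * hQ.unit ^ (-b).toNat) := by
              simp only [mul_assoc, mul_left_comm, mul_comm]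
        _ = _ := by rw [h, one_mul]
    have h2 : (v : A) * p ^ a.toNat * q ^ b.toNat = p ^ (-a).toNat * q ^ (-b).toNat := by
      apply hinj
      have := congrArg (Units.val) h1
      simpa using this
    have ha : a = 0 := aux_inj p q hp hpq v a b h2
    have hb : b = 0 := aux_inj q p hq hqp v b a (by
      rw [mul_right_comm, h2, mul_comm])
    subst ha hb
    have hv : v = 1 := by
      ext
      simpa using h2
    subst hv
    rfl
  · intro u
    obtain ⟨⟨f, s, n, hs⟩, hf⟩ := IsLocalization.surj (Submonoid.powers (p * q)) (u : B)
    obtain ⟨⟨g, t, m, ht⟩, hg⟩ := IsLocalization.surj (Submonoid.powers (p * q)) ((u⁻¹ : Bˣ) : B)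
    simp only at hf hg hs ht
    subst hs ht
    have hfg : f * g = q ^ (n + m) * p ^ (n + m) := by
      apply hinj
      rw [map_mul, ← hf, ← hg]
      calc _ = ((u : B) * ((u⁻¹ : Bˣ) : B)) *
            (algebraMap A B ((p * q) ^ n) * algebraMap A B ((p * q) ^ m)) := by ring
        _ = _ := by rw [Units.mul_inv, one_mul, ← map_mul]; congr 1; ring
    obtain ⟨i, j, b, c, -, hbc, rfl, -⟩ := mul_eq_mul_prime_pow hp hfg
    obtain ⟨k, l, b', c', -, hbc', rfl, -⟩ :=
      mul_eq_mul_prime_pow hq (show b * c = 1 * q ^ (n + m) by rw [one_mul, hbc])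
    obtain ⟨v, rfl⟩ : IsUnit b' := IsUnit.of_mul_eq_one c' hbc'.symm
    refine ⟨(v, Multiplicative.ofAdd ((i : ℤ) - n), Multiplicative.ofAdd ((k : ℤ) - n)), ?_⟩
    rw [hF]
    have : u * (hP.unit * hQ.unit) ^ n =
        Units.map (algebraMap A B : A →* _) v * hQ.unit ^ k * hP.unit ^ i := by
      ext
      simpa using hf
    rw [eq_mul_inv_of_mul_eq this, zpow_sub, zpow_sub, mul_pow, mul_inv]
    simp only [zpow_natCast, mul_assoc, mul_left_comm, mul_comm]

/-- **Units of `R[[s]][π⁻¹, s⁻¹]`:** for a discrete valuation ring `R` with uniformizer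
`π`, every unit of the localization `B` of `R[[s]]` away from `π·s` is uniquely of the
form `v·π^a·s^b` with `v ∈ R[[s]]ˣ` and `a, b ∈ ℤ`; more precisely `(v, a, b) ↦ v·π^a·s^b`
is an isomorphism of groups `R[[s]]ˣ × ℤ × ℤ ≃ Bˣ`. -/
theorem units_of_localized_power_series (R : Type*) [CommRing R] [IsDomain R]
    [IsDiscreteValuationRing R] (π : R)
    (hπ : IsLocalRing.maximalIdeal R = Ideal.span {π}) :
    ∃ (hπu : IsUnit (algebraMap (PowerSeries R)
          (Localization (Submonoid.powers ((PowerSeries.C π) * PowerSeries.X)))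
          (PowerSeries.C π)))
      (hsu : IsUnit (algebraMap (PowerSeries R)
          (Localization (Submonoid.powers ((PowerSeries.C π) * PowerSeries.X)))
          PowerSeries.X))
      (e : (PowerSeries R)ˣ × Multiplicative ℤ × Multiplicative ℤ ≃*
          (Localization (Submonoid.powers ((PowerSeries.C π) * PowerSeries.X)))ˣ),
      ∀ (v : (PowerSeries R)ˣ) (a b : ℤ),
        e (v, Multiplicative.ofAdd a, Multiplicative.ofAdd b) =
          Units.map (algebraMap (PowerSeries R)
              (Localization (Submonoid.powers ((PowerSeries.C π) * PowerSeries.X)))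
              : PowerSeries R →* _) v * hπu.unit ^ a * hsu.unit ^ b := by
  have hirr : Irreducible π := (IsDiscreteValuationRing.irreducible_iff_uniformizer π).2 hπ
  have hp : Prime π := hirr.prime
  refine aux_main (PowerSeries.C π) PowerSeries.X (aux_C_prime R π hp) PowerSeries.X_prime
    ?_ ?_ _
  · rintro ⟨g, hg⟩
    apply hp.not_unit
    have := congrArg (PowerSeries.coeff 1) hg
    rw [PowerSeries.coeff_one_X, PowerSeries.coeff_C_mul] at this
    exact IsUnit.of_mul_eq_one _ this.symm
  · rw [PowerSeries.X_dvd_iff, PowerSeries.constantCoeff_C]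
    exact hp.ne_zero
end

section
/- Let O be a discrete valuation ring with maximal ideal 𝔪 and normalized additive valuation v, and let p be a prime number lying in 𝔪 with e := v(p) < ∞. Let k ≥ 0 and l ≥ 0 be integers with e ≤ l + 1. Then for every x ∈ 𝔪^{l+1} one has (1 + x)^{p^k} ∈ 1 + 𝔪^{ek+l+1}; equivalently, (1 + 𝔪^{l+1})^{p^k} ⊆ 1 + 𝔪^{ek+l+1}. -/
/-- **p-th power map on principal units:** let `O` be a discrete valuation ring with
maximal ideal `𝔪`, and let `p` be a prime lying in `𝔪` with normalized valuation
`e = v(p)` (expressed by `p ∈ 𝔪^e`, `p ∉ 𝔪^{e+1}`).  If `e ≤ l + 1`, then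
`(1 + 𝔪^{l+1})^{p^k} ⊆ 1 + 𝔪^{ek+l+1}`: for every `x ∈ 𝔪^{l+1}` one has
`(1 + x)^{p^k} ∈ 1 + 𝔪^{ek+l+1}`. -/
theorem pow_p_pow_principal_units (O : Type*) [CommRing O] [IsDomain O]
    [IsDiscreteValuationRing O] (p : ℕ) (hp : p.Prime)
    (hpm : (p : O) ∈ IsLocalRing.maximalIdeal O)
    (e : ℕ) (hpe : (p : O) ∈ IsLocalRing.maximalIdeal O ^ e)
    (hpe' : (p : O) ∉ IsLocalRing.maximalIdeal O ^ (e + 1))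
    (k l : ℕ) (hel : e ≤ l + 1) :
    ∀ x ∈ IsLocalRing.maximalIdeal O ^ (l + 1),
      (1 + x) ^ p ^ k - 1 ∈ IsLocalRing.maximalIdeal O ^ (e * k + l + 1) := by
  intro x hx
  induction k with
  | zero => simpa using hx
  | succ k ih =>
    set u : O := (1 + x) ^ p ^ k with hu
    have h1 : (1 + x) ^ p ^ (k + 1) - 1 = (∑ i ∈ Finset.range p, u ^ i) * (u - 1) := by
      rw [geom_sum_mul, hu, ← pow_mul, pow_succ]
    have hue : u - 1 ∈ IsLocalRing.maximalIdeal O ^ e :=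
      Ideal.pow_le_pow_right (by omega) ih
    have h2 : (∑ i ∈ Finset.range p, u ^ i) = (∑ i ∈ Finset.range p, (u ^ i - 1)) + (p : O) := by
      simp
    have h3 : (∑ i ∈ Finset.range p, u ^ i) ∈ IsLocalRing.maximalIdeal O ^ e := by
      rw [h2]
      refine Ideal.add_mem _ (Ideal.sum_mem _ fun i _ => ?_) hpe
      exact Ideal.mem_of_dvd _ (by simpa using sub_dvd_pow_sub_pow u 1 i) hue
    rw [h1, show e * (k + 1) + l + 1 = e + (e * k + l + 1) by ring, pow_add]
    exact Ideal.mul_mem_mul h3 ih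
end

section
/- Let O be a complete discrete valuation ring of characteristic 0 with maximal ideal 𝔪, normalized valuation v, and residue field of characteristic p; set e := v(p). Let k ≥ 0 and l ≥ 1 be integers with l > e/(p−1), and set i := ek + l. Then every element of 1 + 𝔪^{i} is a p^k-th power of an element of 1 + 𝔪^{l}: for every y ∈ 𝔪^{i} there exists x ∈ 𝔪^{l} with (1 + x)^{p^k} = 1 + y. -/
open Polynomial in
theorem aux_fix {O : Type*} [CommRing O] (I : Ideal O) [IsAdicComplete I O] (g : O[X]) (a ϖ : O)
    (hϖ : ϖ ∈ I) : ∃ t, t = a + ϖ * g.eval t := by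
  let F : O → O := fun t => a + ϖ * g.eval t
  have hF : ∀ n (x y : O), x - y ∈ I ^ n → F x - F y ∈ I ^ (n + 1) := by
    intro n x y h
    obtain ⟨c, hc⟩ := Polynomial.sub_dvd_eval_sub x y g
    have : F x - F y = (x - y) * ϖ * c := by
      simp only [F]; linear_combination ϖ * hc
    rw [this, pow_succ]
    exact Ideal.mul_mem_right _ _ (Ideal.mul_mem_mul h hϖ)
  let s : ℕ → O := fun n => F^[n] 0
  have hs : ∀ n, s (n + 1) = F (s n) := fun n => Function.iterate_succ_apply' F n 0
  have hstep : ∀ n, s (n + 1) - s n ∈ I ^ n := by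
    intro n
    induction n with
    | zero => simp
    | succ n ih => rw [hs (n+1), hs n]; exact hF _ _ _ (by rwa [← hs n])
  have hC : ∀ m n, m ≤ n → s n - s m ∈ I ^ m := by
    intro m n h
    induction n, h using Nat.le_induction with
    | base => simp
    | succ n h ih =>
      have := Ideal.add_mem _ (Ideal.pow_le_pow_right h (hstep n)) ih
      simpa using this
  obtain ⟨t, ht⟩ := IsPrecomplete.prec (I := I) (M := O) inferInstance (f := s) (by
    intro m n h
    rw [SModEq.sub_mem]
    have := neg_mem (hC m n h)
    simpa using this)
  have ht' : ∀ n, s n - t ∈ I ^ n := fun n => by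
    have := ht n
    rw [SModEq.sub_mem] at this
    simpa using this
  refine ⟨t, ?_⟩
  rw [← sub_eq_zero]
  apply IsHausdorff.haus (I := I) (M := O) inferInstance
  intro n
  rw [SModEq.sub_mem]
  have h1 := Ideal.pow_le_pow_right (Nat.le_succ n) (hF n _ _ (ht' n))
  have h2 := Ideal.pow_le_pow_right (Nat.le_succ n) (ht' (n + 1))
  rw [hs] at h2
  have := sub_mem h1 h2
  rw [smul_eq_mul, Ideal.mul_top]
  convert this using 1
  simp only [F]; ring

open Polynomial in
theorem aux_binom (p : ℕ) (hp : p.Prime) :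
    ∃ h : ℤ[X], (1 + X) ^ p = 1 + (p : ℤ[X]) * X + (p : ℤ[X]) * X ^ 2 * h + X ^ p := by
  obtain ⟨Q, hQ⟩ : ∃ Q : ℤ[X], (1 + X) ^ p = 1 ^ p + X ^ p + (p : ℤ[X]) * 1 * X * Q :=
    ⟨_, add_pow_prime_eq hp 1 X⟩
  have hc := congrArg (fun f => (derivative f).eval 0) hQ
  have hp1 : p - 1 ≠ 0 := by have := hp.two_le; omega
  have hp0 : (p : ℤ) ≠ 0 := by exact_mod_cast hp.ne_zero
  simp [derivative_pow, zero_pow hp1] at hc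
  have hQ0 : Q.eval 0 = 1 := by
    apply mul_left_cancel₀ hp0
    grind
  have : X ∣ Q - 1 := by
    rw [X_dvd_iff, coeff_zero_eq_eval_zero]; simp [hQ0]
  obtain ⟨h, hh⟩ := this
  refine ⟨h, ?_⟩
  rw [hQ]
  linear_combination (p : ℤ[X]) * X * hh

open Polynomial in
theorem aux_step (O : Type*) [CommRing O] [IsDomain O]
    [IsDiscreteValuationRing O]
    [IsAdicComplete (IsLocalRing.maximalIdeal O) O]
    (p : ℕ) (hp : p.Prime)
    (e : ℕ) (hpe : (p : O) ∈ IsLocalRing.maximalIdeal O ^ e)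
    (hpe' : (p : O) ∉ IsLocalRing.maximalIdeal O ^ (e + 1))
    (l : ℕ) (hl : 1 ≤ l) (hle : e < (p - 1) * l) :
    ∀ y ∈ IsLocalRing.maximalIdeal O ^ (e + l),
      ∃ x ∈ IsLocalRing.maximalIdeal O ^ l, (1 + x) ^ p = 1 + y := by
  intro y hy
  obtain ⟨ϖ, hϖ⟩ := IsDiscreteValuationRing.exists_irreducible O
  have hm := hϖ.maximalIdeal_eq
  have hmem : ϖ ∈ IsLocalRing.maximalIdeal O := by
    rw [hm]; exact Ideal.mem_span_singleton_self _
  have hpow : ∀ n (x : O), x ∈ IsLocalRing.maximalIdeal O ^ n ↔ ϖ ^ n ∣ x := by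
    intro n x
    rw [hm, Ideal.span_singleton_pow, Ideal.mem_span_singleton]
  rw [hpow] at hpe hpe' hy
  obtain ⟨u, hu⟩ := hpe
  obtain ⟨s, hs⟩ := hy
  have huu : IsUnit u := by
    by_contra hn
    have : u ∈ IsLocalRing.maximalIdeal O := (IsLocalRing.mem_maximalIdeal u).2 hn
    rw [hm, Ideal.mem_span_singleton] at this
    apply hpe'
    rw [hu, pow_succ]
    exact mul_dvd_mul_left _ this
  obtain ⟨w, hw⟩ := huu.exists_right_inv
  obtain ⟨h, hh⟩ := aux_binom p hp
  obtain ⟨j, rfl⟩ : ∃ j, l = j + 1 := ⟨l - 1, by omega⟩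
  obtain ⟨d, hd⟩ : ∃ d, (j + 1) * p = e + (j + 1) + 1 + d := by
    obtain ⟨q, rfl⟩ : ∃ q, p = q + 1 := ⟨p - 1, by have := hp.pos; omega⟩
    simp only [Nat.add_sub_cancel] at hle
    obtain ⟨d, hd⟩ := Nat.exists_eq_add_of_lt hle
    exact ⟨d, by linarith⟩
  obtain ⟨t, ht⟩ := aux_fix (IsLocalRing.maximalIdeal O)
    (-(C (ϖ ^ j) * X ^ 2 * (h.map (Int.castRingHom O)).comp (C (ϖ ^ (j + 1)) * X)
      + C (w * ϖ ^ d) * X ^ p)) (w * s) ϖ hmem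
  refine ⟨ϖ ^ (j + 1) * t, (hpow _ _).2 (dvd_mul_right _ _), ?_⟩
  have key := congrArg (fun f => (f.map (Int.castRingHom O)).eval (ϖ ^ (j + 1) * t)) hh
  simp only [Polynomial.map_add, Polynomial.map_mul, Polynomial.map_pow, Polynomial.map_one,
    Polynomial.map_X, Polynomial.map_natCast, eval_add, eval_mul, eval_pow, eval_one, eval_X,
    eval_natCast] at key
  simp only [eval_neg, eval_add, eval_mul, eval_pow, eval_C, eval_X, eval_comp] at ht
  rw [key, hs, mul_pow (ϖ ^ (j + 1)) t p, ← pow_mul, hd, hu]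
  generalize (h.map (Int.castRingHom O)).eval (ϖ ^ (j + 1) * t) = H at *
  have e1 : u * t = s - ϖ * (u * ϖ ^ j * t ^ 2 * H + ϖ ^ d * t ^ p) := by
    linear_combination u * ht + (s - ϖ * ϖ ^ d * t ^ p) * hw
  linear_combination ϖ ^ (e + (j + 1)) * e1

/-- **Surjectivity of the `p^k`-th power map on principal units:** let `O` be a complete
discrete valuation ring of characteristic `0` with maximal ideal `𝔪`, residue
characteristic `p`, and absolute ramification index `e = v(p)` (expressed by
`p ∈ 𝔪^e`, `p ∉ 𝔪^{e+1}`).  If `l ≥ 1` and `l > e/(p-1)`, then with `i = e·k + l`,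
every element of `1 + 𝔪^i` is a `p^k`-th power of an element of `1 + 𝔪^l`. -/
theorem principal_units_p_pow_surjective (O : Type*) [CommRing O] [IsDomain O]
    [IsDiscreteValuationRing O] [CharZero O]
    [IsAdicComplete (IsLocalRing.maximalIdeal O) O]
    (p : ℕ) (hp : p.Prime) (hresp : CharP (O ⧸ IsLocalRing.maximalIdeal O) p)
    (e : ℕ) (hpe : (p : O) ∈ IsLocalRing.maximalIdeal O ^ e)
    (hpe' : (p : O) ∉ IsLocalRing.maximalIdeal O ^ (e + 1))
    (k l : ℕ) (hl : 1 ≤ l) (hle : e < (p - 1) * l) :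
    ∀ y ∈ IsLocalRing.maximalIdeal O ^ (e * k + l),
      ∃ x ∈ IsLocalRing.maximalIdeal O ^ l, (1 + x) ^ p ^ k = 1 + y := by
  have hstep := aux_step O p hp e hpe hpe'
  induction k with
  | zero => intro y hy; exact ⟨y, by simpa using hy, by simp⟩
  | succ k ih =>
    intro y hy
    obtain ⟨z, hz, hzy⟩ := hstep (e * k + l) (by omega)
      (lt_of_lt_of_le hle (Nat.mul_le_mul_left _ (Nat.le_add_left _ _))) y
      (by convert hy using 2; ring)
    obtain ⟨x, hx, hxz⟩ := ih z hz
    exact ⟨x, hx, by rw [pow_succ, pow_mul, hxz, hzy]⟩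
end
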